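/- arXiv:2310.15462 — 2 statements merged into one kernel-verified Lean document; each statement's English description precedes it below -/
import Mathlib

section
/- Assume the Example setup (so Assumption 2.1 holds with a_n = n/μ(E_n) and P_n = μ(· ∩ E_n)/μ(E_n)), let h = (h^{(k)})_{k≥0} ∈ H, and suppose there exists n_0 ≥ 1 such that h^{(k)} vanishes outside E_{n_0}^k for every k ≥ 1. Define γ_n(k_1,k_2) := 𝔼[I_{k_1}^{(n)}(h^{(k_1)}) · I_{k_2}^{(n)}(h^{(k_2)})]. Then there exists a constant C > 0 such that for every integer K ≥ 2 and every n ≥ K, sup_{1 ≤ k_1 < k_2 ≤ K} |γ_n(k_1,k_2)| ≤ C^K · K^{2K} · (a_n/n)^{1/2}. -/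
open MeasureTheory ProbabilityTheory Filter Topology
open scoped ENNReal NNReal

/-- The positive (`true`) and negative (`false`) parts of the signed measure `√a · W_n`. -/
noncomputable def mixMeasure {E : Type*} [MeasurableSpace E] (P : Measure E) (n : ℕ)
    (X : Fin n → E) : Bool → Measure E
  | true => ∑ j : Fin n, Measure.dirac (X j)
  | false => (n : ℝ≥0) • P

/-- The multiple empirical integral `I_k^{(n)}(f)` for one realization `X` of the sample:
the integral of `f` over the off-diagonal set with respect to the `k`-fold product of the
signed measure `W_n = a^{-1/2} (Σ_j δ_{X_j} − n P)`, expanded multilinearly into its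
positive and negative parts. -/
noncomputable def empInt {E : Type*} [MeasurableSpace E] (P : Measure E)
    (n : ℕ) (a : ℝ) (X : Fin n → E) (k : ℕ) (f : (Fin k → E) → ℝ) : ℝ :=
  (Real.sqrt a)⁻¹ ^ k *
    ∑ ε : Fin k → Bool,
      (-1 : ℝ) ^ (Finset.univ.filter fun i => ε i = false).card *
        ∫ u in {u : Fin k → E | Function.Injective u}, f u
          ∂(Measure.pi fun i => mixMeasure P n X (ε i))

/-- The symmetrization `f̃` of a function of `k` variables. -/
noncomputable def symmetrize {E : Type*} (k : ℕ) (f : (Fin k → E) → ℝ) :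
    (Fin k → E) → ℝ :=
  fun u => (k.factorial : ℝ)⁻¹ * ∑ σ : Equiv.Perm (Fin k), f (u ∘ σ)


section GammaHelpers

variable {E : Type*} [MeasurableSpace E]

lemma gm_measurableSet_inj (hdiag : MeasurableSet {p : E × E | p.1 = p.2}) (k : ℕ) :
    MeasurableSet {u : Fin k → E | Function.Injective u} := by
  have : {u : Fin k → E | Function.Injective u} =
      ⋂ i : Fin k, ⋂ j : Fin k, ⋂ (_ : i ≠ j), {u : Fin k → E | u i = u j}ᶜ := by
    ext u
    simp only [Set.mem_ofPred_eq, Set.mem_iInter, Set.mem_compl_iff, Function.Injective]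
    constructor
    · intro h i j hij he
      exact hij (h he)
    · intro h i j he
      by_contra hij
      exact h i j hij he
  rw [this]
  refine MeasurableSet.iInter fun i => MeasurableSet.iInter fun j => MeasurableSet.iInter fun _ => ?_
  have hm : Measurable (fun u : Fin k → E => (u i, u j)) := by fun_prop
  exact (hm hdiag).compl

lemma gm_mp_comp {ι κ : Type*} [Fintype ι] [Fintype κ] (P : Measure E) [IsProbabilityMeasure P]
    (τ : ι → κ) (hτ : Function.Injective τ) :
    MeasurePreserving (fun w : κ → E => w ∘ τ) (Measure.pi fun _ => P) (Measure.pi fun _ => P) := by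
  refine ⟨by fun_prop, ?_⟩
  have h1 : iIndepFun (fun (i : κ) (w : κ → E) => w i) (Measure.pi fun _ : κ => P) :=
    iIndepFun_pi (X := fun _ => id) (fun _ => aemeasurable_id)
  have h2 := h1.precomp hτ
  rw [iIndepFun_iff_map_fun_eq_pi_map (fun i => (measurable_pi_apply (τ i)).aemeasurable)] at h2
  have h3 : ∀ i : κ, Measure.map (fun w : κ → E => w i) (Measure.pi fun _ : κ => P) = P :=
    fun i => (measurePreserving_eval (fun _ : κ => P) i).map_eq
  simp only [h3] at h2
  exact h2

lemma gm_mp_sum {ι κ : Type*} [Fintype ι] [Fintype κ] (P : Measure E) [IsProbabilityMeasure P] :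
    MeasurePreserving (fun p : (ι → E) × (κ → E) => (Sum.elim p.1 p.2 : ι ⊕ κ → E))
      ((Measure.pi fun _ => P).prod (Measure.pi fun _ => P)) (Measure.pi fun _ => P) := by
  have := measurePreserving_sumPiEquivProdPi_symm (fun _ : ι ⊕ κ => P)
  convert this using 1
  ext p i
  cases i <;> rfl

/-- Index map: sampled coordinate when `ε` is true, auxiliary coordinate otherwise. -/
def gmTau {ι : Type*} {n : ℕ} (φ : ι → Fin n) (ε : ι → Bool) (i : ι) : Fin n ⊕ ι :=
  if ε i = true then Sum.inl (φ i) else Sum.inr i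

lemma gm_pi_mix (P : Measure E) [IsProbabilityMeasure P] (n : ℕ) (x : Fin n → E) (k : ℕ)
    (ε : Fin k → Bool) :
    Measure.pi (fun i => mixMeasure P n x (ε i)) =
      ∑ φ : Fin k → Fin n, (Measure.pi fun _ : Fin k => P).map
        (fun z => (Sum.elim x z : Fin n ⊕ Fin k → E) ∘ gmTau φ ε) := by
  let ρ : Bool → E → Measure E := fun b y => if b = true then Measure.dirac y else P
  have hmix : ∀ b, mixMeasure P n x b = ∑ j : Fin n, ρ b (x j) := by
    intro b
    cases b
    · simp only [mixMeasure, ρ]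
      ext s hs
      simp
    · simp [mixMeasure, ρ]
  have hprob : ∀ b y, IsProbabilityMeasure (ρ b y) := by
    intro b y
    cases b <;> simp only [ρ] <;> simp <;> infer_instance
  have hmap : ∀ φ : Fin k → Fin n, (Measure.pi fun _ : Fin k => P).map
        (fun z => (Sum.elim x z : Fin n ⊕ Fin k → E) ∘ gmTau φ ε) =
        Measure.pi (fun i => ρ (ε i) (x (φ i))) := by
    intro φ
    let g : Fin k → E → E := fun i y => if ε i = true then x (φ i) else y
    have hg : ∀ i, Measurable (g i) := by
      intro i
      by_cases h : ε i = true <;> simp [g, h] <;> fun_prop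
    have hgm : ∀ i, P.map (g i) = ρ (ε i) (x (φ i)) := by
      intro i
      by_cases h : ε i = true
      · simp [g, h, ρ]
      · simp only [g, h, ρ]
        simp
    have hpm : ∀ i, IsProbabilityMeasure (P.map (g i)) := fun i => by rw [hgm]; exact hprob _ _
    have := Measure.pi_map_pi (μ := fun _ : Fin k => P) (f := g) (fun i => (hg i).aemeasurable)
    simp only [hgm] at this
    rw [← this]
    congr 1
    ext z i
    by_cases h : ε i = true <;> simp [g, h, gmTau]
  simp only [hmap, hmix]
  have : ∀ b y, IsFiniteMeasure (ρ b y) := fun b y => by have := hprob b y; infer_instance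
  refine Measure.pi_eq fun s hs => ?_
  simp only [Measure.coe_finsetSum, Finset.sum_apply, Measure.pi_pi]
  rw [Finset.prod_univ_sum]
  simp

lemma gm_measurable_tau {n k : ℕ} (x : Fin n → E) (φ : Fin k → Fin n) (ε : Fin k → Bool) :
    Measurable (fun z : Fin k → E => (Sum.elim x z : Fin n ⊕ Fin k → E) ∘ gmTau φ ε) := by
  refine measurable_pi_lambda _ fun i => ?_
  by_cases h : ε i = true <;> simp [gmTau, h] <;> fun_prop

lemma gm_mp_tau {n k : ℕ} (P : Measure E) [IsProbabilityMeasure P]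
    (φ : Fin k → Fin n) (ε : Fin k → Bool) (hτ : Function.Injective (gmTau φ ε)) :
    MeasurePreserving (fun p : (Fin n → E) × (Fin k → E) =>
      (Sum.elim p.1 p.2 : Fin n ⊕ Fin k → E) ∘ gmTau φ ε)
      ((Measure.pi fun _ => P).prod (Measure.pi fun _ => P)) (Measure.pi fun _ => P) :=
  (gm_mp_comp P _ hτ).comp (gm_mp_sum P)

lemma gm_comp_not_inj {ι κ : Type*} {τ : ι → κ} (hτ : ¬ Function.Injective τ) (w : κ → E) :
    ¬ Function.Injective (w ∘ τ) := fun h => hτ h.of_comp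

/-- almost everywhere statements transfer to the mixed measures, off the diagonal. -/
lemma gm_ae_mix (hdiag : MeasurableSet {p : E × E | p.1 = p.2})
    (P : Measure E) [IsProbabilityMeasure P] (n k : ℕ) {p : (Fin k → E) → Prop}
    (hp : ∀ᵐ u ∂(Measure.pi fun _ : Fin k => P), p u) :
    ∀ᵐ x ∂(Measure.pi fun _ : Fin n => P), ∀ ε : Fin k → Bool,
      ∀ᵐ u ∂(Measure.pi fun i => mixMeasure P n x (ε i)), Function.Injective u → p u := by
  obtain ⟨N, hpN, hNm, hN⟩ := exists_measurable_superset_of_null hp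
  have hI := gm_measurableSet_inj hdiag k
  have key : ∀ ε : Fin k → Bool, ∀ φ : Fin k → Fin n,
      ∀ᵐ x ∂(Measure.pi fun _ : Fin n => P), ∀ᵐ z ∂(Measure.pi fun _ : Fin k => P),
        (Sum.elim x z : Fin n ⊕ Fin k → E) ∘ gmTau φ ε ∉
          N ∩ {u : Fin k → E | Function.Injective u} := by
    intro ε φ
    by_cases hτ : Function.Injective (gmTau φ ε)
    · refine Measure.ae_ae_of_ae_prod (p := fun q : (Fin n → E) × (Fin k → E) =>
        (Sum.elim q.1 q.2 : Fin n ⊕ Fin k → E) ∘ gmTau φ ε ∉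
          N ∩ {u : Fin k → E | Function.Injective u}) ?_
      have h1 : ∀ᵐ u ∂(Measure.pi fun _ : Fin k => P),
          u ∉ N ∩ {u : Fin k → E | Function.Injective u} := by
        have : ∀ᵐ u ∂(Measure.pi fun _ : Fin k => P), u ∉ N := measure_eq_zero_iff_ae_notMem.1 hN
        filter_upwards [this] with u hu h using hu h.1
      exact (gm_mp_tau P φ ε hτ).quasiMeasurePreserving.ae h1
    · refine Eventually.of_forall fun x => Eventually.of_forall fun z h => ?_
      exact gm_comp_not_inj hτ _ h.2
  have key2 := ae_all_iff.2 fun ε => ae_all_iff.2 (key ε)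
  filter_upwards [key2] with x hx ε
  have : ∀ᵐ u ∂(Measure.pi fun i => mixMeasure P n x (ε i)),
      u ∉ N ∩ {u : Fin k → E | Function.Injective u} := by
    rw [← measure_eq_zero_iff_ae_notMem, gm_pi_mix]
    simp only [Measure.coe_finsetSum, Finset.sum_apply]
    refine Finset.sum_eq_zero fun φ _ => ?_
    rw [Measure.map_apply (gm_measurable_tau x φ ε) (hNm.inter hI)]
    exact measure_eq_zero_iff_ae_notMem.2 (hx ε φ)
  filter_upwards [this] with u hu hui
  by_contra hc
  exact hu ⟨hpN hc, hui⟩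

lemma gm_empInt_congr (hdiag : MeasurableSet {p : E × E | p.1 = p.2})
    (P : Measure E) [IsProbabilityMeasure P] (n k : ℕ) (a : ℝ) {f g : (Fin k → E) → ℝ}
    (hp : f =ᵐ[Measure.pi fun _ : Fin k => P] g) :
    ∀ᵐ x ∂(Measure.pi fun _ : Fin n => P), empInt P n a x k f = empInt P n a x k g := by
  filter_upwards [gm_ae_mix hdiag P n k hp] with x hx
  unfold empInt
  congr 1
  refine Finset.sum_congr rfl fun ε _ => ?_
  congr 1
  exact setIntegral_congr_ae (gm_measurableSet_inj hdiag k) (hx ε)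

/-- The kernel restricted to the off-diagonal set. -/
noncomputable def gmOff {k : ℕ} (f : (Fin k → E) → ℝ) : (Fin k → E) → ℝ :=
  Set.indicator {u : Fin k → E | Function.Injective u} f

lemma gm_off_zero {k : ℕ} {κ : Type*} (f : (Fin k → E) → ℝ) {τ : Fin k → κ}
    (hτ : ¬ Function.Injective τ) (w : κ → E) : gmOff f (w ∘ τ) = 0 :=
  Set.indicator_of_notMem (gm_comp_not_inj hτ w) _

lemma gm_off_measurable (hdiag : MeasurableSet {p : E × E | p.1 = p.2}) {k : ℕ}
    {f : (Fin k → E) → ℝ} (hf : Measurable f) : Measurable (gmOff f) :=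
  hf.indicator (gm_measurableSet_inj hdiag k)

lemma gm_integrable (hdiag : MeasurableSet {p : E × E | p.1 = p.2})
    (P : Measure E) [IsProbabilityMeasure P] (n k : ℕ) {f : (Fin k → E) → ℝ}
    (hintg : Integrable f (Measure.pi fun _ : Fin k => P)) :
    ∀ᵐ x ∂(Measure.pi fun _ : Fin n => P), ∀ ε : Fin k → Bool, ∀ φ : Fin k → Fin n,
      Integrable (fun z => gmOff f ((Sum.elim x z : Fin n ⊕ Fin k → E) ∘ gmTau φ ε))
        (Measure.pi fun _ : Fin k => P) := by
  refine ae_all_iff.2 fun ε => ae_all_iff.2 fun φ => ?_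
  by_cases hτ : Function.Injective (gmTau φ ε)
  · have h1 : Integrable (gmOff f) (Measure.pi fun _ : Fin k => P) :=
      hintg.indicator (gm_measurableSet_inj hdiag k)
    have h2 := (gm_mp_tau P φ ε hτ).integrable_comp_of_integrable h1
    exact h2.prod_right_ae
  · refine Eventually.of_forall fun x => ?_
    simp only [gm_off_zero f hτ]
    exact integrable_zero _ _ _

lemma gm_integrableOn (hdiag : MeasurableSet {p : E × E | p.1 = p.2})
    (P : Measure E) [IsProbabilityMeasure P] (n k : ℕ) {f : (Fin k → E) → ℝ} (hf : Measurable f)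
    (hintg : Integrable f (Measure.pi fun _ : Fin k => P)) :
    ∀ᵐ x ∂(Measure.pi fun _ : Fin n => P), ∀ ε : Fin k → Bool,
      IntegrableOn f {u : Fin k → E | Function.Injective u}
        (Measure.pi fun i => mixMeasure P n x (ε i)) := by
  filter_upwards [gm_integrable hdiag P n k hintg] with x hx ε
  rw [← integrable_indicator_iff (gm_measurableSet_inj hdiag k), gm_pi_mix]
  rw [integrable_finsetSum_measure]
  intro φ _
  change Integrable (gmOff f) _
  rw [integrable_map_measure (gm_off_measurable hdiag hf).aestronglyMeasurable
    (gm_measurable_tau x φ ε).aemeasurable]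
  exact hx ε φ

/-- sign -/
noncomputable def gmSgn {ι : Type*} [Fintype ι] (ε : ι → Bool) : ℝ :=
  (-1 : ℝ) ^ (Finset.univ.filter fun i => ε i = false).card

lemma gm_formula (hdiag : MeasurableSet {p : E × E | p.1 = p.2})
    (P : Measure E) [IsProbabilityMeasure P] (n k : ℕ) (a : ℝ) {f : (Fin k → E) → ℝ}
    (hf : Measurable f) (hintg : Integrable f (Measure.pi fun _ : Fin k => P)) :
    ∀ᵐ x ∂(Measure.pi fun _ : Fin n => P), empInt P n a x k f =
      (Real.sqrt a)⁻¹ ^ k * ∑ ε : Fin k → Bool, ∑ φ : Fin k → Fin n, gmSgn ε *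
        ∫ z, gmOff f ((Sum.elim x z : Fin n ⊕ Fin k → E) ∘ gmTau φ ε)
          ∂(Measure.pi fun _ : Fin k => P) := by
  filter_upwards [gm_integrable hdiag P n k hintg] with x hx
  unfold empInt
  congr 1
  refine Finset.sum_congr rfl fun ε _ => ?_
  rw [← Finset.mul_sum]
  unfold gmSgn
  congr 1
  rw [← integral_indicator (gm_measurableSet_inj hdiag k), gm_pi_mix,
    integral_finsetSum_measure]
  · refine Finset.sum_congr rfl fun φ _ => ?_
    change ∫ y, gmOff f y ∂_ = _
    rw [integral_map (gm_measurable_tau x φ ε).aemeasurable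
      (gm_off_measurable hdiag hf).aestronglyMeasurable]
  · intro φ _
    change Integrable (gmOff f) _
    rw [integrable_map_measure (gm_off_measurable hdiag hf).aestronglyMeasurable
      (gm_measurable_tau x φ ε).aemeasurable]
    exact hx ε φ

lemma gm_perm_mp {k : ℕ} (ν : Fin k → Measure E) [∀ i, SigmaFinite (ν i)]
    (σ : Equiv.Perm (Fin k)) :
    MeasurePreserving (MeasurableEquiv.piCongrLeft (fun _ : Fin k => E) σ.symm)
      (Measure.pi ν) (Measure.pi (ν ∘ σ)) := by
  have : ∀ i, SigmaFinite ((ν ∘ σ) i) := fun i => by simp only [Function.comp]; infer_instance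
  have h := measurePreserving_piCongrLeft (α := fun _ : Fin k => E) (ν ∘ σ) σ.symm
  simpa using h

lemma gm_perm_apply {k : ℕ} (σ : Equiv.Perm (Fin k)) (u : Fin k → E) :
    MeasurableEquiv.piCongrLeft (fun _ : Fin k => E) σ.symm u = u ∘ σ := by
  ext i
  have := Equiv.piCongrLeft_apply_apply (P := fun _ : Fin k => E) (e := σ.symm) u (σ i)
  rw [Equiv.symm_apply_apply] at this
  exact this

instance gm_mix_finite (P : Measure E) [IsProbabilityMeasure P] (n : ℕ) (x : Fin n → E) (b : Bool) :
    IsFiniteMeasure (mixMeasure P n x b) := by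
  cases b <;> simp only [mixMeasure] <;> infer_instance

lemma gm_empInt_perm (P : Measure E) [IsProbabilityMeasure P] (n k : ℕ) (a : ℝ) (x : Fin n → E)
    (f : (Fin k → E) → ℝ) (σ : Equiv.Perm (Fin k)) :
    empInt P n a x k (fun u => f (u ∘ σ)) = empInt P n a x k f := by
  unfold empInt
  congr 1
  refine Fintype.sum_equiv (Equiv.arrowCongr σ.symm (Equiv.refl _)) _ _ fun ε => ?_
  have hε : (Equiv.arrowCongr σ.symm (Equiv.refl Bool)) ε = ε ∘ σ := by
    ext i; simp [Equiv.arrowCongr]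
  rw [hε]
  congr 1
  · congr 1
    refine Finset.card_equiv σ.symm fun i => ?_
    simp
  · have h := (gm_perm_mp (fun i => mixMeasure P n x (ε i)) σ).setIntegral_preimage_emb
      (MeasurableEquiv.measurableEmbedding _) f {u : Fin k → E | Function.Injective u}
    simp only [gm_perm_apply] at h
    have hs : (MeasurableEquiv.piCongrLeft (fun _ : Fin k => E) σ.symm) ⁻¹'
        {u : Fin k → E | Function.Injective u} = {u : Fin k → E | Function.Injective u} := by
      ext u
      simp only [Set.mem_preimage, Set.mem_ofPred_eq, gm_perm_apply]
      exact Function.Injective.of_comp_iff' u σ.bijective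
    rw [hs] at h
    exact h

lemma gm_empInt_symm (hdiag : MeasurableSet {p : E × E | p.1 = p.2})
    (P : Measure E) [IsProbabilityMeasure P] (n k : ℕ) (a : ℝ) {f : (Fin k → E) → ℝ}
    (hf : Measurable f) (hintg : Integrable f (Measure.pi fun _ : Fin k => P)) :
    ∀ᵐ x ∂(Measure.pi fun _ : Fin n => P),
      empInt P n a x k (symmetrize k f) = empInt P n a x k f := by
  have h1 : ∀ σ : Equiv.Perm (Fin k), ∀ᵐ x ∂(Measure.pi fun _ : Fin n => P), ∀ ε : Fin k → Bool,
      IntegrableOn (fun u => f (u ∘ σ)) {u : Fin k → E | Function.Injective u}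
        (Measure.pi fun i => mixMeasure P n x (ε i)) := fun σ =>
    gm_integrableOn hdiag P n k (hf.comp (by fun_prop))
      ((gm_mp_comp P σ σ.injective).integrable_comp_of_integrable hintg)
  filter_upwards [ae_all_iff.2 h1] with x hx
  have h2 : empInt P n a x k (symmetrize k f) =
      (k.factorial : ℝ)⁻¹ * ∑ σ : Equiv.Perm (Fin k), empInt P n a x k (fun u => f (u ∘ σ)) := by
    unfold empInt symmetrize
    rw [← Finset.mul_sum, Finset.sum_comm, mul_left_comm]
    congr 1
    rw [Finset.mul_sum]
    refine Finset.sum_congr rfl fun ε _ => ?_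
    rw [← Finset.mul_sum, mul_left_comm]
    congr 1
    rw [integral_const_mul, integral_finsetSum]
    intro σ _
    exact hx σ ε
  rw [h2]
  simp only [gm_empInt_perm, Finset.sum_const, nsmul_eq_mul, Finset.card_univ, Fintype.card_perm,
    Fintype.card_fin]
  rw [← mul_assoc, inv_mul_cancel₀ (by positivity), one_mul]

lemma gm_mp_pair {k : ℕ} {κ : Type*} [Fintype κ] (P : Measure E) [IsProbabilityMeasure P]
    (τ : Fin k → κ) (hτ : Function.Injective τ) (c : κ) (hc : c ∉ Set.range τ) :
    MeasurePreserving (fun w : κ → E => (w ∘ τ, w c)) (Measure.pi fun _ => P)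
      ((Measure.pi fun _ => P).prod P) := by
  have hinj : Function.Injective (Sum.elim τ (fun _ : Unit => c)) := by
    refine hτ.sumElim (fun _ _ _ => rfl) ?_
    intro i _ h
    exact hc ⟨i, h⟩
  have h1 := gm_mp_comp P _ hinj
  have h2 := measurePreserving_sumPiEquivProdPi (fun _ : Fin k ⊕ Unit => P)
  have h3 := (MeasurePreserving.id (Measure.pi fun _ : Fin k => P)).prod
    (measurePreserving_eval (fun _ : Unit => P) ())
  exact h3.comp (h2.comp h1)

lemma gm_count {ι : Type*} [Fintype ι] [DecidableEq ι] [Nonempty ι] (n K : ℕ)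
    (hn : 1 ≤ n) (hK : Fintype.card ι ≤ 2 * K) (hK1 : 1 ≤ K) :
    ((Finset.univ.filter fun φ : ι → Fin n => ∀ i, ∃ i', i' ≠ i ∧ φ i' = φ i).card : ℝ) ≤
      Real.sqrt n ^ (Fintype.card ι) * (K : ℝ) ^ (2 * K) := by
  set N := Fintype.card ι with hN
  set s := N / 2 with hs
  have : NeZero n := ⟨by omega⟩
  have hsub : (Finset.univ.filter fun φ : ι → Fin n => ∀ i, ∃ i', i' ≠ i ∧ φ i' = φ i) ⊆
      (Finset.univ : Finset ((Fin s → Fin n) × (ι → Fin s))).image (fun q => q.1 ∘ q.2) := by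
    intro φ hφ
    rw [Finset.mem_filter] at hφ
    have hφ := hφ.2
    have h2 : 2 * (Finset.univ.image φ).card ≤ (Finset.univ : Finset ι).card := by
      refine Finset.mul_card_image_le_card Finset.univ 2 ?_
      intro b hb
      obtain ⟨i, -, rfl⟩ := Finset.mem_image.1 hb
      obtain ⟨i', hne, he⟩ := hφ i
      have : ({i, i'} : Finset ι) ⊆ Finset.univ.filter (fun x => φ x = φ i) := by
        intro y hy
        simp only [Finset.mem_insert, Finset.mem_singleton] at hy
        rcases hy with rfl | rfl <;> simp [he]
      calc 2 = ({i, i'} : Finset ι).card := (Finset.card_pair hne.symm).symm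
        _ ≤ _ := Finset.card_le_card this
    rw [Finset.card_univ, ← hN] at h2
    have h3 : (Finset.univ.image φ).card ≤ s := by omega
    obtain ⟨e⟩ : Nonempty ((Finset.univ.image φ) ↪ Fin s) :=
      Function.Embedding.nonempty_of_card_le (by rw [Fintype.card_coe, Fintype.card_fin]; exact h3)
    rw [Finset.mem_image]
    refine ⟨(Function.extend e Subtype.val (fun _ => 0),
      fun i => e ⟨φ i, Finset.mem_image_of_mem _ (Finset.mem_univ _)⟩), Finset.mem_univ _, ?_⟩
    ext i
    simp [Function.comp, e.injective.extend_apply]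
  have h1 := (Finset.card_le_card hsub).trans Finset.card_image_le
  rw [Finset.card_univ, Fintype.card_prod, Fintype.card_fun, Fintype.card_fun, Fintype.card_fin,
    Fintype.card_fin, ← hN] at h1
  have hsn : (1 : ℝ) ≤ Real.sqrt n := by
    rw [Real.one_le_sqrt]; exact_mod_cast hn
  have hsK : s ≤ K := by omega
  calc ((Finset.univ.filter fun φ : ι → Fin n => ∀ i, ∃ i', i' ≠ i ∧ φ i' = φ i).card : ℝ)
      ≤ ((n ^ s * s ^ N : ℕ) : ℝ) := by exact_mod_cast h1
    _ = Real.sqrt n ^ (2 * s) * (s : ℝ) ^ N := by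
        push_cast
        rw [pow_mul, Real.sq_sqrt (by positivity)]
    _ ≤ Real.sqrt n ^ N * (K : ℝ) ^ (2 * K) := by
        gcongr
        · omega
        · calc (s : ℝ) ^ N ≤ (K : ℝ) ^ N := by gcongr
            _ ≤ (K : ℝ) ^ (2 * K) := by
              gcongr
              exact_mod_cast hK1

lemma gm_sgn_eq {ι : Type*} [Fintype ι] (ε : ι → Bool) :
    gmSgn ε = ∏ i, if ε i = false then (-1 : ℝ) else 1 := by
  simp [gmSgn, Finset.prod_ite]

lemma gm_sgn_abs {ι : Type*} [Fintype ι] (ε : ι → Bool) : |gmSgn ε| = 1 := by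
  simp [gmSgn, abs_pow]

lemma gm_sgn_sum {ι κ : Type*} [Fintype ι] [Fintype κ] (ε : ι → Bool) (ε' : κ → Bool) :
    gmSgn (Sum.elim ε ε') = gmSgn ε * gmSgn ε' := by
  simp only [gm_sgn_eq, Fintype.prod_sum_type, Sum.elim_inl, Sum.elim_inr]
  rfl

lemma gm_sgn_flip {ι : Type*} [Fintype ι] [DecidableEq ι] (ε : ι → Bool) (i : ι) :
    gmSgn (Function.update ε i (!ε i)) = - gmSgn ε := by
  simp only [gm_sgn_eq]
  rw [← Finset.mul_prod_erase _ _ (Finset.mem_univ i),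
    ← Finset.mul_prod_erase (a := i) _ (fun j => if ε j = false then (-1 : ℝ) else 1)
      (Finset.mem_univ i), ← neg_mul]
  congr 1
  · cases h : ε i <;> simp
  · refine Finset.prod_congr rfl fun j hj => ?_
    rw [Function.update_of_ne (Finset.ne_of_mem_erase hj)]

/-- mixed expectation of one pair of terms -/
noncomputable def gmT (P : Measure E) {n k1 k2 : ℕ} (F : (Fin k1 → E) → ℝ) (G : (Fin k2 → E) → ℝ)
    (φ : Fin k1 ⊕ Fin k2 → Fin n) (ε : Fin k1 ⊕ Fin k2 → Bool) : ℝ :=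
  ∫ w : Fin n ⊕ (Fin k1 ⊕ Fin k2) → E,
    gmOff F (w ∘ (gmTau φ ε ∘ Sum.inl)) * gmOff G (w ∘ (gmTau φ ε ∘ Sum.inr))
      ∂(Measure.pi fun _ => P)

lemma gm_vanish (hdiag : MeasurableSet {p : E × E | p.1 = p.2})
    (P : Measure E) [IsProbabilityMeasure P] {n k1 k2 : ℕ} {F : (Fin k1 → E) → ℝ}
    {G : (Fin k2 → E) → ℝ} (hF : Measurable F) (hG : Measurable G)
    (φ : Fin k1 ⊕ Fin k2 → Fin n) (i : Fin k1 ⊕ Fin k2) (hi : ∀ i', i' ≠ i → φ i' ≠ φ i) :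
    ∑ ε : Fin k1 ⊕ Fin k2 → Bool, gmSgn ε * gmT P F G φ ε = 0 := by
  have hT : ∀ ε : Fin k1 ⊕ Fin k2 → Bool,
      gmT P F G φ (Function.update ε i (!ε i)) = gmT P F G φ ε := by
    intro ε
    have hτ : gmTau φ (Function.update ε i (!ε i)) =
        Equiv.swap (Sum.inl (φ i)) (Sum.inr i) ∘ gmTau φ ε := by
      funext i'
      by_cases h : i' = i
      · subst h
        cases h : ε i' <;> simp [gmTau, h]
      · have h1 := hi i' h
        by_cases he : ε i' = true
        · simp only [gmTau, Function.update_of_ne h, he, if_true, Function.comp]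
          rw [Equiv.swap_apply_of_ne_of_ne]
          · simpa using h1
          · simp
        · simp only [gmTau, Function.update_of_ne h, he, Function.comp]
          simp only [Bool.false_eq_true, if_false]
          rw [Equiv.swap_apply_of_ne_of_ne]
          · simp
          · simpa using h
    have hmp := gm_mp_comp P (Equiv.swap (Sum.inl (φ i)) (Sum.inr i : Fin n ⊕ (Fin k1 ⊕ Fin k2)))
      (Equiv.injective _)
    unfold gmT
    rw [hτ]
    conv_rhs => rw [← hmp.map_eq]
    rw [integral_map hmp.measurable.aemeasurable]
    · rfl
    · refine Measurable.aestronglyMeasurable ?_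
      exact ((gm_off_measurable hdiag hF).comp (by fun_prop)).mul
        ((gm_off_measurable hdiag hG).comp (by fun_prop))
  refine Finset.sum_involution (fun ε _ => Function.update ε i (!ε i)) ?_ ?_ ?_ ?_
  · intro ε _
    rw [hT, gm_sgn_flip]; ring
  · intro ε _ _ h
    have := congrFun h i
    simp at this
  · intro ε _; exact Finset.mem_univ _
  · intro ε _; simp

lemma gm_eLpNorm_off {k : ℕ} (ν : Measure (Fin k → E)) (f : (Fin k → E) → ℝ) :
    eLpNorm (gmOff f) 2 ν ≤ eLpNorm f 2 ν := eLpNorm_indicator_le f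

lemma gm_T_bound (hdiag : MeasurableSet {p : E × E | p.1 = p.2})
    (P : Measure E) [IsProbabilityMeasure P] {n k1 k2 : ℕ} (hk : k1 < k2)
    {F : (Fin k1 → E) → ℝ}
    {G : (Fin k2 → E) → ℝ} (hF : Measurable F) (hG : Measurable G)
    {E0 : Set E} (hE0 : MeasurableSet E0) (hGs : ∀ u, (∃ i, u i ∉ E0) → G u = 0)
    {cF cG p : ℝ} (hcF : 0 ≤ cF) (hcG : 0 ≤ cG) (hp : 0 ≤ p)
    (hFn : eLpNorm F 2 (Measure.pi fun _ : Fin k1 => P) ≤ ENNReal.ofReal cF)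
    (hGn : eLpNorm G 2 (Measure.pi fun _ : Fin k2 => P) ≤ ENNReal.ofReal cG)
    (hPp : P E0 ≤ ENNReal.ofReal p)
    (φ : Fin k1 ⊕ Fin k2 → Fin n) (ε : Fin k1 ⊕ Fin k2 → Bool) :
    |gmT P F G φ ε| ≤ cF * cG * Real.sqrt p := by
  have hpos : 0 ≤ cF * cG * Real.sqrt p := by positivity
  set τ1 := gmTau φ ε ∘ Sum.inl with hτ1
  set τ2 := gmTau φ ε ∘ Sum.inr with hτ2
  by_cases h1 : Function.Injective τ1
  swap
  · have : gmT P F G φ ε = 0 := by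
      unfold gmT
      have h1' : ¬ Function.Injective (gmTau φ ε ∘ Sum.inl) := h1
      simp only [gm_off_zero F h1', zero_mul, integral_zero]
    rw [this]; simpa using hpos
  by_cases h2 : Function.Injective τ2
  swap
  · have : gmT P F G φ ε = 0 := by
      unfold gmT
      have h2' : ¬ Function.Injective (gmTau φ ε ∘ Sum.inr) := h2
      simp only [gm_off_zero G h2', mul_zero, integral_zero]
    rw [this]; simpa using hpos
  obtain ⟨i0, hi0⟩ : ∃ i0, τ2 i0 ∉ Set.range τ1 := by
    by_contra! hc
    choose g hg using hc
    have hgi : Function.Injective g := by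
      intro a b hab
      apply h2
      rw [← hg a, ← hg b, hab]
    have := Fintype.card_le_of_injective g hgi
    simp at this
    omega
  have hFm := gm_off_measurable hdiag hF
  have hGm := gm_off_measurable hdiag hG
  have hmp1 := gm_mp_pair P τ1 h1 (τ2 i0) hi0
  have hmp2 := gm_mp_comp P τ2 h2
  let A : (Fin n ⊕ (Fin k1 ⊕ Fin k2) → E) → ℝ≥0∞ := fun w =>
    ‖gmOff F (w ∘ τ1)‖ₑ * E0.indicator (fun _ => 1) (w (τ2 i0))
  let B : (Fin n ⊕ (Fin k1 ⊕ Fin k2) → E) → ℝ≥0∞ := fun w => ‖gmOff G (w ∘ τ2)‖ₑ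
  have hA : Measurable A :=
    (hFm.comp (by fun_prop)).enorm.mul ((measurable_const.indicator hE0).comp (by fun_prop))
  have hB : Measurable B := (hGm.comp (by fun_prop)).enorm
  have hAB : ∀ w, ‖gmOff F (w ∘ τ1) * gmOff G (w ∘ τ2)‖ₑ = (A * B) w := by
    intro w
    simp only [Pi.mul_apply, A, B, enorm_mul]
    by_cases hw : w (τ2 i0) ∈ E0
    · simp [hw]
    · have : gmOff G (w ∘ τ2) = 0 := by
        have : G (w ∘ τ2) = 0 := hGs _ ⟨i0, hw⟩
        simp [gmOff, Set.indicator_apply, this]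
      simp [this]
  have hIA : (∫⁻ w, A w ^ (2 : ℝ) ∂(Measure.pi fun _ => P)) ^ (1 / (2 : ℝ)) ≤
      ENNReal.ofReal (cF * Real.sqrt p) := by
    have e1 : ∫⁻ w, A w ^ (2 : ℝ) ∂(Measure.pi fun _ => P) =
        (∫⁻ u, ‖gmOff F u‖ₑ ^ (2 : ℝ) ∂(Measure.pi fun _ => P)) * P E0 := by
      have e2 : ∀ w, A w ^ (2 : ℝ) = (fun q : (Fin k1 → E) × E =>
          ‖gmOff F q.1‖ₑ ^ (2 : ℝ) * E0.indicator (fun _ => 1) q.2) (w ∘ τ1, w (τ2 i0)) := by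
        intro w
        simp only [A]
        rw [ENNReal.mul_rpow_of_nonneg _ _ (by norm_num)]
        by_cases hw : w (τ2 i0) ∈ E0 <;> simp [hw]
      simp only [e2]
      rw [hmp1.lintegral_comp (f := fun q : (Fin k1 → E) × E =>
          ‖gmOff F q.1‖ₑ ^ (2 : ℝ) * E0.indicator (fun _ => 1) q.2)]
      · rw [lintegral_prod_mul (hFm.enorm.pow_const _).aemeasurable
          (measurable_const.indicator hE0).aemeasurable, lintegral_indicator_const hE0, one_mul]
      · exact ((hFm.comp measurable_fst).enorm.pow_const _).mul
          ((measurable_const.indicator hE0).comp measurable_snd)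
    rw [e1, ENNReal.mul_rpow_of_nonneg _ _ (by norm_num), ENNReal.ofReal_mul hcF]
    refine mul_le_mul' ?_ ?_
    · have := (gm_eLpNorm_off _ F).trans hFn
      rw [eLpNorm_eq_lintegral_rpow_enorm_toReal (by norm_num) (by norm_num)] at this
      simpa using this
    · rw [Real.sqrt_eq_rpow, ← ENNReal.ofReal_rpow_of_nonneg hp (by norm_num)]
      gcongr
  have hIB : (∫⁻ w, B w ^ (2 : ℝ) ∂(Measure.pi fun _ => P)) ^ (1 / (2 : ℝ)) ≤
      ENNReal.ofReal cG := by
    have e1 : ∫⁻ w, B w ^ (2 : ℝ) ∂(Measure.pi fun _ => P) =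
        ∫⁻ u, ‖gmOff G u‖ₑ ^ (2 : ℝ) ∂(Measure.pi fun _ => P) :=
      hmp2.lintegral_comp (f := fun u => ‖gmOff G u‖ₑ ^ (2 : ℝ)) (hGm.enorm.pow_const _)
    rw [e1]
    have := (gm_eLpNorm_off _ G).trans hGn
    rw [eLpNorm_eq_lintegral_rpow_enorm_toReal (by norm_num) (by norm_num)] at this
    simpa using this
  have hfin : ‖gmT P F G φ ε‖ₑ ≤ ENNReal.ofReal (cF * cG * Real.sqrt p) := by
    calc ‖gmT P F G φ ε‖ₑ ≤ ∫⁻ w, (A * B) w ∂(Measure.pi fun _ => P) := by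
          unfold gmT
          refine (enorm_integral_le_lintegral_enorm _).trans (le_of_eq ?_)
          exact lintegral_congr hAB
      _ ≤ _ := ENNReal.lintegral_mul_le_Lp_mul_Lq _ Real.HolderConjugate.two_two
          hA.aemeasurable hB.aemeasurable
      _ ≤ ENNReal.ofReal (cF * Real.sqrt p) * ENNReal.ofReal cG := mul_le_mul' hIA hIB
      _ = _ := by
          rw [← ENNReal.ofReal_mul (by positivity)]
          congr 1; ring
  rw [← ofReal_norm, ENNReal.ofReal_le_ofReal_iff hpos] at hfin
  exact hfin

/-- inner integral -/
noncomputable def gmA (P : Measure E) {n k : ℕ} (F : (Fin k → E) → ℝ)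
    (φ : Fin k → Fin n) (ε : Fin k → Bool) (x : Fin n → E) : ℝ :=
  ∫ z, gmOff F ((Sum.elim x z : Fin n ⊕ Fin k → E) ∘ gmTau φ ε) ∂(Measure.pi fun _ : Fin k => P)

lemma gm_A_sm (hdiag : MeasurableSet {p : E × E | p.1 = p.2})
    (P : Measure E) [IsProbabilityMeasure P] {n k : ℕ} {F : (Fin k → E) → ℝ} (hF : Measurable F)
    (φ : Fin k → Fin n) (ε : Fin k → Bool) : StronglyMeasurable (gmA P F φ ε) := by
  unfold gmA
  have hm : Measurable (fun q : (Fin n → E) × (Fin k → E) =>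
      gmOff F ((Sum.elim q.1 q.2 : Fin n ⊕ Fin k → E) ∘ gmTau φ ε)) := by
    refine (gm_off_measurable hdiag hF).comp (measurable_pi_lambda _ fun i => ?_)
    by_cases h : ε i = true <;> simp [gmTau, h] <;> fun_prop
  exact hm.stronglyMeasurable.integral_prod_right

lemma gm_term (hdiag : MeasurableSet {p : E × E | p.1 = p.2})
    (P : Measure E) [IsProbabilityMeasure P] {n k1 k2 : ℕ}
    {F : (Fin k1 → E) → ℝ} {G : (Fin k2 → E) → ℝ} (hF : Measurable F) (hG : Measurable G)
    (hFn : MemLp F 2 (Measure.pi fun _ : Fin k1 => P))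
    (hGn : MemLp G 2 (Measure.pi fun _ : Fin k2 => P))
    (φ1 : Fin k1 → Fin n) (ε1 : Fin k1 → Bool) (φ2 : Fin k2 → Fin n) (ε2 : Fin k2 → Bool) :
    Integrable (fun x => gmA P F φ1 ε1 x * gmA P G φ2 ε2 x) (Measure.pi fun _ : Fin n => P) ∧
    ∫ x, gmA P F φ1 ε1 x * gmA P G φ2 ε2 x ∂(Measure.pi fun _ : Fin n => P) =
      gmT P F G (Sum.elim φ1 φ2) (Sum.elim ε1 ε2) := by
  set φ := Sum.elim φ1 φ2 with hφ
  set ε := Sum.elim ε1 ε2 with hε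
  have hFm := gm_off_measurable hdiag hF
  have hGm := gm_off_measurable hdiag hG
  let H : (Fin n ⊕ (Fin k1 ⊕ Fin k2) → E) → ℝ := fun w =>
    gmOff F (w ∘ (gmTau φ ε ∘ Sum.inl)) * gmOff G (w ∘ (gmTau φ ε ∘ Sum.inr))
  have hHm : Measurable H := (hFm.comp (by fun_prop)).mul (hGm.comp (by fun_prop))
  have hHi : Integrable H (Measure.pi fun _ => P) := by
    by_cases h1 : Function.Injective (gmTau φ ε ∘ Sum.inl)
    swap
    · have : H = fun _ => 0 := by
        funext w; simp only [H, gm_off_zero F h1, zero_mul]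
      rw [this]; exact integrable_zero _ _ _
    by_cases h2 : Function.Injective (gmTau φ ε ∘ Sum.inr)
    swap
    · have : H = fun _ => 0 := by
        funext w; simp only [H, gm_off_zero G h2, mul_zero]
      rw [this]; exact integrable_zero _ _ _
    have m1 : MemLp (gmOff F) 2 (Measure.pi fun _ : Fin k1 => P) :=
      hFn.indicator (gm_measurableSet_inj hdiag k1)
    have m2 : MemLp (gmOff G) 2 (Measure.pi fun _ : Fin k2 => P) :=
      hGn.indicator (gm_measurableSet_inj hdiag k2)
    exact (m1.comp_measurePreserving (gm_mp_comp P _ h1)).integrable_mul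
      (m2.comp_measurePreserving (gm_mp_comp P _ h2))
  have hΦ : MeasurePreserving (fun q : (Fin n → E) × ((Fin k1 → E) × (Fin k2 → E)) =>
      (Sum.elim q.1 (Sum.elim q.2.1 q.2.2) : Fin n ⊕ (Fin k1 ⊕ Fin k2) → E))
      ((Measure.pi fun _ => P).prod ((Measure.pi fun _ => P).prod (Measure.pi fun _ => P)))
      (Measure.pi fun _ => P) :=
    (gm_mp_sum P).comp ((MeasurePreserving.id (Measure.pi fun _ : Fin n => P)).prod (gm_mp_sum P))
  have hHΦ : ∀ x z1 z2, H (Sum.elim x (Sum.elim z1 z2)) =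
      gmOff F ((Sum.elim x z1 : Fin n ⊕ Fin k1 → E) ∘ gmTau φ1 ε1) *
      gmOff G ((Sum.elim x z2 : Fin n ⊕ Fin k2 → E) ∘ gmTau φ2 ε2) := by
    intro x z1 z2
    simp only [H]
    congr 2
    · funext i
      by_cases h : ε1 i = true <;> simp [gmTau, h, hφ, hε]
    · funext i
      by_cases h : ε2 i = true <;> simp [gmTau, h, hφ, hε]
  have hci := hΦ.integrable_comp_of_integrable hHi
  have hinner : ∀ x, ∫ z : (Fin k1 → E) × (Fin k2 → E), H (Sum.elim x (Sum.elim z.1 z.2))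
      ∂((Measure.pi fun _ => P).prod (Measure.pi fun _ => P)) =
      gmA P F φ1 ε1 x * gmA P G φ2 ε2 x := by
    intro x
    simp only [hHΦ]
    exact integral_prod_mul
      (fun z1 => gmOff F ((Sum.elim x z1 : Fin n ⊕ Fin k1 → E) ∘ gmTau φ1 ε1))
      (fun z2 => gmOff G ((Sum.elim x z2 : Fin n ⊕ Fin k2 → E) ∘ gmTau φ2 ε2))
  constructor
  · have := hci.integral_prod_left
    simp only [Function.comp, hinner] at this
    exact this
  · have e1 : gmT P F G φ ε = ∫ w, H w ∂(Measure.pi fun _ => P) := rfl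
    rw [e1, ← hΦ.map_eq, integral_map hΦ.measurable.aemeasurable hHm.aestronglyMeasurable]
    have := integral_prod _ hci
    simp only [Function.comp, hinner] at this
    exact this.symm

/-- the normalised statistic -/
noncomputable def gmS (P : Measure E) {n k : ℕ} (F : (Fin k → E) → ℝ) (x : Fin n → E) : ℝ :=
  ∑ ε : Fin k → Bool, ∑ φ : Fin k → Fin n, gmSgn ε * gmA P F φ ε x

lemma gm_S_sm (hdiag : MeasurableSet {p : E × E | p.1 = p.2})
    (P : Measure E) [IsProbabilityMeasure P] {n k : ℕ} {F : (Fin k → E) → ℝ} (hF : Measurable F) :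
    StronglyMeasurable (gmS P F : (Fin n → E) → ℝ) := by
  unfold gmS
  refine Finset.stronglyMeasurable_fun_sum _ fun ε _ => ?_
  refine Finset.stronglyMeasurable_fun_sum _ fun φ _ => ?_
  exact (gm_A_sm hdiag P hF φ ε).const_mul _

lemma gm_expand (hdiag : MeasurableSet {p : E × E | p.1 = p.2})
    (P : Measure E) [IsProbabilityMeasure P] {n k1 k2 : ℕ}
    {F : (Fin k1 → E) → ℝ} {G : (Fin k2 → E) → ℝ} (hF : Measurable F) (hG : Measurable G)
    (hFn : MemLp F 2 (Measure.pi fun _ : Fin k1 => P))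
    (hGn : MemLp G 2 (Measure.pi fun _ : Fin k2 => P)) :
    ∫ x, gmS P F x * gmS P G x ∂(Measure.pi fun _ : Fin n => P) =
      ∑ φ : Fin k1 ⊕ Fin k2 → Fin n, ∑ ε : Fin k1 ⊕ Fin k2 → Bool,
        gmSgn ε * gmT P F G φ ε := by
  have ht := gm_term hdiag P hF hG hFn hGn (n := n)
  have e1 : ∀ x : Fin n → E, gmS P F x * gmS P G x =
      ∑ s : ((Fin k1 → Fin n) × (Fin k2 → Fin n)) × ((Fin k1 → Bool) × (Fin k2 → Bool)),
        (gmSgn s.2.1 * gmSgn s.2.2) * (gmA P F s.1.1 s.2.1 x * gmA P G s.1.2 s.2.2 x) := by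
    intro x
    unfold gmS
    rw [Finset.sum_comm, Finset.sum_comm (γ := Fin k2 → Bool)]
    rw [← Fintype.sum_prod_type' (f := fun (φ : Fin k1 → Fin n) ε => gmSgn ε * gmA P F φ ε x),
      ← Fintype.sum_prod_type' (f := fun (φ : Fin k2 → Fin n) ε => gmSgn ε * gmA P G φ ε x),
      Finset.sum_mul_sum, ← Fintype.sum_prod_type' (f := fun
        (a : (Fin k1 → Fin n) × (Fin k1 → Bool)) (b : (Fin k2 → Fin n) × (Fin k2 → Bool)) =>
        gmSgn a.2 * gmA P F a.1 a.2 x * (gmSgn b.2 * gmA P G b.1 b.2 x))]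
    refine Fintype.sum_equiv (Equiv.prodProdProdComm _ _ _ _) _ _ fun s => ?_
    simp only [Equiv.prodProdProdComm_apply]
    ring
  simp only [e1]
  rw [integral_finsetSum]
  swap
  · intro s _
    exact (ht s.1.1 s.2.1 s.1.2 s.2.2).1.const_mul _
  rw [← Fintype.sum_prod_type' (f := fun (φ : Fin k1 ⊕ Fin k2 → Fin n)
    (ε : Fin k1 ⊕ Fin k2 → Bool) => gmSgn ε * gmT P F G φ ε)]
  symm
  refine Fintype.sum_equiv ((Equiv.sumArrowEquivProdArrow _ _ _).prodCongr
    (Equiv.sumArrowEquivProdArrow _ _ _)) _ _ fun s => ?_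
  obtain ⟨φ, ε⟩ := s
  rw [integral_const_mul, (ht _ _ _ _).2, ← gm_sgn_sum]
  simp [Equiv.sumArrowEquivProdArrow, Sum.elim_comp_inl_inr]

lemma gm_total (hdiag : MeasurableSet {p : E × E | p.1 = p.2})
    (P : Measure E) [IsProbabilityMeasure P] {n k1 k2 K : ℕ} (hk : k1 < k2) (hkK : k2 ≤ K)
    (hn : 1 ≤ n)
    {F : (Fin k1 → E) → ℝ} {G : (Fin k2 → E) → ℝ} (hF : Measurable F) (hG : Measurable G)
    {E0 : Set E} (hE0 : MeasurableSet E0) (hGs : ∀ u, (∃ i, u i ∉ E0) → G u = 0)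
    {cF cG p : ℝ} (hcF : 0 ≤ cF) (hcG : 0 ≤ cG) (hp : 0 ≤ p)
    (hFn : eLpNorm F 2 (Measure.pi fun _ : Fin k1 => P) ≤ ENNReal.ofReal cF)
    (hGn : eLpNorm G 2 (Measure.pi fun _ : Fin k2 => P) ≤ ENNReal.ofReal cG)
    (hPp : P E0 ≤ ENNReal.ofReal p) :
    |∫ x, gmS P F x * gmS P G x ∂(Measure.pi fun _ : Fin n => P)| ≤
      Real.sqrt n ^ (k1 + k2) * (K : ℝ) ^ (2 * K) *
        (2 ^ (k1 + k2) * (cF * cG * Real.sqrt p)) := by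
  rw [gm_expand hdiag P hF hG
    ⟨hF.aestronglyMeasurable, hFn.trans_lt ENNReal.ofReal_lt_top⟩
    ⟨hG.aestronglyMeasurable, hGn.trans_lt ENNReal.ofReal_lt_top⟩]
  set good := (Finset.univ.filter fun φ : Fin k1 ⊕ Fin k2 → Fin n =>
    ∀ i, ∃ i', i' ≠ i ∧ φ i' = φ i) with hgood
  have h0 : ∀ φ ∈ (Finset.univ : Finset (Fin k1 ⊕ Fin k2 → Fin n)), φ ∉ good →
      ∑ ε : Fin k1 ⊕ Fin k2 → Bool, gmSgn ε * gmT P F G φ ε = 0 := by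
    intro φ _ hφ
    simp only [hgood, Finset.mem_filter, Finset.mem_univ, true_and, not_forall, not_exists,
      not_and] at hφ
    obtain ⟨i, hi⟩ := hφ
    exact gm_vanish hdiag P hF hG φ i hi
  rw [← Finset.sum_subset (Finset.subset_univ good) h0]
  have hb : ∀ φ ∈ good, |∑ ε : Fin k1 ⊕ Fin k2 → Bool, gmSgn ε * gmT P F G φ ε| ≤
      2 ^ (k1 + k2) * (cF * cG * Real.sqrt p) := by
    intro φ _
    refine (Finset.abs_sum_le_sum_abs _ _).trans ?_
    refine (Finset.sum_le_card_nsmul _ _ (cF * cG * Real.sqrt p) ?_).trans (le_of_eq ?_)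
    · intro ε _
      rw [abs_mul, gm_sgn_abs, one_mul]
      exact gm_T_bound hdiag P hk hF hG hE0 hGs hcF hcG hp hFn hGn hPp φ ε
    · simp [Finset.card_univ, Fintype.card_fun]
  refine (Finset.abs_sum_le_sum_abs _ _).trans ((Finset.sum_le_card_nsmul _ _ _ hb).trans ?_)
  rw [nsmul_eq_mul]
  have : Nonempty (Fin k1 ⊕ Fin k2) := ⟨Sum.inr ⟨0, by omega⟩⟩
  have hc := gm_count (ι := Fin k1 ⊕ Fin k2) n K hn (by simp; omega) (by omega)
  rw [Fintype.card_sum, Fintype.card_fin, Fintype.card_fin] at hc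
  gcongr

/-- pass from the original kernels to nice kernels with the same symmetrization -/
lemma gm_reduce {Ω : Type*} [MeasurableSpace Ω] (hdiag : MeasurableSet {p : E × E | p.1 = p.2})
    (P : Measure E) [IsProbabilityMeasure P] (Pr : Measure Ω) {n k1 k2 : ℕ} (a : ℝ)
    (Y : Fin n → Ω → E) (hYm : ∀ j, Measurable (Y j))
    (hY : Measure.map (fun ω j => Y j ω) Pr = Measure.pi fun _ => P)
    {f f' : (Fin k1 → E) → ℝ} {g g' : (Fin k2 → E) → ℝ}
    (hf' : Measurable f') (hg' : Measurable g')
    (hff : f =ᵐ[Measure.pi fun _ => P] f') (hgg : g =ᵐ[Measure.pi fun _ => P] g')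
    (hfi : Integrable f' (Measure.pi fun _ => P)) (hgi : Integrable g' (Measure.pi fun _ => P)) :
    ∫ ω, empInt P n a (fun j => Y j ω) k1 f * empInt P n a (fun j => Y j ω) k2 g ∂Pr =
      (Real.sqrt a)⁻¹ ^ (k1 + k2) *
        ∫ x, gmS P (symmetrize k1 f') x * gmS P (symmetrize k2 g') x
          ∂(Measure.pi fun _ : Fin n => P) := by
  have hsm : ∀ {k : ℕ} {q : (Fin k → E) → ℝ}, Measurable q → Measurable (symmetrize k q) := by
    intro k q hq
    unfold symmetrize
    refine Measurable.const_mul (Finset.measurable_fun_sum _ fun σ _ => ?_) _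
    exact hq.comp (by fun_prop)
  have hsi : ∀ {k : ℕ} {q : (Fin k → E) → ℝ}, Integrable q (Measure.pi fun _ => P) →
      Integrable (symmetrize k q) (Measure.pi fun _ => P) := by
    intro k q hq
    unfold symmetrize
    refine Integrable.const_mul (integrable_finsetSum _ fun σ _ => ?_) _
    exact (gm_mp_comp P σ σ.injective).integrable_comp_of_integrable hq
  have hone : ∀ {k : ℕ} {q q' : (Fin k → E) → ℝ}, Measurable q' →
      q =ᵐ[Measure.pi fun _ => P] q' → Integrable q' (Measure.pi fun _ => P) →
      ∀ᵐ x ∂(Measure.pi fun _ : Fin n => P), empInt P n a x k q =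
        (Real.sqrt a)⁻¹ ^ k * gmS P (symmetrize k q') x := by
    intro k q q' hm he hi
    filter_upwards [gm_empInt_congr hdiag P n k a he, gm_empInt_symm hdiag P n k a hm hi,
      gm_formula hdiag P n k a (hsm hm) (hsi hi)] with x h1 h2 h3
    rw [h1, ← h2, h3]
    rfl
  have hYm' : Measurable (fun ω j => Y j ω) := measurable_pi_lambda _ hYm
  have hae : ∀ᵐ x ∂(Measure.map (fun ω j => Y j ω) Pr),
      empInt P n a x k1 f * empInt P n a x k2 g =
      (Real.sqrt a)⁻¹ ^ (k1 + k2) * (gmS P (symmetrize k1 f') x * gmS P (symmetrize k2 g') x) := by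
    rw [hY]
    filter_upwards [hone hf' hff hfi, hone hg' hgg hgi] with x h1 h2
    rw [h1, h2, pow_add]; ring
  have hae2 : (fun ω => empInt P n a (fun j => Y j ω) k1 f * empInt P n a (fun j => Y j ω) k2 g)
      =ᵐ[Pr] fun ω => (Real.sqrt a)⁻¹ ^ (k1 + k2) *
        (gmS P (symmetrize k1 f') (fun j => Y j ω) * gmS P (symmetrize k2 g') (fun j => Y j ω)) :=
    ae_of_ae_map hYm'.aemeasurable hae
  rw [integral_congr_ae hae2, ← integral_const_mul, ← hY, integral_map hYm'.aemeasurable]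
  exact (((gm_S_sm hdiag P (hsm hf')).mul (gm_S_sm hdiag P (hsm hg'))).const_mul
    _).aestronglyMeasurable

lemma gm_pi_P_eq (μ : Measure E) [SigmaFinite μ] (P : Measure E)
    {A : Set E} (hpos : 0 < μ A) (hfin : μ A < ∞)
    (hP : ∀ B : Set E, MeasurableSet B → P B = μ (B ∩ A) / μ A) (k : ℕ) :
    (Measure.pi fun _ : Fin k => P) =
      ((μ A)⁻¹ ^ k) • (Measure.pi fun _ : Fin k => μ).restrict (Set.univ.pi fun _ => A) := by
  have hPe : P = (μ A)⁻¹ • μ.restrict A := by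
    ext B hB
    rw [hP B hB, Measure.smul_apply, Measure.restrict_apply hB, smul_eq_mul, mul_comm,
      div_eq_mul_inv]
  have : IsFiniteMeasure (μ.restrict A) := ⟨by simpa using hfin⟩
  have hPfin : IsFiniteMeasure P := by
    rw [hPe]
    exact Measure.smul_finite _ (ENNReal.inv_ne_top.2 hpos.ne')
  rw [Measure.restrict_pi_pi]
  refine Measure.pi_eq fun s hs => ?_
  rw [Measure.smul_apply, Measure.pi_pi, hPe]
  simp [Measure.smul_apply, Finset.prod_mul_distrib]

/-- a nice version of each kernel -/
lemma gm_nice (μ : Measure E) [SigmaFinite μ] {E0 : Set E} (hE0 : MeasurableSet E0) (k : ℕ)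
    (f : (Fin k → E) → ℝ) (hf : MemLp f 2 (Measure.pi fun _ : Fin k => μ))
    (hs : ∀ u : Fin k → E, (∃ i, u i ∉ E0) → f u = 0) {B : ℝ}
    (hB : (eLpNorm (symmetrize k f) 2 (Measure.pi fun _ : Fin k => μ)).toReal ≤ B) :
    ∃ f' : (Fin k → E) → ℝ, Measurable f' ∧ f =ᵐ[Measure.pi fun _ : Fin k => μ] f' ∧
      (∀ u, (∃ i, u i ∉ E0) → symmetrize k f' u = 0) ∧
      eLpNorm (symmetrize k f') 2 (Measure.pi fun _ : Fin k => μ) ≤ ENNReal.ofReal B := by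
  have hpm : MeasurableSet (Set.univ.pi fun _ : Fin k => E0) :=
    MeasurableSet.univ_pi fun _ => hE0
  obtain ⟨g, hgm, hfg⟩ := hf.1
  have hgm : Measurable g := hgm.measurable
  let f' := (Set.univ.pi fun _ : Fin k => E0).indicator g
  have hf's : ∀ u : Fin k → E, (∃ i, u i ∉ E0) → f' u = 0 := by
    rintro u ⟨i, hi⟩
    have hu' : u ∉ Set.univ.pi fun _ : Fin k => E0 := fun h => hi (Set.mem_univ_pi.1 h i)
    exact Set.indicator_of_notMem hu' _
  have hff' : f =ᵐ[Measure.pi fun _ : Fin k => μ] f' := by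
    filter_upwards [hfg] with u hu
    by_cases h : ∃ i, u i ∉ E0
    · rw [hs u h, hf's u h]
    · push Not at h
      rw [hu]
      have hu' : u ∈ Set.univ.pi fun _ : Fin k => E0 := Set.mem_univ_pi.2 h
      exact (Set.indicator_of_mem hu' g).symm
  have hmp : ∀ σ : Equiv.Perm (Fin k), MeasurePreserving (fun u : Fin k → E => u ∘ σ)
      (Measure.pi fun _ : Fin k => μ) (Measure.pi fun _ : Fin k => μ) := by
    intro σ
    have := gm_perm_mp (fun _ : Fin k => μ) σ
    have he : (MeasurableEquiv.piCongrLeft (fun _ : Fin k => E) σ.symm : (Fin k → E) → Fin k → E) =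
      fun u => u ∘ σ := funext (gm_perm_apply σ)
    rw [he] at this
    exact this
  have hsym : symmetrize k f' =ᵐ[Measure.pi fun _ : Fin k => μ] symmetrize k f := by
    have h1 : ∀ σ : Equiv.Perm (Fin k), ∀ᵐ u ∂(Measure.pi fun _ : Fin k => μ),
        f (u ∘ σ) = f' (u ∘ σ) := fun σ => (hmp σ).quasiMeasurePreserving.ae hff'
    filter_upwards [ae_all_iff.2 h1] with u hu
    simp only [symmetrize, hu]
  have hmem : MemLp (symmetrize k f) 2 (Measure.pi fun _ : Fin k => μ) := by
    have hsum : MemLp (fun u => ∑ σ : Equiv.Perm (Fin k), f (u ∘ σ)) 2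
        (Measure.pi fun _ : Fin k => μ) :=
      memLp_finsetSum _ (f := fun (σ : Equiv.Perm (Fin k)) u => f (u ∘ σ))
        (fun σ _ => hf.comp_measurePreserving (hmp σ))
    exact hsum.const_mul _
  refine ⟨f', hgm.indicator hpm, hff', ?_, ?_⟩
  · rintro u ⟨i, hi⟩
    unfold symmetrize
    rw [Finset.sum_eq_zero, mul_zero]
    intro σ _
    refine hf's _ ⟨σ.symm i, by simpa using hi⟩
  · rw [eLpNorm_congr_ae hsym]
    exact (ENNReal.le_ofReal_iff_toReal_le hmem.2.ne (ENNReal.toReal_nonneg.trans hB)).2 hB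

lemma gm_norm_P (μ : Measure E) [SigmaFinite μ] (P : Measure E)
    {A : Set E} (hpos : 0 < μ A) (hfin : μ A < ∞)
    (hP : ∀ B : Set E, MeasurableSet B → P B = μ (B ∩ A) / μ A) (k : ℕ)
    (f : (Fin k → E) → ℝ) {B : ℝ}
    (hB : eLpNorm f 2 (Measure.pi fun _ : Fin k => μ) ≤ ENNReal.ofReal B) :
    eLpNorm f 2 (Measure.pi fun _ : Fin k => P) ≤
      ENNReal.ofReal ((Real.sqrt (μ A).toReal)⁻¹ ^ k * B) := by
  have hm : 0 < (μ A).toReal := ENNReal.toReal_pos hpos.ne' hfin.ne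
  rw [gm_pi_P_eq μ P hpos hfin hP k, eLpNorm_smul_measure_of_ne_top (by norm_num),
    ENNReal.ofReal_mul (by positivity), smul_eq_mul]
  refine mul_le_mul' (le_of_eq ?_) ((eLpNorm_mono_measure _ Measure.restrict_le_self).trans hB)
  have h1 : (μ A)⁻¹ = ENNReal.ofReal ((μ A).toReal⁻¹) := by
    rw [ENNReal.ofReal_inv_of_pos hm, ENNReal.ofReal_toReal hfin.ne]
  rw [h1, ← ENNReal.ofReal_pow (by positivity), ENNReal.ofReal_rpow_of_nonneg (by positivity)
    (by norm_num), ← Real.sqrt_inv]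
  congr 1
  have : ((1 / 2 : ℝ≥0∞)).toReal = 1 / 2 := by simp
  rw [this, ← Real.sqrt_eq_rpow]
  rw [Real.sqrt_eq_iff_mul_self_eq (by positivity) (by positivity), ← mul_pow,
    Real.mul_self_sqrt (by positivity)]

end GammaHelpers

/-- In the Example setup (`P n = μ(· ∩ E n)/μ(E n)`, `a n = n/μ(E n)`),
for `h = (h^{(k)})_k ∈ H` with all `h^{(k)}` (for `k ≥ 1`) supported in `E_{n₀}^k`, the
mixed second moments `γ_n(k₁,k₂) = 𝔼[I_{k₁}^{(n)}(h^{(k₁)}) I_{k₂}^{(n)}(h^{(k₂)})]`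
satisfy `sup_{1 ≤ k₁ < k₂ ≤ K} |γ_n(k₁,k₂)| ≤ C^K K^{2K} (a_n/n)^{1/2}` for every `K ≥ 2`
and every `n ≥ K`. -/
theorem gamma_offdiag_bound
    {E Ω : Type*} [MeasurableSpace E] [MeasurableSpace Ω]
    (μ : Measure E) [SigmaFinite μ] [NullSingletonClass μ] (hμ : μ Set.univ = ∞)
    (Eset : ℕ → Set E) (hEmeas : ∀ n, MeasurableSet (Eset n))
    (hEmono : ∀ n : ℕ, 1 ≤ n → Eset n ⊆ Eset (n + 1))
    (hEpos : ∀ n : ℕ, 1 ≤ n → 0 < μ (Eset n))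
    (hEfin : ∀ n : ℕ, 1 ≤ n → μ (Eset n) < ∞)
    (hEcover : (⋃ n : ℕ, ⋃ (_ : 1 ≤ n), Eset n) = Set.univ)
    (hEsmall : Tendsto (fun n : ℕ => (μ (Eset n)).toReal / n) atTop (𝓝 0))
    (a : ℕ → ℝ) (ha : ∀ n : ℕ, 1 ≤ n → a n = (n : ℝ) / (μ (Eset n)).toReal)
    (P : ℕ → Measure E) [∀ n, IsProbabilityMeasure (P n)]
    (hP : ∀ n : ℕ, 1 ≤ n → ∀ B : Set E, MeasurableSet B →
      P n B = μ (B ∩ Eset n) / μ (Eset n))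
    (Pr : Measure Ω) [IsProbabilityMeasure Pr]
    (X : (n : ℕ) → Fin n → Ω → E)
    (hXmeas : ∀ n j, Measurable (X n j))
    (hXlaw : ∀ n : ℕ, 1 ≤ n → ∀ j, Measure.map (X n j) Pr = P n)
    (hXindep : ∀ n : ℕ, iIndepFun (m := fun _ : Fin n => ‹MeasurableSpace E›) (X n) Pr)
    (hdiag : MeasurableSet {p : E × E | p.1 = p.2})
    (h : (k : ℕ) → (Fin k → E) → ℝ)
    (hmem : ∀ k : ℕ, MemLp (h k) 2 (Measure.pi fun _ : Fin k => μ))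
    (hH : Summable (fun k : ℕ => (k.factorial : ℝ) *
      ((eLpNorm (symmetrize k (h k)) 2 (Measure.pi fun _ : Fin k => μ)).toReal) ^ 2))
    (n0 : ℕ) (hn0 : 1 ≤ n0)
    (hsupp : ∀ k : ℕ, 1 ≤ k → ∀ u : Fin k → E, (∃ i, u i ∉ Eset n0) → h k u = 0) :
    ∃ C : ℝ, 0 < C ∧ ∀ K n k1 k2 : ℕ, 2 ≤ K → K ≤ n →
      1 ≤ k1 → k1 < k2 → k2 ≤ K →
      |∫ ω, empInt (P n) n (a n) (fun j => X n j ω) k1 (h k1) *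
          empInt (P n) n (a n) (fun j => X n j ω) k2 (h k2) ∂Pr| ≤
        C ^ K * (K : ℝ) ^ (2 * K) * Real.sqrt (a n / n) := by
  classical
  set T0 := ∑' k : ℕ, (k.factorial : ℝ) *
      ((eLpNorm (symmetrize k (h k)) 2 (Measure.pi fun _ : Fin k => μ)).toReal) ^ 2 with hT0
  set B := Real.sqrt T0 with hBdef
  set M := (μ (Eset n0)).toReal with hM
  have hB0 : 0 ≤ B := Real.sqrt_nonneg _
  have hM0 : 0 ≤ M := ENNReal.toReal_nonneg
  have hBk : ∀ k, (eLpNorm (symmetrize k (h k)) 2 (Measure.pi fun _ : Fin k => μ)).toReal ≤ B := by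
    intro k
    apply Real.le_sqrt_of_sq_le
    have h1 := hH.le_tsum k (fun j _ => by positivity)
    refine le_trans ?_ h1
    have h2 : (1 : ℝ) ≤ (k.factorial : ℝ) := by exact_mod_cast Nat.succ_le_of_lt k.factorial_pos
    exact le_mul_of_one_le_left (by positivity) h2
  refine ⟨4 * (1 + B ^ 2 * Real.sqrt M), by positivity, ?_⟩
  intro K n k1 k2 hK hKn hk1 hk12 hk2
  have hn : 1 ≤ n := by omega
  set m := (μ (Eset n)).toReal with hm
  have hmpos : 0 < m := ENNReal.toReal_pos (hEpos n hn).ne' (hEfin n hn).ne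
  have hnpos : (0 : ℝ) < n := by exact_mod_cast hn
  obtain ⟨f', hf'm, hff, hf's, hf'n⟩ := gm_nice μ (hEmeas n0) k1 (h k1) (hmem k1)
    (hsupp k1 hk1) (hBk k1)
  obtain ⟨g', hg'm, hgg, hg's, hg'n⟩ := gm_nice μ (hEmeas n0) k2 (h k2) (hmem k2)
    (hsupp k2 (by omega)) (hBk k2)
  have hpe := gm_pi_P_eq μ (P n) (hEpos n hn) (hEfin n hn) (hP n hn)
  have hctop : ∀ k : ℕ, (μ (Eset n))⁻¹ ^ k ≠ ∞ := fun k =>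
    ENNReal.pow_ne_top (ENNReal.inv_ne_top.2 (hEpos n hn).ne')
  have hae : ∀ {k : ℕ} {q q' : (Fin k → E) → ℝ}, q =ᵐ[Measure.pi fun _ => μ] q' →
      q =ᵐ[Measure.pi fun _ => P n] q' := by
    intro k q q' hq
    rw [hpe k]
    exact Measure.ae_smul_measure (ae_restrict_of_ae hq) _
  have hintg : ∀ {k : ℕ} {q q' : (Fin k → E) → ℝ}, MemLp q 2 (Measure.pi fun _ => μ) →
      q =ᵐ[Measure.pi fun _ => μ] q' → Integrable q' (Measure.pi fun _ => P n) := by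
    intro k q q' hq hqq
    have h1 : MemLp q' 2 (Measure.pi fun _ => μ) := (memLp_congr_ae hqq).1 hq
    have h2 : MemLp q' 2 (Measure.pi fun _ => P n) := by
      rw [hpe k]
      exact (h1.restrict _).smul_measure (hctop k)
    exact h2.integrable (by norm_num)
  have hlaw : Measure.map (fun ω j => X n j ω) Pr = Measure.pi fun _ => P n := by
    have h1 := (iIndepFun_iff_map_fun_eq_pi_map (fun j => (hXmeas n j).aemeasurable)).1 (hXindep n)
    rw [h1]
    simp only [hXlaw n hn]
  have hsm : ∀ {k : ℕ} {q : (Fin k → E) → ℝ}, Measurable q → Measurable (symmetrize k q) := by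
    intro k q hq
    unfold symmetrize
    refine Measurable.const_mul (Finset.measurable_fun_sum _ fun σ _ => ?_) _
    exact hq.comp (by fun_prop)
  rw [gm_reduce hdiag (P n) Pr (a n) (X n) (hXmeas n) hlaw hf'm hg'm (hae hff) (hae hgg)
    (hintg (hmem k1) hff) (hintg (hmem k2) hgg)]
  have hPE : P n (Eset n0) ≤ ENNReal.ofReal (M / m) := by
    rw [hP n hn _ (hEmeas n0), ENNReal.ofReal_div_of_pos hmpos, hM, hm,
      ENNReal.ofReal_toReal (hEfin n0 hn0).ne, ENNReal.ofReal_toReal (hEfin n hn).ne]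
    gcongr
    exact Set.inter_subset_left
  have hmain := gm_total hdiag (P n) (n := n) hk12 hk2 hn (hsm hf'm) (hsm hg'm) (hEmeas n0) hg's
    (cF := (Real.sqrt m)⁻¹ ^ k1 * B) (cG := (Real.sqrt m)⁻¹ ^ k2 * B) (p := M / m)
    (by positivity) (by positivity) (by positivity)
    (gm_norm_P μ (P n) (hEpos n hn) (hEfin n hn) (hP n hn) k1 _ hf'n)
    (gm_norm_P μ (P n) (hEpos n hn) (hEfin n hn) (hP n hn) k2 _ hg'n) hPE
  have han : a n / n = 1 / m := by
    rw [ha n hn, ← hm]; field_simp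
  have hsa : (Real.sqrt (a n))⁻¹ * Real.sqrt n * (Real.sqrt m)⁻¹ = 1 := by
    rw [ha n hn, ← hm, Real.sqrt_div hnpos.le]
    have h1 : 0 < Real.sqrt n := Real.sqrt_pos.2 hnpos
    have h2 : 0 < Real.sqrt m := Real.sqrt_pos.2 hmpos
    field_simp
  rw [abs_mul, abs_of_nonneg (by positivity : 0 ≤ (Real.sqrt (a n))⁻¹ ^ (k1 + k2))]
  refine (mul_le_mul_of_nonneg_left hmain (by positivity)).trans ?_
  have e1 : (Real.sqrt (a n))⁻¹ ^ (k1 + k2) * (Real.sqrt n ^ (k1 + k2) * (K : ℝ) ^ (2 * K) *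
        (2 ^ (k1 + k2) * ((Real.sqrt m)⁻¹ ^ k1 * B * ((Real.sqrt m)⁻¹ ^ k2 * B) *
          Real.sqrt (M / m)))) =
      ((Real.sqrt (a n))⁻¹ * Real.sqrt n * (Real.sqrt m)⁻¹) ^ (k1 + k2) * (K : ℝ) ^ (2 * K) *
        (2 ^ (k1 + k2) * (B ^ 2 * Real.sqrt (M / m))) := by
    rw [mul_pow, mul_pow, pow_add (Real.sqrt m)⁻¹]; ring
  have e2 : Real.sqrt (M / m) = Real.sqrt M * Real.sqrt (a n / n) := by
    rw [han, ← Real.sqrt_mul hM0, mul_one_div]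
  rw [e1, hsa, one_pow, one_mul, e2]
  have h2p : (2 : ℝ) ^ (k1 + k2) ≤ 4 ^ K := by
    calc (2 : ℝ) ^ (k1 + k2) ≤ 2 ^ (2 * K) := by
          gcongr
          · norm_num
          · omega
      _ = 4 ^ K := by rw [pow_mul]; norm_num
  have hBM : B ^ 2 * Real.sqrt M ≤ (1 + B ^ 2 * Real.sqrt M) ^ K := by
    have h0 : 0 ≤ B ^ 2 * Real.sqrt M := by positivity
    calc B ^ 2 * Real.sqrt M ≤ 1 + B ^ 2 * Real.sqrt M := by linarith
      _ ≤ _ := le_self_pow₀ (by linarith) (by omega)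
  calc (K : ℝ) ^ (2 * K) * (2 ^ (k1 + k2) * (B ^ 2 * (Real.sqrt M * Real.sqrt (a n / n))))
      = (2 ^ (k1 + k2) * (B ^ 2 * Real.sqrt M)) * (K : ℝ) ^ (2 * K) * Real.sqrt (a n / n) := by
        ring
    _ ≤ (4 ^ K * (1 + B ^ 2 * Real.sqrt M) ^ K) * (K : ℝ) ^ (2 * K) * Real.sqrt (a n / n) := by
        gcongr
    _ = _ := by rw [mul_pow]
end

section
/- Assume the Example setup (so Assumption 2.1 holds with a_n = n/μ(E_n) and P_n = μ(· ∩ E_n)/μ(E_n)), let h = (h^{(k)})_{k≥0} ∈ H, and suppose there exists n_0 ≥ 1 such that h^{(k)} vanishes outside E_{n_0}^k for every k ≥ 1. Define γ_n(k,k) := 𝔼[(I_k^{(n)}(h^{(k)}))²]. Then there exists a constant C > 0 such that for every integer K ≥ 1 and every n ≥ max(n_0, K), sup_{1 ≤ k ≤ K} | γ_n(k,k) − k! ‖h̃^{(k)}‖²_{L²(μ^k)} | ≤ C^K K^{2K} (a_n/n)^{1/2} + C^K K^{(3/2)K} n^{−1/2}. -/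
open MeasureTheory ProbabilityTheory Filter Topology
open scoped ENNReal NNReal

/-- Charlier-type coefficients. -/
noncomputable def cA (c : ℝ) (m : ℕ) : ℕ → ℕ → ℝ
  | 0, q => (m.descFactorial q : ℝ)
  | e + 1, q => -c * cA c m e q + cA c m e (q + 1)

lemma cA_zero_succ (c : ℝ) (e q : ℕ) : cA c 0 e (q + 1) = 0 := by
  induction e generalizing q with
  | zero => simp [cA]
  | succ e ih => simp [cA, ih]

lemma cA_zero_zero (c : ℝ) (e : ℕ) : cA c 0 e 0 = (-c) ^ e := by
  induction e with
  | zero => simp [cA]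
  | succ e ih => simp [cA, ih, cA_zero_succ, pow_succ]; ring

lemma cA_succ_m (c : ℝ) (m e q : ℕ) :
    cA c (m + 1) e q = cA c m e q + e * cA c m (e - 1) q + q * cA c m e (q - 1) := by
  induction e generalizing q with
  | zero =>
    cases q with
    | zero => simp [cA]
    | succ q =>
      simp only [cA]
      have h1 : ((m + 1).descFactorial (q + 1) : ℝ) = (m + 1) * m.descFactorial q := by
        rw [Nat.succ_descFactorial_succ]; push_cast; ring
      have h2 : (m.descFactorial (q + 1) : ℝ) = (m - q) * m.descFactorial q := by
        rw [Nat.descFactorial_succ]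
        rcases le_or_gt q m with h | h
        · push_cast [Nat.cast_sub h]; ring
        · rw [Nat.descFactorial_eq_zero_iff_lt.2 h]; simp
      rw [h1, h2]; push_cast; simp; ring
  | succ e ih =>
    simp only [cA, ih]
    cases e with
    | zero =>
      cases q with
      | zero => simp [cA]; ring
      | succ q => simp [cA]; ring
    | succ e =>
      cases q with
      | zero => simp [cA]; ring
      | succ q => simp [cA]; ring

lemma cA_q_succ (c : ℝ) (m e q : ℕ) :
    cA c m e (q + 1) = (m - q) * cA c m e q - e * cA c m (e - 1) (q + 1) := by
  induction e generalizing q with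
  | zero =>
    simp only [cA]
    rw [Nat.descFactorial_succ]
    rcases le_or_gt q m with h | h
    · push_cast [Nat.cast_sub h]; ring
    · rw [Nat.descFactorial_eq_zero_iff_lt.2 h]; simp
  | succ e ih =>
    have h1 := ih q
    have h2 := ih (q + 1)
    cases e with
    | zero =>
      simp only [cA, Nat.cast_zero, zero_mul, sub_zero, zero_add, Nat.cast_one, one_mul,
        Nat.sub_self] at *
      push_cast at *
      linear_combination (-c) * h1 + h2
    | succ e =>
      simp [cA] at *
      linear_combination (-c) * h1 + h2

lemma cA_rec (n e q : ℕ) :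
    cA n n (e + 2) q = -(e + 1 + q) * cA n n (e + 1) q - n * (e + 1) * cA n n e q := by
  have h1 := cA_q_succ n n (e + 1) q
  have h2 : cA n n (e + 2) q = -n * cA n n (e + 1) q + cA n n (e + 1) (q + 1) := rfl
  have h3 : cA n n (e + 1) q = -n * cA n n e q + cA n n e (q + 1) := rfl
  simp at h1
  linear_combination h2 + h1 + (e + 1) * h3

lemma cA_rec_one (n q : ℕ) : cA n n 1 q = - q * cA n n 0 q := by
  have h1 := cA_q_succ n n 0 q
  have h3 : cA n n 1 q = -n * cA n n 0 q + cA n n 0 (q + 1) := rfl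
  simp at h1
  linear_combination h3 + h1

lemma cA_bound (n k q e : ℕ) (hk : 1 ≤ k) (hn : 1 ≤ n) (he : e + q ≤ 2 * k) :
    |cA n n e q| ≤ n ^ q * (4 * k) ^ e * Real.sqrt n ^ e := by
  have hkR : (1 : ℝ) ≤ k := by exact_mod_cast hk
  have hs1 : (1 : ℝ) ≤ Real.sqrt n := by
    rw [Real.one_le_sqrt]; exact_mod_cast hn
  have hs2 : Real.sqrt n ^ 2 = n := Real.sq_sqrt (by positivity)
  have h0 : |cA n n 0 q| ≤ n ^ q := by
    simp only [cA]
    rw [abs_of_nonneg (by positivity)]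
    exact_mod_cast Nat.descFactorial_le_pow n q
  set s := Real.sqrt n
  have hnq : (0 : ℝ) ≤ n ^ q := by positivity
  induction e using Nat.twoStepInduction with
  | zero => simpa using h0
  | one =>
    rw [cA_rec_one, abs_mul, abs_neg, Nat.abs_cast]
    have hq : (q : ℝ) ≤ 2 * k := by exact_mod_cast (by omega : q ≤ 2 * k)
    calc (q : ℝ) * |cA n n 0 q| ≤ (4 * k * s) * n ^ q := by
          apply mul_le_mul _ h0 (abs_nonneg _) (by positivity)
          nlinarith
      _ = _ := by ring
  | more e ih1 ih2 =>
    have i1 := ih1 (by omega)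
    have i2 := ih2 (by omega)
    rw [cA_rec]
    have heq : (e : ℝ) + 1 + q ≤ 2 * k := by exact_mod_cast (by omega : e + 1 + q ≤ 2 * k)
    have heq' : (e : ℝ) + 1  ≤ 2 * k := by exact_mod_cast (by omega : e + 1 ≤ 2 * k)
    set T := (n : ℝ) ^ q * (4 * k) ^ e * s ^ e with hT
    have hT0 : 0 ≤ T := by positivity
    have i2' : |cA n n (e + 1) q| ≤ T * (4 * k * s) := by
      refine i2.trans (le_of_eq ?_); rw [hT]; ring
    calc |(-(e + 1 + q) * cA n n (e + 1) q - n * (e + 1) * cA n n e q : ℝ)|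
        ≤ (e + 1 + q) * |cA n n (e + 1) q| + n * (e + 1) * |cA n n e q| := by
          refine (abs_sub _ _).trans (le_of_eq ?_)
          rw [abs_mul, abs_mul, abs_neg, abs_of_nonneg (by positivity : (0:ℝ) ≤ e + 1 + q),
            abs_of_nonneg (by positivity : (0:ℝ) ≤ n * (e + 1))]
      _ ≤ (2 * k) * (T * (4 * k * s)) + n * (2 * k) * T := by gcongr
      _ = T * (8 * k ^ 2 * s + 2 * k * s ^ 2) := by rw [hs2]; ring
      _ ≤ T * (16 * k ^ 2 * s ^ 2) := by
          apply mul_le_mul_of_nonneg_left _ hT0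
          have : s ≤ s ^ 2 := by nlinarith
          have h2 : (k : ℝ) ≤ k ^ 2 := by nlinarith
          have h3 : (k : ℝ) ^ 2 * s ≤ k ^ 2 * s ^ 2 := by gcongr
          have h4 : (k : ℝ) * s ^ 2 ≤ k ^ 2 * s ^ 2 := by gcongr
          have h5 : 0 ≤ (k : ℝ) ^ 2 * s ^ 2 := by positivity
          linarith
      _ = _ := by rw [hT]; ring

/-- Coefficients of the second-moment formula. -/
noncomputable def cf (c : ℝ) (m k k' q : ℕ) : ℝ :=
  q.factorial * k.choose q * k'.choose q * cA c m (k + k' - 2 * q) q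

lemma cf_zero_zero (c : ℝ) (k k' : ℕ) : cf c 0 k k' 0 = (-c) ^ (k + k') := by
  simp [cf, cA_zero_zero]

lemma cf_zero_succ (c : ℝ) (k k' q : ℕ) : cf c 0 k k' (q + 1) = 0 := by
  simp [cf, cA_zero_succ]

lemma cf_of_lt_left (c : ℝ) (m k k' q : ℕ) (h : k < q) : cf c m k k' q = 0 := by
  simp [cf, Nat.choose_eq_zero_of_lt h]

lemma cf_of_lt_right (c : ℝ) (m k k' q : ℕ) (h : k' < q) : cf c m k k' q = 0 := by
  simp [cf, Nat.choose_eq_zero_of_lt h]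

lemma cf_step_left (c : ℝ) (m k' : ℕ) :
    cf c (m + 1) 0 (k' + 1) 0 = cf c m 0 (k' + 1) 0 + (k' + 1) * cf c m 0 k' 0 := by
  simp [cf, cA_succ_m c m]

lemma cf_step_right (c : ℝ) (m k : ℕ) :
    cf c (m + 1) (k + 1) 0 0 = cf c m (k + 1) 0 0 + (k + 1) * cf c m k 0 0 := by
  simp [cf, cA_succ_m c m]

lemma cf_step_zero (c : ℝ) (m k k' : ℕ) :
    cf c (m + 1) (k + 1) (k' + 1) 0 = cf c m (k + 1) (k' + 1) 0
      + (k + 1) * cf c m k (k' + 1) 0 + (k' + 1) * cf c m (k + 1) k' 0 := by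
  simp only [cf]
  rw [cA_succ_m c m]
  have h1 : k + 1 + (k' + 1) - 2 * 0 - 1 = k + (k' + 1) - 2 * 0 := by omega
  have h2 : k + 1 + k' - 2 * 0 = k + (k' + 1) - 2 * 0 := by omega
  have h3 : ((k + 1 + (k' + 1) - 2 * 0 : ℕ) : ℝ) = k + 1 + (k' + 1) := by push_cast; simp
  rw [h1, h2, h3]
  simp
  ring

lemma cf_step_succ (c : ℝ) (m k k' q : ℕ) :
    cf c (m + 1) (k + 1) (k' + 1) (q + 1) = cf c m (k + 1) (k' + 1) (q + 1)
      + (k + 1) * cf c m k (k' + 1) (q + 1) + (k' + 1) * cf c m (k + 1) k' (q + 1)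
      + (k + 1) * (k' + 1) * cf c m k k' q := by
  rcases Nat.lt_or_ge k q with h | hk
  · rw [cf_of_lt_left, cf_of_lt_left, cf_of_lt_left, cf_of_lt_left, cf_of_lt_left] <;> first | omega | simp
  rcases Nat.lt_or_ge k' q with h | hk'
  · rw [cf_of_lt_right, cf_of_lt_right, cf_of_lt_right, cf_of_lt_right, cf_of_lt_right] <;>
      first | omega | simp
  obtain ⟨d, rfl⟩ := Nat.exists_eq_add_of_le hk
  obtain ⟨d', rfl⟩ := Nat.exists_eq_add_of_le hk'
  simp only [cf]
  rw [cA_succ_m c m]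
  have e0 : q + d + 1 + (q + d' + 1) - 2 * (q + 1) = d + d' := by omega
  have e1 : q + d + (q + d' + 1) - 2 * (q + 1) = d + d' - 1 := by omega
  have e2 : q + d + 1 + (q + d') - 2 * (q + 1) = d + d' - 1 := by omega
  have e3 : q + d + (q + d') - 2 * q = d + d' := by omega
  rw [e0, e1, e2, e3]
  have c1 (d : ℕ) : ((q + d + 1 : ℕ) : ℝ) * (q + d).choose (q + 1)
      = d * (q + d + 1).choose (q + 1) := by
    have := Nat.choose_mul_succ_eq (q + d) (q + 1)
    have e : q + d + 1 - (q + 1) = d := by omega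
    rw [e] at this
    have h2 : (((q + d).choose (q + 1) * (q + d + 1) : ℕ) : ℝ)
      = ((q + d + 1).choose (q + 1) * d : ℕ) := by exact_mod_cast this
    push_cast at *; linarith
  have c2 (d : ℕ) : ((q + d + 1 : ℕ) : ℝ) * (q + d).choose q
      = (q + 1) * (q + d + 1).choose (q + 1) := by
    have := Nat.add_one_mul_choose_eq (q + d) q
    have h2 : (((q + d + 1) * (q + d).choose q : ℕ) : ℝ)
      = ((q + d + 1).choose (q + 1) * (q + 1) : ℕ) := by exact_mod_cast this
    push_cast at *; linarith
  have a1 := c1 d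
  have a2 := c1 d'
  have b1 := c2 d
  have b2 := c2 d'
  rw [Nat.factorial_succ]
  push_cast at *
  set u := ((q + d + 1).choose (q + 1) : ℝ)
  set u' := ((q + d' + 1).choose (q + 1) : ℝ)
  set A1 := cA c m (d + d') (q + 1)
  set A2 := cA c m (d + d' - 1) (q + 1)
  set A3 := cA c m (d + d') q
  linear_combination (-((q:ℝ) + 1) * q.factorial * u' * A2) * a1 - (((q:ℝ) + 1) * q.factorial * u * A2) * a2
    - q.factorial * A3 * ((q + d' + 1) * (q + d').choose q) * b1
    - q.factorial * A3 * (q + 1) * u * b2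

/-- Freeze the first coordinate. -/
def slc {E : Type*} {k : ℕ} (y : E) (f : (Fin (k + 1) → E) → ℝ) : (Fin k → E) → ℝ :=
  fun u => f (Fin.cons y u)

/-- Integrate out the first coordinate. -/
noncomputable def avg1 {E : Type*} [MeasurableSpace E] (P : Measure E) {k : ℕ}
    (f : (Fin (k + 1) → E) → ℝ) : (Fin k → E) → ℝ :=
  fun u => ∫ y, f (Fin.cons y u) ∂P

/-- Permutation invariance. -/
def IsSym {E : Type*} {k : ℕ} (f : (Fin k → E) → ℝ) : Prop :=
  ∀ (σ : Equiv.Perm (Fin k)) (u : Fin k → E), f (u ∘ σ) = f u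

/-- Recursive form of the multiple empirical integral. -/
noncomputable def Jr {E ι : Type*} [MeasurableSpace E] [DecidableEq ι] (P : Measure E) (c : ℝ)
    (x : ι → E) : (k : ℕ) → Finset ι → ((Fin k → E) → ℝ) → ℝ
  | 0, _, f => f Fin.elim0
  | k + 1, S, f => ∑ l ∈ S, Jr P c x k (S.erase l) (slc (x l) f)
      + (-c) * Jr P c x k S (avg1 P f)

lemma cons_comp_perm {E : Type*} {k : ℕ} (σ : Equiv.Perm (Fin k)) (y : E) (u : Fin k → E) :
    (Fin.cons y (u ∘ σ) : Fin (k + 1) → E)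
      = (Fin.cons y u : Fin (k + 1) → E) ∘ Equiv.Perm.decomposeFin.symm (0, σ) := by
  funext i
  refine Fin.cases ?_ (fun i => ?_) i
  · simp
  · simp [Equiv.Perm.decomposeFin_symm_apply_succ]

lemma cons_cons_swap {E : Type*} {k : ℕ} (y z : E) (u : Fin k → E) :
    (Fin.cons y (Fin.cons z u : Fin (k + 1) → E) : Fin (k + 2) → E)
      = (Fin.cons z (Fin.cons y u : Fin (k + 1) → E) : Fin (k + 2) → E) ∘ Equiv.swap 0 1 := by
  funext i
  refine Fin.cases ?_ (fun i => ?_) i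
  · simp
  · refine Fin.cases ?_ (fun i => ?_) i
    · simp
    · have : Equiv.swap (0 : Fin (k + 2)) 1 i.succ.succ = i.succ.succ := by
        apply Equiv.swap_apply_of_ne_of_ne
        · exact Fin.succ_ne_zero _
        · intro h
          have := congrArg Fin.val h
          simp at this
      simp [this]

lemma IsSym.slc {E : Type*} {k : ℕ} {f : (Fin (k + 1) → E) → ℝ} (hf : IsSym f) (y : E) :
    IsSym (slc y f) := by
  intro σ u
  simp only [_root_.slc]
  rw [cons_comp_perm, hf]

lemma IsSym.avg1 {E : Type*} [MeasurableSpace E] (P : Measure E) {k : ℕ}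
    {f : (Fin (k + 1) → E) → ℝ} (hf : IsSym f) :
    IsSym (avg1 P f) := by
  intro σ u
  simp only [_root_.avg1]
  simp_rw [cons_comp_perm, hf _ (Fin.cons _ u)]

lemma slc_slc {E : Type*} {k : ℕ} {f : (Fin (k + 2) → E) → ℝ} (hf : IsSym f) (y z : E) :
    slc y (slc z f) = slc z (slc y f) := by
  funext u
  simp only [slc]
  rw [cons_cons_swap, hf]

lemma slc_avg1 {E : Type*} [MeasurableSpace E] (P : Measure E) {k : ℕ}
    {f : (Fin (k + 2) → E) → ℝ} (hf : IsSym f) (y : E) :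
    slc y (avg1 P f) = avg1 P (slc y f) := by
  funext u
  simp only [slc, avg1]
  congr 1
  funext z
  rw [cons_cons_swap, hf]

lemma Jr_insert {E ι : Type*} [MeasurableSpace E] [DecidableEq ι] (P : Measure E) (c : ℝ)
    (x : ι → E) (k : ℕ) (S : Finset ι) (l : ι) (hl : l ∉ S) (f : (Fin (k + 1) → E) → ℝ)
    (hf : IsSym f) :
    Jr P c x (k + 1) (insert l S) f
      = Jr P c x (k + 1) S f + (k + 1) * Jr P c x k S (slc (x l) f) := by
  induction k generalizing S with
  | zero =>
    simp only [Jr]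
    rw [Finset.sum_insert hl]
    simp
    ring
  | succ k ih =>
    rw [Jr, Finset.sum_insert hl, Finset.erase_insert hl]
    have h1 : ∑ l' ∈ S, Jr P c x (k + 1) ((insert l S).erase l') (slc (x l') f)
        = ∑ l' ∈ S, (Jr P c x (k + 1) (S.erase l') (slc (x l') f)
          + (k + 1) * Jr P c x k (S.erase l') (slc (x l') (slc (x l) f))) := by
      refine Finset.sum_congr rfl fun l' hl' => ?_
      have hne : l ≠ l' := fun h => hl (h ▸ hl')
      rw [Finset.erase_insert_of_ne hne, ih _ (by simp [hl]) _ (hf.slc _), slc_slc hf]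
    rw [h1, ih _ hl _ (hf.avg1 P), slc_avg1 P hf, Finset.sum_add_distrib, ← Finset.mul_sum]
    have h2 : Jr P c x (k + 2) S f = ∑ l ∈ S, Jr P c x (k + 1) (S.erase l) (slc (x l) f)
      + (-c) * Jr P c x (k + 1) S (avg1 P f) := rfl
    have h3 : Jr P c x (k + 1) S (slc (x l) f)
      = ∑ l' ∈ S, Jr P c x k (S.erase l') (slc (x l') (slc (x l) f))
      + (-c) * Jr P c x k S (avg1 P (slc (x l) f)) := rfl
    rw [h2]
    push_cast
    linear_combination (-((k : ℝ) + 1)) * h3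

/-- Bounded measurable function. -/
def Nice {α : Type*} [MeasurableSpace α] (f : α → ℝ) : Prop :=
  Measurable f ∧ ∃ B : ℝ, ∀ u, |f u| ≤ B

lemma Nice.integrable {α : Type*} [MeasurableSpace α] {f : α → ℝ} (hf : Nice f)
    (ν : Measure α) [IsFiniteMeasure ν] : Integrable f ν := by
  obtain ⟨h1, B, h2⟩ := hf
  exact Integrable.of_bound h1.aestronglyMeasurable B (ae_of_all _ h2)

lemma Nice.mul {α : Type*} [MeasurableSpace α] {f g : α → ℝ} (hf : Nice f) (hg : Nice g) :
    Nice (fun a => f a * g a) := by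
  obtain ⟨h1, B, h2⟩ := hf
  obtain ⟨h1', B', h2'⟩ := hg
  refine ⟨h1.mul h1', B * B', fun u => ?_⟩
  rw [abs_mul]
  exact mul_le_mul (h2 u) (h2' u) (abs_nonneg _) ((abs_nonneg _).trans (h2 u))

lemma Nice.const_mul {α : Type*} [MeasurableSpace α] {f : α → ℝ} (hf : Nice f) (c : ℝ) :
    Nice (fun a => c * f a) :=
  Nice.mul ⟨measurable_const, |c|, fun _ => le_rfl⟩ hf

lemma Nice.comp {α β : Type*} [MeasurableSpace α] [MeasurableSpace β] {f : α → ℝ} (hf : Nice f)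
    {g : β → α} (hg : Measurable g) : Nice (fun a => f (g a)) :=
  ⟨hf.1.comp hg, hf.2.imp fun _ h _ => h _⟩

lemma Nice.integral {α β : Type*} [MeasurableSpace α] [MeasurableSpace β] {f : α × β → ℝ}
    (hf : Nice f) (ν : Measure β) [IsProbabilityMeasure ν] : Nice (fun a => ∫ b, f (a, b) ∂ν) := by
  obtain ⟨h1, B, h2⟩ := hf
  refine ⟨h1.stronglyMeasurable.integral_prod_right'.measurable, B, fun a => ?_⟩
  have := norm_integral_le_of_norm_le_const (μ := ν) (f := fun b => f (a, b)) (C := B)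
    (ae_of_all _ fun b => h2 _)
  simpa using this

lemma measurable_cons {E : Type*} [MeasurableSpace E] {k : ℕ} :
    Measurable (fun p : E × (Fin k → E) => (Fin.cons p.1 p.2 : Fin (k + 1) → E)) := by
  rw [measurable_pi_iff]
  intro i
  refine Fin.cases ?_ (fun i => ?_) i
  · simpa using measurable_fst
  · simp only [Fin.cons_succ]; fun_prop

lemma Nice.slc {E : Type*} [MeasurableSpace E] {k : ℕ} {f : (Fin (k + 1) → E) → ℝ}
    (hf : Nice f) (y : E) : Nice (slc y f) :=
  hf.comp (g := fun u => Fin.cons y u) (measurable_cons.comp (by fun_prop : Measurable fun u : Fin k → E => (y, u)))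

lemma Nice.slc2 {α E : Type*} [MeasurableSpace α] [MeasurableSpace E] {k : ℕ}
    {F : α → (Fin (k + 1) → E) → ℝ}
    (hf : Nice (fun p : α × (Fin (k + 1) → E) => F p.1 p.2)) {Y : α → E} (hY : Measurable Y) :
    Nice (fun p : α × (Fin k → E) => _root_.slc (Y p.1) (F p.1) p.2) :=
  hf.comp (g := fun p : α × (Fin k → E) => (p.1, (Fin.cons (Y p.1) p.2 : Fin (k + 1) → E)))
    (measurable_fst.prodMk (measurable_cons.comp
      (by fun_prop : Measurable fun p : α × (Fin k → E) => (Y p.1, p.2))))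

lemma Nice.avg2 {α E : Type*} [MeasurableSpace α] [MeasurableSpace E] (P : Measure E)
    [IsProbabilityMeasure P] {k : ℕ}
    {F : α → (Fin (k + 1) → E) → ℝ}
    (hf : Nice (fun p : α × (Fin (k + 1) → E) => F p.1 p.2)) :
    Nice (fun p : α × (Fin k → E) => _root_.avg1 P (F p.1) p.2) := by
  have := hf.comp (g := fun p : (α × (Fin k → E)) × E =>
    (p.1.1, (Fin.cons p.2 p.1.2 : Fin (k + 1) → E)))
    (Measurable.prodMk (by fun_prop) (measurable_cons.comp
      (by fun_prop : Measurable fun p : (α × (Fin k → E)) × E => (p.2, p.1.2))))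
  exact this.integral P

lemma Nice.avg1 {E : Type*} [MeasurableSpace E] (P : Measure E)
    [IsProbabilityMeasure P] {k : ℕ} {f : (Fin (k + 1) → E) → ℝ} (hf : Nice f) :
    Nice (_root_.avg1 P f) := by
  have := hf.comp (g := fun p : (Fin k → E) × E => (Fin.cons p.2 p.1 : Fin (k + 1) → E))
    (measurable_cons.comp (by fun_prop : Measurable fun p : (Fin k → E) × E => (p.2, p.1)))
  exact this.integral P

lemma Nice.add {α : Type*} [MeasurableSpace α] {f g : α → ℝ} (hf : Nice f) (hg : Nice g) :
    Nice (fun a => f a + g a) := by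
  obtain ⟨h1, B, h2⟩ := hf
  obtain ⟨h1', B', h2'⟩ := hg
  exact ⟨h1.add h1', B + B', fun u => (abs_add_le _ _).trans (add_le_add (h2 u) (h2' u))⟩

lemma Nice.sum {α ι : Type*} [MeasurableSpace α] {f : ι → α → ℝ} (S : Finset ι)
    (hf : ∀ i, Nice (f i)) : Nice (fun a => ∑ i ∈ S, f i a) := by
  classical
  induction S using Finset.induction_on with
  | empty => simp only [Finset.sum_empty]; exact ⟨measurable_const, 0, by simp⟩
  | insert i S hi ih =>
    simp only [Finset.sum_insert hi]
    exact (hf i).add ih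

lemma Nice.Jr2 {α E ι : Type*} [MeasurableSpace α] [MeasurableSpace E] [DecidableEq ι]
    (P : Measure E) [IsProbabilityMeasure P] (c : ℝ) {X : α → ι → E} (hX : ∀ l, Measurable fun a => X a l)
    (k : ℕ) (S : Finset ι) {F : α → (Fin k → E) → ℝ}
    (hf : Nice (fun p : α × (Fin k → E) => F p.1 p.2)) :
    Nice (fun a => Jr P c (X a) k S (F a)) := by
  induction k generalizing S with
  | zero => exact hf.comp (by fun_prop : Measurable fun a : α => (a, (Fin.elim0 : Fin 0 → E)))
  | succ k ih =>
    simp only [Jr]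
    refine Nice.add (Nice.sum S fun l => ?_) (Nice.const_mul ?_ _)
    · exact ih _ (hf.slc2 (hX l))
    · exact ih _ (hf.avg2 P)

lemma Jr_congr {E ι : Type*} [MeasurableSpace E] [DecidableEq ι]
    (P : Measure E) (c : ℝ) (x x' : ι → E) (k : ℕ) (S : Finset ι) (f : (Fin k → E) → ℝ)
    (h : ∀ l ∈ S, x l = x' l) : Jr P c x k S f = Jr P c x' k S f := by
  induction k generalizing S with
  | zero => rfl
  | succ k ih =>
    simp only [Jr]
    rw [ih _ _ h]
    congr 1
    refine Finset.sum_congr rfl fun l hl => ?_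
    rw [h l hl]
    exact ih _ _ fun l' hl' => h l' (Finset.mem_of_mem_erase hl')

lemma mp_cons {E : Type*} [MeasurableSpace E] (P : Measure E) [SigmaFinite P] (k : ℕ) :
    MeasurePreserving (fun p : E × (Fin k → E) => (Fin.cons p.1 p.2 : Fin (k + 1) → E))
      (P.prod (Measure.pi fun _ => P)) (Measure.pi fun _ => P) := by
  have := (measurePreserving_piFinSuccAbove (fun _ : Fin (k + 1) => P) 0).symm
  convert this using 1
  funext p
  simp [MeasurableEquiv.piFinSuccAbove]
  rfl

lemma integral_cons {E : Type*} [MeasurableSpace E] (P : Measure E) [IsProbabilityMeasure P]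
    {k : ℕ} {f : (Fin (k + 1) → E) → ℝ} (hf : Nice f) :
    ∫ u, f u ∂(Measure.pi fun _ => P) = ∫ y, ∫ u, slc y f u ∂(Measure.pi fun _ => P) ∂P := by
  have h := mp_cons P k
  rw [← h.map_eq, integral_map h.measurable.aemeasurable hf.1.aestronglyMeasurable,
    integral_prod _ ((hf.comp h.measurable).integrable _)]
  rfl

lemma integral_cons' {E : Type*} [MeasurableSpace E] (P : Measure E) [IsProbabilityMeasure P]
    {k : ℕ} {f : (Fin (k + 1) → E) → ℝ} (hf : Nice f) :
    ∫ u, f u ∂(Measure.pi fun _ => P) = ∫ u, avg1 P f u ∂(Measure.pi fun _ => P) := by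
  have h := mp_cons P k
  rw [← h.map_eq, integral_map h.measurable.aemeasurable hf.1.aestronglyMeasurable,
    integral_prod_symm _ ((hf.comp h.measurable).integrable _)]
  rfl

lemma integral_fin_zero {E : Type*} [MeasurableSpace E] (P : Measure E) [IsProbabilityMeasure P]
    (f : (Fin 0 → E) → ℝ) : ∫ u, f u ∂(Measure.pi fun _ => P) = f Fin.elim0 := by
  have : f = fun _ => f Fin.elim0 := by funext u; congr 1; exact Subsingleton.elim _ _
  rw [this]; simp

lemma Jr_empty {E ι : Type*} [MeasurableSpace E] [DecidableEq ι]
    (P : Measure E) [IsProbabilityMeasure P] (c : ℝ) (x : ι → E) (k : ℕ) {f : (Fin k → E) → ℝ}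
    (hf : Nice f) : Jr P c x k ∅ f = (-c) ^ k * ∫ u, f u ∂(Measure.pi fun _ => P) := by
  induction k with
  | zero => rw [integral_fin_zero]; simp [Jr]
  | succ k ih =>
    simp only [Jr, Finset.sum_empty, zero_add]
    rw [ih (hf.avg1 P), integral_cons' P hf]; ring

/-- Partial contractions. -/
noncomputable def bq {E : Type*} [MeasurableSpace E] (P : Measure E) :
    (q k k' : ℕ) → ((Fin k → E) → ℝ) → ((Fin k' → E) → ℝ) → ℝ
  | 0, _, _, f, g => (∫ u, f u ∂(Measure.pi fun _ => P)) * (∫ u, g u ∂(Measure.pi fun _ => P))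
  | q + 1, k + 1, k' + 1, f, g => ∫ y, bq P q k k' (slc y f) (slc y g) ∂P
  | _ + 1, 0, _, _, _ => 0
  | _ + 1, _ + 1, 0, _, _ => 0

lemma Nice.bq2.{uu} {α E : Type uu} [MeasurableSpace α] [MeasurableSpace E] (P : Measure E)
    [IsProbabilityMeasure P] (q k k' : ℕ) {F : α → (Fin k → E) → ℝ} {G : α → (Fin k' → E) → ℝ}
    (hf : Nice (fun p : α × (Fin k → E) => F p.1 p.2))
    (hg : Nice (fun p : α × (Fin k' → E) => G p.1 p.2)) :
    Nice (fun a => bq P q k k' (F a) (G a)) := by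
  induction q generalizing α k k' with
  | zero =>
    simp only [bq]
    exact (hf.integral _).mul (hg.integral _)
  | succ q ih =>
    cases k with
    | zero => simp only [bq]; exact ⟨measurable_const, 0, by simp⟩
    | succ k =>
      cases k' with
      | zero => simp only [bq]; exact ⟨measurable_const, 0, by simp⟩
      | succ k' =>
        simp only [bq]
        have := ih (α := α × E) k k' (F := fun p => _root_.slc p.2 (F p.1))
          (G := fun p => _root_.slc p.2 (G p.1))
          (Nice.slc2 (F := fun p : α × E => F p.1) (hf.comp (by fun_prop : Measurable fun p : (α × E) × (Fin (k+1) → E) => (p.1.1, p.2))) measurable_snd)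
          (Nice.slc2 (F := fun p : α × E => G p.1) (hg.comp (by fun_prop : Measurable fun p : (α × E) × (Fin (k'+1) → E) => (p.1.1, p.2))) measurable_snd)
        exact this.integral P

lemma bq_comm {E : Type*} [MeasurableSpace E] (P : Measure E) (q k k' : ℕ)
    (f : (Fin k → E) → ℝ) (g : (Fin k' → E) → ℝ) : bq P q k k' f g = bq P q k' k g f := by
  induction q generalizing k k' with
  | zero => simp only [bq]; ring
  | succ q ih =>
    cases k <;> cases k' <;> simp only [bq]
    congr 1; funext y; exact ih _ _ _ _

lemma bq_slc_left {E : Type*} [MeasurableSpace E] (P : Measure E) [IsProbabilityMeasure P]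
    (q k k' : ℕ) (hq : q ≤ k) {f : (Fin (k + 1) → E) → ℝ} {g : (Fin k' → E) → ℝ}
    (hf : Nice f) (hg : Nice g) (hs : IsSym f) :
    ∫ y, bq P q k k' (slc y f) g ∂P = bq P q (k + 1) k' f g := by
  induction q generalizing k k' with
  | zero =>
    simp only [bq]
    rw [integral_mul_const, ← integral_cons P hf]
  | succ q ih =>
    obtain ⟨k, rfl⟩ : ∃ l, k = l + 1 := ⟨k - 1, by omega⟩
    cases k' with
    | zero => simp [bq]
    | succ k' =>
      simp only [bq]
      have h1 : ∀ z, bq P q (k + 1) k' (slc z f) (slc z g)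
          = ∫ y, bq P q k k' (slc z (slc y f)) (slc z g) ∂P := by
        intro z
        rw [← ih k k' (by omega) (hf.slc z) (hg.slc z) (hs.slc z)]
        simp_rw [slc_slc hs z]
      simp_rw [h1]
      apply integral_integral_swap
      have : Nice (fun p : E × E => bq P q k k' (slc p.2 (slc p.1 f)) (slc p.2 g)) := by
        apply Nice.bq2
        · apply Nice.slc2 (F := fun p : E × E => slc p.1 f) _ measurable_snd
          exact Nice.slc2 (F := fun p : E × E => f) (hf.comp measurable_snd) measurable_fst
        · exact Nice.slc2 (F := fun p : E × E => g) (hg.comp measurable_snd) measurable_snd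
      exact this.integrable _

lemma bq_slc_right {E : Type*} [MeasurableSpace E] (P : Measure E) [IsProbabilityMeasure P]
    (q k k' : ℕ) (hq : q ≤ k') {f : (Fin k → E) → ℝ} {g : (Fin (k' + 1) → E) → ℝ}
    (hf : Nice f) (hg : Nice g) (hs : IsSym g) :
    ∫ y, bq P q k k' f (slc y g) ∂P = bq P q k (k' + 1) f g := by
  simp_rw [bq_comm P q k]
  exact bq_slc_left P q k' k hq hg hf hs

lemma mp_update {E ι : Type*} [MeasurableSpace E] [Fintype ι] [DecidableEq ι] (P : Measure E)
    [IsProbabilityMeasure P] (l : ι) :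
    MeasurePreserving (fun p : E × (ι → E) => Function.update p.2 l p.1)
      (P.prod (Measure.pi fun _ => P)) (Measure.pi fun _ => P) := by
  have hm : Measurable (fun p : E × (ι → E) => Function.update p.2 l p.1) := by
    rw [measurable_pi_iff]
    intro i
    by_cases h : i = l
    · subst h; simpa using measurable_fst
    · simp only [Function.update_of_ne h]; fun_prop
  refine ⟨hm, ?_⟩
  symm
  apply Measure.pi_eq
  intro s hs
  rw [Measure.map_apply hm (MeasurableSet.univ_pi hs)]
  have : (fun p : E × (ι → E) => Function.update p.2 l p.1) ⁻¹' (Set.univ.pi s)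
      = (s l) ×ˢ (Set.univ.pi (Function.update s l Set.univ)) := by
    ext p
    simp only [Set.mem_preimage, Set.mem_univ_pi, Set.mem_prod]
    constructor
    · intro h
      refine ⟨by simpa using h l, fun i => ?_⟩
      by_cases hi : i = l
      · subst hi; simp
      · simpa [Function.update_of_ne hi] using h i
    · rintro ⟨h1, h2⟩ i
      by_cases hi : i = l
      · subst hi; simpa using h1
      · simpa [Function.update_of_ne hi] using h2 i
  rw [this, Measure.prod_prod, Measure.pi_pi]
  rw [← Finset.mul_prod_erase Finset.univ (fun i => P (s i)) (Finset.mem_univ l),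
    ← Finset.mul_prod_erase Finset.univ (fun i => P (Function.update s l Set.univ i)) (Finset.mem_univ l)]
  simp only [Function.update_self, measure_univ, one_mul]
  congr 1
  refine Finset.prod_congr rfl fun i hi => ?_
  rw [Function.update_of_ne (Finset.ne_of_mem_erase hi)]

lemma integral_update {E ι : Type*} [MeasurableSpace E] [Fintype ι] [DecidableEq ι] (P : Measure E)
    [IsProbabilityMeasure P] (l : ι) {φ : (ι → E) → ℝ} (hφ : Nice φ) :
    ∫ x, φ x ∂(Measure.pi fun _ => P)
      = ∫ y, ∫ x, φ (Function.update x l y) ∂(Measure.pi fun _ => P) ∂P := by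
  have h := mp_update (E := E) P l
  rw [← h.map_eq, integral_map h.measurable.aemeasurable hφ.1.aestronglyMeasurable,
    integral_prod _ ((hφ.comp h.measurable).integrable _)]
  rw [h.map_eq]

lemma Nice.Jr1 {E ι : Type*} [MeasurableSpace E] [DecidableEq ι]
    (P : Measure E) [IsProbabilityMeasure P] (c : ℝ) 
    (k : ℕ) (S : Finset ι) {f : (Fin k → E) → ℝ} (hf : Nice f) :
    Nice (fun x : ι → E => Jr P c x k S f) :=
  Nice.Jr2 P c (X := fun x : ι → E => x) (fun l => measurable_pi_apply l) k S
    (F := fun _ => f) (hf.comp measurable_snd)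

lemma Jr_update {E ι : Type*} [MeasurableSpace E] [DecidableEq ι] (P : Measure E) (c : ℝ)
    (x : ι → E) (y : E) (k : ℕ) (S : Finset ι) (l : ι) (hl : l ∉ S) (f : (Fin (k + 1) → E) → ℝ)
    (hf : IsSym f) :
    Jr P c (Function.update x l y) (k + 1) (insert l S) f
      = Jr P c x (k + 1) S f + (k + 1) * Jr P c x k S (slc y f) := by
  have h : ∀ l' ∈ S, Function.update x l y l' = x l' := by
    intro l' hl'
    rw [Function.update_of_ne]
    rintro rfl; exact hl hl'
  rw [Jr_insert _ _ _ _ _ _ hl _ hf, Jr_congr P c _ x (k + 1) S f h, Jr_congr P c _ x k S _ h]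
  simp

lemma integral_sum_nice {α : Type*} [MeasurableSpace α] (ν : Measure α) [IsProbabilityMeasure ν]
    (N : ℕ) (c : ℕ → ℝ) {B : ℕ → α → ℝ} (hB : ∀ q, Nice (B q)) :
    ∫ y, ∑ q ∈ Finset.range N, c q * B q y ∂ν = ∑ q ∈ Finset.range N, c q * ∫ y, B q y ∂ν := by
  rw [integral_finsetSum _ fun q _ => ((hB q).const_mul _).integrable _]
  simp_rw [integral_const_mul]

lemma nice_bq_l {E : Type*} [MeasurableSpace E] (P : Measure E) [IsProbabilityMeasure P]
    (q k k' : ℕ) {f : (Fin (k + 1) → E) → ℝ} {g : (Fin k' → E) → ℝ}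
    (hf : Nice f) (hg : Nice g) : Nice (fun y => bq P q k k' (slc y f) g) :=
  Nice.bq2 P q k k' (F := fun y => slc y f) (G := fun _ => g)
    (Nice.slc2 (F := fun _ => f) (hf.comp measurable_snd) measurable_id) (hg.comp measurable_snd)

lemma nice_bq_r {E : Type*} [MeasurableSpace E] (P : Measure E) [IsProbabilityMeasure P]
    (q k k' : ℕ) {f : (Fin k → E) → ℝ} {g : (Fin (k' + 1) → E) → ℝ}
    (hf : Nice f) (hg : Nice g) : Nice (fun y => bq P q k k' f (slc y g)) :=
  Nice.bq2 P q k k' (F := fun _ => f) (G := fun y => slc y g)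
    (hf.comp measurable_snd) (Nice.slc2 (F := fun _ => g) (hg.comp measurable_snd) measurable_id)

lemma nice_bq_lr {E : Type*} [MeasurableSpace E] (P : Measure E) [IsProbabilityMeasure P]
    (q k k' : ℕ) {f : (Fin (k + 1) → E) → ℝ} {g : (Fin (k' + 1) → E) → ℝ}
    (hf : Nice f) (hg : Nice g) : Nice (fun y => bq P q k k' (slc y f) (slc y g)) :=
  Nice.bq2 P q k k' (F := fun y => slc y f) (G := fun y => slc y g)
    (Nice.slc2 (F := fun _ => f) (hf.comp measurable_snd) measurable_id)
    (Nice.slc2 (F := fun _ => g) (hg.comp measurable_snd) measurable_id)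

lemma Nice.finsum {α : Type*} [MeasurableSpace α] (N : ℕ) (c : ℕ → ℝ) {B : ℕ → α → ℝ}
    (hB : ∀ q, Nice (B q)) : Nice (fun y => ∑ q ∈ Finset.range N, c q * B q y) :=
  Nice.sum _ fun q => (hB q).const_mul _

theorem Jr_second {E ι : Type*} [MeasurableSpace E] [Fintype ι] [DecidableEq ι] (P : Measure E)
    [IsProbabilityMeasure P] (c : ℝ) (S : Finset ι) (k k' : ℕ)
    {f : (Fin k → E) → ℝ} {g : (Fin k' → E) → ℝ}
    (hf : Nice f) (hg : Nice g) (sf : IsSym f) (sg : IsSym g) :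
    ∫ x : ι → E, Jr P c x k S f * Jr P c x k' S g ∂(Measure.pi fun _ => P)
      = ∑ q ∈ Finset.range (k + 1), cf c S.card k k' q * bq P q k k' f g := by
  induction S using Finset.induction_on generalizing k k' with
  | empty =>
    simp_rw [Jr_empty P c _ _ hf, Jr_empty P c _ _ hg]
    rw [Finset.sum_range_succ']
    simp only [Finset.card_empty, cf_zero_zero, cf_zero_succ, bq]
    simp
    ring
  | insert l S hl ih =>
    rw [Finset.card_insert_of_notMem hl, integral_update P l
      ((Nice.Jr1 P c k _ hf).mul (Nice.Jr1 P c k' _ hg))]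
    rcases k with _ | k <;> rcases k' with _ | k'
    · have := ih 0 0 hf hg sf sg
      simp [Jr, bq, integral_fin_zero, cf, cA] 
    · simp_rw [Jr_update P c _ _ k' S l hl g sg]
      have h1 : ∀ y, ∫ x : ι → E, Jr P c (Function.update x l y) 0 (insert l S) f *
          (Jr P c x (k' + 1) S g + (k' + 1) * Jr P c x k' S (slc y g)) ∂(Measure.pi fun _ => P)
          = (∑ q ∈ Finset.range (0 + 1), cf c S.card 0 (k' + 1) q * bq P q 0 (k' + 1) f g)
            + (k' + 1) *
              ∑ q ∈ Finset.range (0 + 1), cf c S.card 0 k' q * bq P q 0 k' f (slc y g) := by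
        intro y
        rw [← ih 0 (k' + 1) hf hg sf sg, ← ih 0 k' hf (hg.slc y) sf (sg.slc y),
          ← integral_const_mul, ← integral_add]
        · congr 1; funext x; simp only [Jr]; ring
        · exact ((Nice.Jr1 P c 0 _ hf).mul (Nice.Jr1 P c _ _ hg)).integrable _
        · exact (((Nice.Jr1 P c 0 _ hf).mul (Nice.Jr1 P c _ _ (hg.slc y))).const_mul _).integrable _
      simp_rw [h1]
      rw [integral_add (integrable_const _)
        (((Nice.finsum _ _ fun q => nice_bq_r P q 0 k' hf hg).const_mul _).integrable _),
        integral_const_mul, integral_sum_nice _ _ _ fun q => nice_bq_r P q 0 k' hf hg]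
      simp only [zero_add, Finset.sum_range_one, integral_const]
      rw [bq_slc_right P 0 0 k' (by omega) hf hg sg, cf_step_left]
      simp
      ring
    · simp_rw [Jr_update P c _ _ k S l hl f sf]
      have h1 : ∀ y, ∫ x : ι → E, 
          (Jr P c x (k + 1) S f + (k + 1) * Jr P c x k S (slc y f)) *
          Jr P c (Function.update x l y) 0 (insert l S) g ∂(Measure.pi fun _ => P)
          = (∑ q ∈ Finset.range (k + 1 + 1), cf c S.card (k + 1) 0 q * bq P q (k + 1) 0 f g)
            + (k + 1) *
              ∑ q ∈ Finset.range (k + 1), cf c S.card k 0 q * bq P q k 0 (slc y f) g := by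
        intro y
        rw [← ih (k + 1) 0 hf hg sf sg, ← ih k 0 (hf.slc y) hg (sf.slc y) sg,
          ← integral_const_mul, ← integral_add]
        · congr 1; funext x; simp only [Jr]; ring
        · exact ((Nice.Jr1 P c _ _ hf).mul (Nice.Jr1 P c 0 _ hg)).integrable _
        · exact (((Nice.Jr1 P c _ _ (hf.slc y)).mul (Nice.Jr1 P c 0 _ hg)).const_mul _).integrable _
      simp_rw [h1]
      rw [integral_add (integrable_const _)
        (((Nice.finsum _ _ fun q => nice_bq_l P q k 0 hf hg).const_mul _).integrable _),
        integral_const_mul, integral_sum_nice _ _ _ fun q => nice_bq_l P q k 0 hf hg]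
      have hz : ∀ (N m k : ℕ) (B : ℕ → ℝ), ∑ q ∈ Finset.range (N + 1), cf c m k 0 q * B q
          = cf c m k 0 0 * B 0 := by
        intro N m k B
        rw [Finset.sum_range_succ']
        simp [cf_of_lt_right]
      rw [hz, hz, hz, integral_const]
      rw [bq_slc_left P 0 k 0 (by omega) hf hg sf, cf_step_right]
      simp
      ring
    · simp_rw [Jr_update P c _ _ k S l hl f sf, Jr_update P c _ _ k' S l hl g sg]
      have h1 : ∀ y, ∫ x : ι → E, 
          (Jr P c x (k + 1) S f + (k + 1) * Jr P c x k S (slc y f)) *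
          (Jr P c x (k' + 1) S g + (k' + 1) * Jr P c x k' S (slc y g)) ∂(Measure.pi fun _ => P)
          = (∑ q ∈ Finset.range (k + 1 + 1),
              cf c S.card (k + 1) (k' + 1) q * bq P q (k + 1) (k' + 1) f g)
            + (k + 1) *
              (∑ q ∈ Finset.range (k + 1), cf c S.card k (k' + 1) q * bq P q k (k' + 1) (slc y f) g)
            + (k' + 1) *
              (∑ q ∈ Finset.range (k + 1 + 1), cf c S.card (k + 1) k' q * bq P q (k + 1) k' f (slc y g))
            + (k + 1) * (k' + 1) *
              (∑ q ∈ Finset.range (k + 1), cf c S.card k k' q * bq P q k k' (slc y f) (slc y g)) := by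
        intro y
        have i1 := ((Nice.Jr1 P c _ S hf).mul (Nice.Jr1 P c _ S hg))
        have i2 := ((Nice.Jr1 P c _ S (hf.slc y)).mul (Nice.Jr1 P c _ S hg)).const_mul (k + 1)
        have i3 := ((Nice.Jr1 P c _ S hf).mul (Nice.Jr1 P c _ S (hg.slc y))).const_mul (k' + 1)
        have i4 := ((Nice.Jr1 P c _ S (hf.slc y)).mul
          (Nice.Jr1 P c _ S (hg.slc y))).const_mul ((k + 1) * (k' + 1))
        rw [← ih (k + 1) (k' + 1) hf hg sf sg, ← ih k (k' + 1) (hf.slc y) hg (sf.slc y) sg,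
          ← ih (k + 1) k' hf (hg.slc y) sf (sg.slc y),
          ← ih k k' (hf.slc y) (hg.slc y) (sf.slc y) (sg.slc y),
          ← integral_const_mul, ← integral_const_mul, ← integral_const_mul,
          ← integral_add (i1.integrable _) (i2.integrable _),
          ← integral_add ((i1.add i2).integrable _) (i3.integrable _),
          ← integral_add (((i1.add i2).add i3).integrable _) (i4.integrable _)]
        congr 1; funext x; ring
      simp_rw [h1]
      have i1 : Nice (fun _ : E => ∑ q ∈ Finset.range (k + 1 + 1),
              cf c S.card (k + 1) (k' + 1) q * bq P q (k + 1) (k' + 1) f g) :=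
        ⟨measurable_const, _, fun _ => le_rfl⟩
      have i2 := (Nice.finsum (k + 1) (fun q => cf c S.card k (k' + 1) q)
        fun q => nice_bq_l P q k (k' + 1) hf hg).const_mul (k + 1)
      have i3 := (Nice.finsum (k + 1 + 1) (fun q => cf c S.card (k + 1) k' q)
        fun q => nice_bq_r P q (k + 1) k' hf hg).const_mul (k' + 1)
      have i4 := (Nice.finsum (k + 1) (fun q => cf c S.card k k' q)
        fun q => nice_bq_lr P q k k' hf hg).const_mul ((k + 1) * (k' + 1))
      rw [integral_add (((i1.add i2).add i3).integrable _) (i4.integrable _),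
        integral_add ((i1.add i2).integrable _) (i3.integrable _),
        integral_add (i1.integrable _) (i2.integrable _),
        integral_const_mul, integral_const_mul, integral_const_mul,
        integral_sum_nice _ _ _ fun q => nice_bq_l P q k (k' + 1) hf hg,
        integral_sum_nice _ _ _ fun q => nice_bq_r P q (k + 1) k' hf hg,
        integral_sum_nice _ _ _ fun q => nice_bq_lr P q k k' hf hg]
      have e2 : ∑ q ∈ Finset.range (k + 1), cf c S.card k (k' + 1) q *
            ∫ y, bq P q k (k' + 1) (slc y f) g ∂P
          = ∑ q ∈ Finset.range (k + 1 + 1), cf c S.card k (k' + 1) q * bq P q (k + 1) (k' + 1) f g := by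
        rw [Finset.sum_range_succ _ (k + 1), cf_of_lt_left _ _ _ _ _ (Nat.lt_succ_self k), zero_mul,
          add_zero]
        refine Finset.sum_congr rfl fun q hq => ?_
        rw [bq_slc_left P q k (k' + 1) (by simp at hq; omega) hf hg sf]
      have e3 : ∑ q ∈ Finset.range (k + 1 + 1), cf c S.card (k + 1) k' q *
            ∫ y, bq P q (k + 1) k' f (slc y g) ∂P
          = ∑ q ∈ Finset.range (k + 1 + 1), cf c S.card (k + 1) k' q * bq P q (k + 1) (k' + 1) f g := by
        refine Finset.sum_congr rfl fun q hq => ?_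
        rcases Nat.lt_or_ge k' q with h | h
        · rw [cf_of_lt_right _ _ _ _ _ h]; simp
        rw [bq_slc_right P q (k + 1) k' h hf hg sg]
      have e4 : ∀ q, ∫ y, bq P q k k' (slc y f) (slc y g) ∂P = bq P (q + 1) (k + 1) (k' + 1) f g :=
        fun q => rfl
      rw [e2, e3]
      simp_rw [e4]
      simp only [integral_const, probReal_univ, one_smul]
      rw [Finset.sum_range_succ' _ (k + 1), Finset.sum_range_succ' _ (k + 1),
        Finset.sum_range_succ' _ (k + 1), Finset.sum_range_succ' _ (k + 1)]
      simp_rw [cf_step_succ, cf_step_zero]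
      simp only [mul_add, add_mul, Finset.sum_add_distrib, Finset.mul_sum]
      simp only [← mul_assoc]
      ring

/-- `f` vanishes outside `A^k`. -/
def SuppIn {E : Type*} {k : ℕ} (A : Set E) (f : (Fin k → E) → ℝ) : Prop :=
  ∀ u : Fin k → E, (∃ i, u i ∉ A) → f u = 0

lemma SuppIn.slc {E : Type*} {k : ℕ} {A : Set E} {f : (Fin (k + 1) → E) → ℝ} (hf : SuppIn A f)
    (y : E) : SuppIn A (slc y f) := by
  rintro u ⟨i, hi⟩
  exact hf _ ⟨i.succ, by simpa using hi⟩

lemma bq_diag {E : Type*} [MeasurableSpace E] (P : Measure E) [IsProbabilityMeasure P] (k : ℕ)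
    {f : (Fin k → E) → ℝ} (hf : Nice f) :
    bq P k k k f f = ∫ u, f u * f u ∂(Measure.pi fun _ => P) := by
  induction k with
  | zero => simp only [bq, integral_fin_zero]
  | succ k ih =>
    simp only [bq]
    rw [integral_cons P (hf.mul hf)]
    congr 1; funext y
    rw [ih (hf.slc y)]
    rfl

lemma bq_nonneg {E : Type*} [MeasurableSpace E] (P : Measure E) (q k : ℕ)
    (f : (Fin k → E) → ℝ) : 0 ≤ bq P q k k f f := by
  induction q generalizing k with
  | zero => simp only [bq]; exact mul_self_nonneg _
  | succ q ih =>
    cases k with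
    | zero => simp [bq]
    | succ k => simp only [bq]; exact integral_nonneg fun y => ih _ _

lemma bq_le {E : Type*} [MeasurableSpace E] (P : Measure E) [IsProbabilityMeasure P]
    {A : Set E} (hA : MeasurableSet A) (hpos : 0 < P.real A) (q k : ℕ) (hq : q ≤ k)
    {f : (Fin k → E) → ℝ} (hf : Nice f) (hs : SuppIn A f) :
    bq P q k k f f ≤ P.real A ^ (k - q) * ∫ u, f u * f u ∂(Measure.pi fun _ => P) := by
  induction q generalizing k with
  | zero =>
    simp only [bq, Nat.sub_zero]
    set D : Set (Fin k → E) := Set.univ.pi fun _ => A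
    have hD : MeasurableSet D := MeasurableSet.univ_pi fun _ => hA
    have hDm : (Measure.pi fun _ : Fin k => P).real D = P.real A ^ k := by
      simp [D, measureReal_def, Measure.pi_pi]
    set r := P.real A ^ k
    have hr : 0 < r := by positivity
    set I := ∫ u, f u ∂(Measure.pi fun _ => P) with hI
    set t := I / r
    have hfD : ∀ u, f u * D.indicator (fun _ => (1:ℝ)) u = f u := by
      intro u
      by_cases h : u ∈ D
      · simp [h]
      · have : f u = 0 := by
          apply hs
          simpa [D] using h
        simp [this]
    have hind : Nice (D.indicator (fun _ => (1:ℝ))) :=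
      ⟨measurable_const.indicator hD, 1, fun u => by
        by_cases h : u ∈ D <;> simp [h]⟩
    have h0 : 0 ≤ ∫ u, (f u - t * D.indicator (fun _ => (1:ℝ)) u) ^ 2 ∂(Measure.pi fun _ => P) :=
      integral_nonneg fun u => sq_nonneg _
    have h1 : ∀ u, (f u - t * D.indicator (fun _ => (1:ℝ)) u) ^ 2
        = f u * f u + (-2 * t) * f u + t ^ 2 * D.indicator (fun _ => (1:ℝ)) u := by
      intro u
      have e1 := hfD u
      have e2 : D.indicator (fun _ => (1:ℝ)) u * D.indicator (fun _ => (1:ℝ)) u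
        = D.indicator (fun _ => (1:ℝ)) u := by by_cases h : u ∈ D <;> simp [h]
      linear_combination (-2 * t) * e1 + t ^ 2 * e2
    simp_rw [h1] at h0
    rw [integral_add (((hf.mul hf).add (hf.const_mul _)).integrable _) ((hind.const_mul _).integrable _),
      integral_add ((hf.mul hf).integrable _) ((hf.const_mul _).integrable _),
      integral_const_mul, integral_const_mul, integral_indicator_const _ hD, hDm, ← hI] at h0
    have htr : t * r = I := by simp only [t]; field_simp
    simp only [smul_eq_mul, mul_one] at h0
    set Q := ∫ u, f u * f u ∂(Measure.pi fun _ => P)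
    have : 0 ≤ Q - t * I := by
      have : t ^ 2 * r = t * I := by rw [← htr]; ring
      linarith
    have h3 : 0 ≤ r * (Q - t * I) := mul_nonneg hr.le this
    have h4 : r * (t * I) = I * I := by rw [← htr]; ring
    linarith
  | succ q ih =>
    obtain ⟨k, rfl⟩ : ∃ l, k = l + 1 := ⟨k - 1, by omega⟩
    simp only [bq]
    rw [integral_cons P (hf.mul hf), ← integral_const_mul]
    have hn : Nice (fun y => ∫ u, slc y (fun u => f u * f u) u ∂(Measure.pi fun _ => P)) := by
      have := Nice.slc2 (α := E) (F := fun _ => (fun u : Fin (k + 1) → E => f u * f u))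
        ((hf.mul hf).comp measurable_snd) measurable_id
      exact this.integral _
    apply integral_mono ((nice_bq_lr P q k k hf hf).integrable _) ((hn.const_mul _).integrable _)
    intro y
    have := ih k (by omega) (hf.slc y) (hs.slc y)
    rw [show k + 1 - (q + 1) = k - q by omega]
    exact this

lemma cf_sum_bound (n k : ℕ) (hk : 1 ≤ k) (hkn : k ≤ n) (ρ : ℝ) (h0 : 0 ≤ ρ) (h1 : ρ ≤ 1) :
    ∑ q ∈ Finset.range k, |cf n n k k q| * ρ ^ (k - q)
      ≤ n ^ k * k.factorial * (128 ^ k * (k : ℝ) ^ (2 * k) * Real.sqrt ρ) := by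
  have hkR : (1 : ℝ) ≤ k := by exact_mod_cast hk
  have hn : 1 ≤ n := hk.trans hkn
  have hterm : ∀ q ∈ Finset.range k, |cf n n k k q| * ρ ^ (k - q)
      ≤ n ^ k * k.factorial * (64 ^ k * (k : ℝ) ^ (2 * k) * Real.sqrt ρ) := by
    intro q hq
    have hq : q < k := by simpa using hq
    have e : k + k - 2 * q = 2 * (k - q) := by omega
    have hb := cA_bound n k q (2 * (k - q)) hk hn (by omega)
    have hfac : (q.factorial : ℝ) ≤ k.factorial := by
      exact_mod_cast Nat.factorial_le hq.le
    have hch : (k.choose q : ℝ) ≤ 2 ^ k := by exact_mod_cast Nat.choose_le_two_pow k q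
    have hρ : ρ ^ (k - q) ≤ Real.sqrt ρ := by
      calc ρ ^ (k - q) ≤ ρ ^ 1 := pow_le_pow_of_le_one h0 h1 (by omega)
        _ = Real.sqrt ρ * Real.sqrt ρ := by rw [Real.mul_self_sqrt h0, pow_one]
        _ ≤ Real.sqrt ρ * 1 := by
            gcongr; exact Real.sqrt_le_iff.2 ⟨by norm_num, by simpa using h1⟩
        _ = _ := mul_one _
    have hb2 : |cA n n (2 * (k - q)) q| ≤ n ^ k * (4 * (k:ℝ)) ^ (2 * k) := by
      refine hb.trans ?_
      have : Real.sqrt n ^ (2 * (k - q)) = (n : ℝ) ^ (k - q) := by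
        rw [pow_mul, Real.sq_sqrt (by positivity)]
      rw [this]
      calc (n : ℝ) ^ q * (4 * k) ^ (2 * (k - q)) * n ^ (k - q)
          = n ^ k * (4 * (k:ℝ)) ^ (2 * (k - q)) := by
            rw [mul_right_comm, ← pow_add, Nat.add_sub_cancel' hq.le]
        _ ≤ _ := by
            gcongr
            · linarith
            · omega
    calc |cf n n k k q| * ρ ^ (k - q)
        = q.factorial * k.choose q * k.choose q * |cA n n (2 * (k - q)) q| * ρ ^ (k - q) := by
          rw [cf, e, abs_mul, abs_of_nonneg (by positivity : (0:ℝ) ≤ q.factorial * k.choose q * k.choose q)]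
      _ ≤ k.factorial * 2 ^ k * 2 ^ k * (n ^ k * (4 * (k:ℝ)) ^ (2 * k)) * Real.sqrt ρ := by
          gcongr
      _ = _ := by
          rw [mul_pow, pow_mul 4 2 k, show (64 : ℝ) = 2 * 2 * 4 ^ 2 by norm_num, mul_pow, mul_pow]
          ring
  refine (Finset.sum_le_sum hterm).trans ?_
  rw [Finset.sum_const, Finset.card_range, nsmul_eq_mul]
  have h2 : (k : ℝ) ≤ 2 ^ k := by exact_mod_cast Nat.lt_two_pow_self.le
  calc (k : ℝ) * (n ^ k * k.factorial * (64 ^ k * (k : ℝ) ^ (2 * k) * Real.sqrt ρ))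
      ≤ 2 ^ k * (n ^ k * k.factorial * (64 ^ k * (k : ℝ) ^ (2 * k) * Real.sqrt ρ)) := by gcongr
    _ = _ := by
      rw [show (128 : ℝ) = 2 * 64 by norm_num, mul_pow]; ring

lemma desc_bound (n k : ℕ) (hk : 1 ≤ k) (hkn : k ≤ n) :
    |(n.descFactorial k : ℝ) - n ^ k| ≤ n ^ k * ((k : ℝ) ^ 2 / n) := by
  have hn : (0 : ℝ) < n := by exact_mod_cast (by omega : 0 < n)
  have hle : (n.descFactorial k : ℝ) ≤ n ^ k := by exact_mod_cast Nat.descFactorial_le_pow n k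
  rw [abs_sub_comm, abs_of_nonneg (by linarith)]
  have h1 : ((n + 1 - k : ℕ) : ℝ) ^ k ≤ n.descFactorial k := by
    exact_mod_cast Nat.pow_sub_le_descFactorial n k
  have h2 : (n : ℝ) - k ≤ ((n + 1 - k : ℕ) : ℝ) := by
    rw [Nat.cast_sub (by omega)]; push_cast; linarith
  have hkn' : (k : ℝ) ≤ n := by exact_mod_cast hkn
  have h3 : ((n : ℝ) - k) ^ k ≤ n.descFactorial k :=
    (pow_le_pow_left₀ (by linarith) h2 k).trans h1
  have hb := one_add_mul_le_pow (a := -((k : ℝ) / n)) (by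
    have : (k : ℝ) / n ≤ 1 := by rw [div_le_one hn]; exact hkn'
    linarith) k
  have h4 : ((n : ℝ) - k) ^ k = n ^ k * (1 + -((k : ℝ) / n)) ^ k := by
    rw [← mul_pow]; congr 1; field_simp; ring
  have h5 : (n : ℝ) ^ k * (1 + k * -((k : ℝ) / n)) ≤ n.descFactorial k := by
    rw [h4] at h3
    refine le_trans ?_ h3
    gcongr
  have : (n : ℝ) ^ k * (1 + k * -((k : ℝ) / n)) = n ^ k - n ^ k * ((k : ℝ) ^ 2 / n) := by ring
  linarith

theorem Jr_main {E : Type*} [MeasurableSpace E] (P : Measure E)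
    [IsProbabilityMeasure P] (n k : ℕ) (hk : 1 ≤ k) (hkn : k ≤ n)
    {A : Set E} (hA : MeasurableSet A) (hpos : 0 < P.real A)
    {f : (Fin k → E) → ℝ} (hf : Nice f) (sf : IsSym f) (hs : SuppIn A f) :
    |(∫ x : Fin n → E, Jr P n x k Finset.univ f * Jr P n x k Finset.univ f ∂(Measure.pi fun _ => P))
      - n ^ k * k.factorial * ∫ u, f u * f u ∂(Measure.pi fun _ => P)|
    ≤ (n ^ k * k.factorial * ∫ u, f u * f u ∂(Measure.pi fun _ => P)) *
      (128 ^ k * (k : ℝ) ^ (2 * k) * Real.sqrt (P.real A) + (k : ℝ) ^ 2 / n) := by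
  rw [Jr_second P n Finset.univ k k hf hf sf sf, Finset.sum_range_succ, Finset.card_univ,
    Fintype.card_fin]
  have hck : cf n n k k k = k.factorial * n.descFactorial k := by
    simp [cf, cA, two_mul]
  rw [hck, bq_diag P k hf]
  set Q := ∫ u, f u * f u ∂(Measure.pi fun _ => P) with hQ
  have hQ0 : 0 ≤ Q := integral_nonneg fun u => mul_self_nonneg _
  have h1 : |∑ q ∈ Finset.range k, cf n n k k q * bq P q k k f f|
      ≤ (∑ q ∈ Finset.range k, |cf n n k k q| * P.real A ^ (k - q)) * Q := by
    refine (Finset.abs_sum_le_sum_abs _ _).trans ?_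
    rw [Finset.sum_mul]
    refine Finset.sum_le_sum fun q hq => ?_
    rw [abs_mul, abs_of_nonneg (bq_nonneg P q k f), mul_assoc]
    gcongr
    exact bq_le P hA hpos q k (by simp at hq; omega) hf hs
  have h2 := mul_le_mul_of_nonneg_right
    (cf_sum_bound n k hk hkn (P.real A) measureReal_nonneg measureReal_le_one) hQ0
  have h3 := mul_le_mul_of_nonneg_left (desc_bound n k hk hkn)
    (by positivity : 0 ≤ (k.factorial : ℝ) * Q)
  set T := ∑ q ∈ Finset.range k, cf n n k k q * bq P q k k f f
  calc |T + k.factorial * n.descFactorial k * Q - n ^ k * k.factorial * Q|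
      = |T + (k.factorial * Q) * ((n.descFactorial k : ℝ) - n ^ k)| := by congr 1; ring
    _ ≤ |T| + (k.factorial * Q) * |(n.descFactorial k : ℝ) - n ^ k| := by
        refine (abs_add_le _ _).trans (le_of_eq ?_)
        rw [abs_mul, abs_of_nonneg (by positivity : 0 ≤ (k.factorial : ℝ) * Q)]
    _ ≤ _ := by linarith

/-- Partial injections into `S`. -/
def PInj {ι : Type*} {k : ℕ} (S : Finset ι) (j : Fin k → Option ι) : Prop :=
  (∀ i l, j i = some l → l ∈ S) ∧ ∀ i i' l, j i = some l → j i' = some l → i = i'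

/-- Weight of a selected index. -/
def wt {ι : Type*} (c : ℝ) (o : Option ι) : ℝ := o.elim (-c) (fun _ => 1)

/-- Combine sample points and fresh points. -/
def comb {E ι : Type*} {k : ℕ} (j : Fin k → Option ι) (x : ι → E) (v : Fin k → E) : Fin k → E :=
  fun i => (j i).elim (v i) x

open Classical in
/-- Expanded form of the multiple empirical integral. -/
noncomputable def Emp {E ι : Type*} [MeasurableSpace E] [Fintype ι] (P : Measure E) (c : ℝ)
    (x : ι → E) (k : ℕ) (S : Finset ι) (f : (Fin k → E) → ℝ) : ℝ :=
  ∑ j : Fin k → Option ι, if PInj S j then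
    (∏ i, wt c (j i)) * ∫ v, f (comb j x v) ∂(Measure.pi fun _ => P) else 0

lemma measurable_comb {E ι : Type*} [MeasurableSpace E] {k : ℕ} (j : Fin k → Option ι) :
    Measurable (fun p : (ι → E) × (Fin k → E) => comb j p.1 p.2) := by
  rw [measurable_pi_iff]
  intro i
  simp only [comb]
  cases j i with
  | none => simp only [Option.elim]; fun_prop
  | some l => simp only [Option.elim]; fun_prop

lemma measurable_comb' {E ι : Type*} [MeasurableSpace E] {k : ℕ} (j : Fin k → Option ι) (x : ι → E) :
    Measurable (fun v : Fin k → E => comb j x v) :=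
  (measurable_comb j).comp (by fun_prop : Measurable fun v : Fin k → E => (x, v))

lemma PInj_cons_none {ι : Type*} {k : ℕ} (S : Finset ι) (j : Fin k → Option ι) :
    PInj S (Fin.cons none j : Fin (k + 1) → Option ι) ↔ PInj S j := by
  simp [PInj, Fin.forall_fin_succ]

lemma PInj_cons_some {ι : Type*} [DecidableEq ι] {k : ℕ} (S : Finset ι) (l : ι) (j : Fin k → Option ι) :
    PInj S (Fin.cons (some l) j : Fin (k + 1) → Option ι) ↔ l ∈ S ∧ PInj (S.erase l) j := by
  simp only [PInj, Fin.forall_fin_succ, Fin.cons_zero, Fin.cons_succ, Finset.mem_erase]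
  constructor
  · rintro ⟨⟨h1, h2⟩, ⟨-, h3⟩, h4⟩
    refine ⟨h1 l rfl, fun i l' hl' => ⟨?_, h2 i l' hl'⟩, fun i i' l' hi hi' => ?_⟩
    · rintro rfl
      have := h3 i l' rfl hl'
      exact (Fin.succ_ne_zero i) this.symm
    · exact Fin.succ_injective _ ((h4 i).2 i' l' hi hi')
  · rintro ⟨h1, h2, h3⟩
    refine ⟨⟨fun l' h => by cases h; exact h1, fun i l' h => (h2 i l' h).2⟩, ⟨by simp, ?_⟩, ?_⟩
    · intro i l' h h'
      cases h
      exact absurd rfl (h2 i l h').1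
    · intro i
      refine ⟨?_, ?_⟩
      · intro l' h h'
        cases h'
        exact absurd rfl (h2 i l h).1
      · intro i' l' hi hi'
        rw [h3 i i' l' hi hi']

lemma comb_cons_none {E ι : Type*} {k : ℕ} (j : Fin k → Option ι) (x : ι → E) (y : E)
    (v : Fin k → E) :
    comb (Fin.cons none j : Fin (k + 1) → Option ι) x (Fin.cons y v : Fin (k + 1) → E)
      = Fin.cons y (comb j x v) := by
  funext i
  refine Fin.cases ?_ (fun i => ?_) i <;> simp [comb]

lemma comb_cons_some {E ι : Type*} {k : ℕ} (l : ι) (j : Fin k → Option ι) (x : ι → E) (y : E)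
    (v : Fin k → E) :
    comb (Fin.cons (some l) j : Fin (k + 1) → Option ι) x (Fin.cons y v : Fin (k + 1) → E)
      = Fin.cons (x l) (comb j x v) := by
  funext i
  refine Fin.cases ?_ (fun i => ?_) i <;> simp [comb]

lemma Emp_eq_Jr {E ι : Type*} [MeasurableSpace E] [Fintype ι] [DecidableEq ι] (P : Measure E)
    [IsProbabilityMeasure P] (c : ℝ) (x : ι → E) (k : ℕ) (S : Finset ι) {f : (Fin k → E) → ℝ}
    (hf : Nice f) : Emp P c x k S f = Jr P c x k S f := by
  classical
  induction k generalizing S with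
  | zero =>
    have hP : ∀ j : Fin 0 → Option ι, PInj S j := fun j => ⟨fun i => i.elim0, fun i => i.elim0⟩
    simp only [Emp, Jr, hP, if_true, integral_fin_zero]
    simp only [Finset.univ_unique, Finset.sum_singleton, Finset.univ_eq_empty, Finset.prod_empty,
      one_mul]
    congr 1
    exact Subsingleton.elim _ _
  | succ k ih =>
    rw [Jr, ← ih _ (hf.avg1 P)]
    have h1 : ∀ l, Jr P c x k (S.erase l) (slc (x l) f) = Emp P c x k (S.erase l) (slc (x l) f) :=
      fun l => (ih _ (hf.slc _)).symm
    simp_rw [h1]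
    rw [Emp, ← (Fin.consEquiv (fun _ : Fin (k + 1) => Option ι)).sum_comp, Fintype.sum_prod_type,
      Fintype.sum_option, add_comm]
    congr 1
    · rw [← Finset.sum_subset (Finset.subset_univ S)]
      · refine Finset.sum_congr rfl fun l hl => ?_
        rw [Emp]
        refine Finset.sum_congr rfl fun j _ => ?_
        simp only [Fin.consEquiv, Equiv.coe_fn_mk, PInj_cons_some, hl, true_and]
        split_ifs with hj
        · rw [Fin.prod_univ_succ]
          simp only [Fin.cons_zero, Fin.cons_succ]
          rw [integral_cons P (hf.comp (measurable_comb' _ x))]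
          simp only [slc, comb_cons_some]
          simp [wt]
        · rfl
      · intro l _ hl
        apply Finset.sum_eq_zero
        intro j _
        simp [Fin.consEquiv, PInj_cons_some, hl]
    · rw [Emp, Finset.mul_sum]
      refine Finset.sum_congr rfl fun j _ => ?_
      simp only [Fin.consEquiv, Equiv.coe_fn_mk, PInj_cons_none]
      split_ifs with hj
      · rw [Fin.prod_univ_succ]
        simp only [Fin.cons_zero, Fin.cons_succ]
        rw [integral_cons' P (hf.comp (measurable_comb' _ x))]
        simp only [avg1, comb_cons_none]
        simp only [wt, Option.elim]
        ring
      · simp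

lemma mp_comb {E ι : Type*} [MeasurableSpace E] [Fintype ι] (P : Measure E)
    [IsProbabilityMeasure P] {k : ℕ} (S : Finset ι) (j : Fin k → Option ι) (hj : PInj S j) :
    MeasurePreserving (fun p : (ι → E) × (Fin k → E) => comb j p.1 p.2)
      ((Measure.pi fun _ => P).prod (Measure.pi fun _ => P)) (Measure.pi fun _ => P) := by
  classical
  refine ⟨measurable_comb j, ?_⟩
  symm
  apply Measure.pi_eq
  intro s hs
  rw [Measure.map_apply (measurable_comb j) (MeasurableSet.univ_pi hs)]
  have : (fun p : (ι → E) × (Fin k → E) => comb j p.1 p.2) ⁻¹' (Set.univ.pi s)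
      = (Set.univ.pi fun l => ⋂ i, ⋂ (_ : j i = some l), s i) ×ˢ
        (Set.univ.pi fun i => if j i = none then s i else Set.univ) := by
    ext p
    simp only [Set.mem_preimage, Set.mem_univ_pi, Set.mem_prod, Set.mem_iInter, comb]
    constructor
    · intro h
      refine ⟨fun l i hi => by simpa [hi] using h i, fun i => ?_⟩
      split_ifs with hi
      · simpa [hi] using h i
      · trivial
    · rintro ⟨h1, h2⟩ i
      have := h2 i
      cases hi : j i with
      | none => simpa [hi] using this
      | some l => simpa using h1 l i hi
  rw [this, Measure.prod_prod, Measure.pi_pi, Measure.pi_pi]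
  have e1 : ∀ l, P (⋂ i, ⋂ (_ : j i = some l), s i)
      = ∏ i, if j i = some l then P (s i) else 1 := by
    intro l
    by_cases h : ∃ i, j i = some l
    · obtain ⟨i, hi⟩ := h
      have hu : ∀ i', j i' = some l ↔ i' = i :=
        fun i' => ⟨fun h => hj.2 _ _ l h hi, fun h => h ▸ hi⟩
      simp only [hu]
      simp
    · push Not at h
      simp [h]
  have e2 : ∀ i, P (if j i = none then s i else Set.univ) = if j i = none then P (s i) else 1 := by
    intro i; split_ifs <;> simp
  simp_rw [e1, e2]
  rw [Finset.prod_comm, ← Finset.prod_mul_distrib]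
  refine Finset.prod_congr rfl fun i _ => ?_
  cases hi : j i with
  | none => simp
  | some l => simp

lemma ae_comb {E ι : Type*} [MeasurableSpace E] [Fintype ι] (P : Measure E)
    [IsProbabilityMeasure P] {k : ℕ} (S : Finset ι) {Q : (Fin k → E) → Prop}
    (h : ∀ᵐ u ∂(Measure.pi fun _ => P), Q u) :
    ∀ᵐ x : ι → E ∂(Measure.pi fun _ => P), ∀ j : Fin k → Option ι, PInj S j →
      ∀ᵐ v ∂(Measure.pi fun _ => P), Q (comb j x v) := by
  rw [ae_all_iff]
  intro j
  by_cases hj : PInj S j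
  · have := (mp_comb P S j hj).quasiMeasurePreserving.ae h
    filter_upwards [Measure.ae_ae_of_ae_prod this] with x hx _
    exact hx
  · exact ae_of_all _ fun x h => absurd h hj

lemma integrable_comb {E ι : Type*} [MeasurableSpace E] [Fintype ι] (P : Measure E)
    [IsProbabilityMeasure P] {k : ℕ} (S : Finset ι) {f : (Fin k → E) → ℝ}
    (h : Integrable f (Measure.pi fun _ => P)) :
    ∀ᵐ x : ι → E ∂(Measure.pi fun _ => P), ∀ j : Fin k → Option ι, PInj S j →
      Integrable (fun v => f (comb j x v)) (Measure.pi fun _ => P) := by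
  rw [ae_all_iff]
  intro j
  by_cases hj : PInj S j
  · have := (mp_comb P S j hj).integrable_comp_of_integrable h
    filter_upwards [this.prod_right_ae] with x hx _
    exact hx
  · exact ae_of_all _ fun x h => absurd h hj

lemma sq_integral_le {α : Type*} [MeasurableSpace α] (ν : Measure α) [IsProbabilityMeasure ν]
    {f : α → ℝ} (hf : Integrable f ν) (hf2 : Integrable (fun a => f a * f a) ν) :
    (∫ a, f a ∂ν) ^ 2 ≤ ∫ a, f a * f a ∂ν := by
  set t := ∫ a, f a ∂ν with ht
  have h0 : 0 ≤ ∫ a, (f a - t) ^ 2 ∂ν := integral_nonneg fun _ => sq_nonneg _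
  have h1 : ∀ a, (f a - t) ^ 2 = f a * f a + (-2 * t) * f a + t ^ 2 := fun a => by ring
  simp_rw [h1] at h0
  have i12 : Integrable (fun a => f a * f a + (-2 * t) * f a) ν := hf2.add (hf.const_mul _)
  rw [integral_add i12 (integrable_const _),
    integral_add hf2 (hf.const_mul _), integral_const_mul, ← ht] at h0
  simp at h0
  nlinarith

lemma memLp_comb {E ι : Type*} [MeasurableSpace E] [Fintype ι] (P : Measure E)
    [IsProbabilityMeasure P] {k : ℕ} (S : Finset ι) (j : Fin k → Option ι) (hj : PInj S j)
    {f : (Fin k → E) → ℝ} (hm : Measurable f)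
    (h1 : Integrable f (Measure.pi fun _ => P))
    (h2 : Integrable (fun u => f u * f u) (Measure.pi fun _ => P)) :
    MemLp (fun x : ι → E => ∫ v, f (comb j x v) ∂(Measure.pi fun _ => P)) 2
      (Measure.pi fun _ => P) := by
  have hmeas : StronglyMeasurable
      (fun x : ι → E => ∫ v, f (comb j x v) ∂(Measure.pi fun _ => P)) :=
    ((hm.comp (measurable_comb j)).stronglyMeasurable).integral_prod_right'
  rw [memLp_two_iff_integrable_sq hmeas.aestronglyMeasurable]
  have hi := ((mp_comb P S j hj).integrable_comp_of_integrable h2).integral_prod_left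
  refine hi.mono' (hmeas.pow 2).aestronglyMeasurable ?_
  filter_upwards [integrable_comb P S h1, integrable_comb P S h2] with x hx1 hx2
  rw [Real.norm_eq_abs, abs_of_nonneg (sq_nonneg _)]
  exact sq_integral_le _ (hx1 j hj) (hx2 j hj)

/-- Truncation. -/
noncomputable def trunc {α : Type*} (N : ℕ) (f : α → ℝ) : α → ℝ := fun u => max (-(N : ℝ)) (min (f u) N)

lemma abs_trunc_le {α : Type*} (N : ℕ) (f : α → ℝ) (u : α) : |trunc N f u| ≤ |f u| := by
  have : (0 : ℝ) ≤ N := by positivity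
  simp only [trunc]
  rw [abs_le]
  constructor
  · refine le_trans ?_ (le_max_right _ _)
    rw [le_min_iff]
    exact ⟨neg_abs_le _, by linarith [abs_nonneg (f u)]⟩
  · rw [max_le_iff]
    exact ⟨by linarith [abs_nonneg (f u)], (min_le_left _ _).trans (le_abs_self _)⟩

lemma trunc_nice {α : Type*} [MeasurableSpace α] (N : ℕ) {f : α → ℝ} (hf : Measurable f) :
    Nice (trunc N f) := by
  refine ⟨measurable_const.max (hf.min measurable_const), N, fun u => ?_⟩
  have : (0 : ℝ) ≤ N := by positivity
  simp only [trunc]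
  rw [abs_le]
  exact ⟨le_max_left _ _, max_le (by linarith) (min_le_right _ _)⟩

lemma trunc_tendsto {α : Type*} (f : α → ℝ) (u : α) :
    Tendsto (fun N : ℕ => trunc N f u) atTop (𝓝 (f u)) := by
  apply tendsto_const_nhds.congr'
  obtain ⟨M, hM⟩ := exists_nat_ge |f u|
  filter_upwards [eventually_ge_atTop M] with N hN
  have : |f u| ≤ N := hM.trans (by exact_mod_cast hN)
  rw [abs_le] at this
  simp only [trunc]
  rw [min_eq_left this.2, max_eq_right this.1]

theorem Emp_main {E : Type*} [MeasurableSpace E] (P : Measure E)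
    [IsProbabilityMeasure P] (n k : ℕ) (hk : 1 ≤ k) (hkn : k ≤ n)
    {A : Set E} (hA : MeasurableSet A) (hpos : 0 < P.real A)
    {f : (Fin k → E) → ℝ} (hm : Measurable f) (sf : IsSym f) (hs : SuppIn A f)
    (h1 : Integrable f (Measure.pi fun _ => P))
    (h2 : Integrable (fun u => f u * f u) (Measure.pi fun _ => P)) :
    |(∫ x : Fin n → E, Emp P n x k Finset.univ f * Emp P n x k Finset.univ f ∂(Measure.pi fun _ => P))
      - n ^ k * k.factorial * ∫ u, f u * f u ∂(Measure.pi fun _ => P)|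
    ≤ (n ^ k * k.factorial * ∫ u, f u * f u ∂(Measure.pi fun _ => P)) *
      (128 ^ k * (k : ℝ) ^ (2 * k) * Real.sqrt (P.real A) + (k : ℝ) ^ 2 / n) := by
  classical
  have hmain : ∀ N : ℕ, _ := fun N => Jr_main P n k hk hkn hA hpos (trunc_nice N hm)
    (fun σ u => by simp only [trunc]; rw [sf]) (fun u hu => by simp [trunc, hs u hu])
  have hQ : Tendsto (fun N : ℕ => ∫ u, trunc N f u * trunc N f u ∂(Measure.pi fun _ => P)) atTop
      (𝓝 (∫ u, f u * f u ∂(Measure.pi fun _ => P))) := by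
    refine tendsto_integral_of_dominated_convergence (fun u => f u * f u) ?_ h2 ?_ ?_
    · intro N; exact ((trunc_nice N hm).mul (trunc_nice N hm)).1.aestronglyMeasurable
    · intro N
      refine ae_of_all _ fun u => ?_
      rw [Real.norm_eq_abs, abs_mul, ← abs_mul_abs_self (f u)]
      exact mul_le_mul (abs_trunc_le _ _ _) (abs_trunc_le _ _ _) (abs_nonneg _) (abs_nonneg _)
    · exact ae_of_all _ fun u => (trunc_tendsto f u).mul (trunc_tendsto f u)
  set D : (Fin n → E) → ℝ := fun x => ∑ j : Fin k → Option (Fin n),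
    if PInj Finset.univ j then
      |∏ i, wt (n : ℝ) (j i)| * ∫ v, |f (comb j x v)| ∂(Measure.pi fun _ => P) else 0 with hD
  have hDL : MemLp D 2 (Measure.pi fun _ => P) := by
    apply memLp_finsetSum
    intro j _
    by_cases hj : PInj Finset.univ j
    · simp only [hj, if_true]
      refine MemLp.const_mul (memLp_comb P Finset.univ j hj (f := fun u => |f u|) ?_ h1.abs ?_) _
      · exact hm.abs
      · simpa only [abs_mul_abs_self] using h2
    · simp only [hj, if_false]; exact MemLp.zero' 
  have hDi : Integrable (fun x => D x * D x) (Measure.pi fun _ => P) := by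
    have := hDL.integrable_sq
    simpa only [sq] using this
  have hae := integrable_comb (ι := Fin n) P Finset.univ h1
  have hbound : ∀ N : ℕ, ∀ᵐ x : Fin n → E ∂(Measure.pi fun _ => P),
      |Emp P n x k Finset.univ (trunc N f)| ≤ D x := by
    intro N
    filter_upwards [hae] with x hx
    refine (Finset.abs_sum_le_sum_abs _ _).trans (Finset.sum_le_sum fun j _ => ?_)
    split_ifs with hj
    · rw [abs_mul]
      gcongr
      refine (abs_integral_le_integral_abs).trans ?_
      refine integral_mono_of_nonneg (ae_of_all _ fun v => abs_nonneg _) (hx j hj).abs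
        (ae_of_all _ fun v => abs_trunc_le _ _ _)
    · simp
  have hE : Tendsto (fun N : ℕ => ∫ x : Fin n → E, Emp P n x k Finset.univ (trunc N f)
      * Emp P n x k Finset.univ (trunc N f) ∂(Measure.pi fun _ => P)) atTop
      (𝓝 (∫ x : Fin n → E, Emp P n x k Finset.univ f * Emp P n x k Finset.univ f
        ∂(Measure.pi fun _ => P))) := by
    refine tendsto_integral_of_dominated_convergence (fun x => D x * D x) ?_ hDi ?_ ?_
    · intro N
      simp_rw [Emp_eq_Jr P n _ k _ (trunc_nice N hm)]
      exact ((Nice.Jr1 P n k _ (trunc_nice N hm)).mul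
        (Nice.Jr1 P n k _ (trunc_nice N hm))).1.aestronglyMeasurable
    · intro N
      filter_upwards [hbound N] with x hx
      rw [Real.norm_eq_abs, abs_mul]
      exact mul_le_mul hx hx (abs_nonneg _) ((abs_nonneg _).trans hx)
    · filter_upwards [hae] with x hx
      have : Tendsto (fun N : ℕ => Emp P n x k Finset.univ (trunc N f)) atTop
          (𝓝 (Emp P n x k Finset.univ f)) := by
        apply tendsto_finsetSum
        intro j _
        split_ifs with hj
        · apply Tendsto.const_mul
          refine tendsto_integral_of_dominated_convergence (fun v => |f (comb j x v)|) ?_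
            (hx j hj).abs ?_ ?_
          · intro N
            exact ((trunc_nice N hm).comp (measurable_comb' j x)).1.aestronglyMeasurable
          · intro N; exact ae_of_all _ fun v => abs_trunc_le _ _ _
          · exact ae_of_all _ fun v => trunc_tendsto f _
        · exact tendsto_const_nhds
      exact this.mul this
  simp_rw [← Emp_eq_Jr P _ _ k _ (trunc_nice _ hm)] at hmain
  exact le_of_tendsto_of_tendsto ((hE.sub (hQ.const_mul _)).abs)
    ((hQ.const_mul _).mul_const _) (Eventually.of_forall hmain)

/-- Component weights. -/
def mw {ι : Type*} (n : ℕ) : Bool → Option ι → ℝ≥0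
  | true, some _ => 1
  | true, none => 0
  | false, some _ => 0
  | false, none => n

/-- Component measures. -/
noncomputable def mkap {E ι : Type*} [MeasurableSpace E] (P : Measure E) (x : ι → E) :
    Option ι → Measure E
  | none => P
  | some l => Measure.dirac (x l)

lemma mix_apply {E : Type*} [MeasurableSpace E] (P : Measure E) (n : ℕ) (x : Fin n → E)
    (b : Bool) (s : Set E) :
    mixMeasure P n x b s = ∑ o : Option (Fin n), (mw n b o : ℝ≥0∞) * mkap P x o s := by
  cases b <;> simp [mixMeasure, mw, mkap, Fintype.sum_option, ENNReal.smul_def]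

instance mix_fin {E : Type*} [MeasurableSpace E] (P : Measure E) [IsProbabilityMeasure P] (n : ℕ)
    (x : Fin n → E) (b : Bool) : IsFiniteMeasure (mixMeasure P n x b) := by
  cases b <;> (simp only [mixMeasure]; infer_instance)

lemma map_comb_pi {E ι : Type*} [MeasurableSpace E] (P : Measure E) [IsProbabilityMeasure P]
    {k : ℕ} (j : Fin k → Option ι) (x : ι → E) (s : Fin k → Set E)
    (hs : ∀ i, MeasurableSet (s i)) :
    Measure.map (comb j x) (Measure.pi fun _ => P) (Set.univ.pi s) = ∏ i, mkap P x (j i) (s i) := by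
  classical
  rw [Measure.map_apply (measurable_comb' j x) (MeasurableSet.univ_pi hs)]
  have : comb j x ⁻¹' (Set.univ.pi s)
      = Set.univ.pi (fun i => (j i).elim (s i) (fun l => {_y : E | x l ∈ s i})) := by
    ext v
    simp only [Set.mem_preimage, Set.mem_univ_pi, comb]
    refine forall_congr' fun i => ?_
    cases j i <;> simp
  rw [this, Measure.pi_pi]
  refine Finset.prod_congr rfl fun i _ => ?_
  cases j i with
  | none => simp [mkap]
  | some l =>
    simp only [mkap, Option.elim, Measure.dirac_apply' _ (hs i)]
    by_cases hx : x l ∈ s i <;> simp [hx]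

lemma pi_mix {E : Type*} [MeasurableSpace E] (P : Measure E) [IsProbabilityMeasure P] (n : ℕ)
    (x : Fin n → E) {k : ℕ} (ε : Fin k → Bool) :
    (Measure.pi fun i => mixMeasure P n x (ε i)) =
      ∑ j : Fin k → Option (Fin n), (∏ i, mw n (ε i) (j i)) •
        Measure.map (comb j x) (Measure.pi fun _ => P) := by
  classical
  refine Measure.pi_eq fun s hs => ?_
  simp only [mix_apply, Finset.prod_univ_sum, Measure.coe_finsetSum, Finset.sum_apply,
    Measure.smul_apply, map_comb_pi P _ x s hs, Fintype.piFinset_univ]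
  refine Finset.sum_congr rfl fun j _ => ?_
  rw [ENNReal.smul_def, smul_eq_mul, ENNReal.ofNNReal_finsetProd, Finset.prod_mul_distrib]

lemma sign_sum_mix {k n : ℕ} (j : Fin k → Option (Fin n)) :
    ∑ ε : Fin k → Bool, (-1 : ℝ) ^ (Finset.univ.filter fun i => ε i = false).card *
      (∏ i, (mw n (ε i) (j i) : ℝ)) = ∏ i, wt (n : ℝ) (j i) := by
  classical
  have h1 : ∀ ε : Fin k → Bool, (-1 : ℝ) ^ (Finset.univ.filter fun i => ε i = false).card *
      (∏ i, (mw n (ε i) (j i) : ℝ)) =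
      ∏ i, ((if ε i = false then (-1 : ℝ) else 1) * (mw n (ε i) (j i) : ℝ)) := by
    intro ε
    rw [Finset.prod_mul_distrib]
    congr 1
    rw [Finset.prod_ite]
    simp
  simp_rw [h1]
  have := Finset.prod_univ_sum (fun _ : Fin k => (Finset.univ : Finset Bool))
    (fun i b => (if b = false then (-1 : ℝ) else 1) * (mw n b (j i) : ℝ))
  rw [Fintype.piFinset_univ] at this
  rw [← this]
  refine Finset.prod_congr rfl fun i _ => ?_
  cases j i <;> simp [mw, wt]

lemma empInt_eq {E : Type*} [MeasurableSpace E] (P : Measure E) [IsProbabilityMeasure P] (n : ℕ)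
    (a : ℝ) (x : Fin n → E) (k : ℕ) (h h' : (Fin k → E) → ℝ) (T : Set (Fin k → E))
    (hinj : MeasurableSet {u : Fin k → E | Function.Injective u})
    (hT : MeasurableSet T) (hT' : ∀ u ∈ T, Function.Injective u ∧ h u = h' u)
    (hae : ∀ j : Fin k → Option (Fin n), PInj Finset.univ j →
      ∀ᵐ v ∂(Measure.pi fun _ => P), comb j x v ∈ T)
    (hm' : Measurable h')
    (hItg : ∀ j : Fin k → Option (Fin n), PInj Finset.univ j →
      Integrable (fun v => h' (comb j x v)) (Measure.pi fun _ => P)) :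
    empInt P n a x k h = (Real.sqrt a)⁻¹ ^ k * Emp P n x k Finset.univ h' := by
  classical
  set H : (Fin k → E) → ℝ := Set.indicator {u : Fin k → E | Function.Injective u} h with hH
  have hfacts : ∀ j : Fin k → Option (Fin n),
      Integrable H (Measure.map (comb j x) (Measure.pi fun _ => P)) ∧
      ∫ u, H u ∂(Measure.map (comb j x) (Measure.pi fun _ => P)) =
        if PInj Finset.univ j then ∫ v, h' (comb j x v) ∂(Measure.pi fun _ => P) else 0 := by
    intro j
    have hmc : Measurable (comb (E := E) j x) := measurable_comb' j x
    by_cases hj : PInj Finset.univ j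
    · have e1 : H =ᵐ[Measure.map (comb j x) (Measure.pi fun _ => P)] h' := by
        have : ∀ᵐ u ∂(Measure.map (comb j x) (Measure.pi fun _ => P)), u ∈ T :=
          (ae_map_iff hmc.aemeasurable hT).2 (hae j hj)
        filter_upwards [this] with u hu
        rw [hH, Set.indicator_of_mem (show u ∈ {u | Function.Injective u} from (hT' u hu).1)]
        exact (hT' u hu).2
      have e2 : Integrable h' (Measure.map (comb j x) (Measure.pi fun _ => P)) :=
        (integrable_map_measure hm'.aestronglyMeasurable hmc.aemeasurable).2 (hItg j hj)
      refine ⟨e2.congr e1.symm, ?_⟩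
      rw [if_pos hj, integral_congr_ae e1, integral_map hmc.aemeasurable hm'.aestronglyMeasurable]
    · have e1 : H =ᵐ[Measure.map (comb j x) (Measure.pi fun _ => P)] 0 := by
        have : ∀ᵐ u ∂(Measure.map (comb j x) (Measure.pi fun _ => P)),
            u ∈ {u : Fin k → E | Function.Injective u}ᶜ := by
          refine (ae_map_iff hmc.aemeasurable hinj.compl).2 (ae_of_all _ fun v hv => hj ?_)
          refine ⟨by simp, fun i i' l hi hi' => hv ?_⟩
          simp [comb, hi, hi']
        filter_upwards [this] with u hu
        rw [hH, Set.indicator_of_notMem hu]; rfl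
      refine ⟨(integrable_zero _ _ _).congr e1.symm, ?_⟩
      rw [if_neg hj, integral_congr_ae e1]; simp
  rw [empInt]
  congr 1
  have h1 : ∀ ε : Fin k → Bool, ∫ u in {u : Fin k → E | Function.Injective u}, h u
          ∂(Measure.pi fun i => mixMeasure P n x (ε i)) =
      ∑ j : Fin k → Option (Fin n), (∏ i, (mw n (ε i) (j i) : ℝ)) *
        if PInj Finset.univ j then ∫ v, h' (comb j x v) ∂(Measure.pi fun _ => P) else 0 := by
    intro ε
    rw [← integral_indicator hinj, pi_mix, integral_finsetSum_measure]
    · refine Finset.sum_congr rfl fun j _ => ?_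
      rw [integral_smul_nnreal_measure, (hfacts j).2, NNReal.smul_def, smul_eq_mul,
        NNReal.coe_prod]
    · intro j _
      exact (hfacts j).1.smul_measure_nnreal
  simp_rw [h1, Finset.mul_sum, ← mul_assoc]
  rw [Finset.sum_comm]
  simp_rw [← Finset.sum_mul, sign_sum_mix, Emp]
  refine Finset.sum_congr rfl fun j _ => ?_
  split_ifs <;> simp

lemma mp_perm {E : Type*} [MeasurableSpace E] (μ : Measure E) [SigmaFinite μ] {k : ℕ}
    (σ : Equiv.Perm (Fin k)) :
    MeasurePreserving (fun v : Fin k → E => v ∘ σ) (Measure.pi fun _ => μ)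
      (Measure.pi fun _ => μ) := by
  have hm : Measurable (fun v : Fin k → E => v ∘ σ) := by
    rw [measurable_pi_iff]; intro i; exact measurable_pi_apply _
  refine ⟨hm, ?_⟩
  symm
  refine Measure.pi_eq fun s hs => ?_
  rw [Measure.map_apply hm (MeasurableSet.univ_pi hs)]
  have : (fun v : Fin k → E => v ∘ σ) ⁻¹' (Set.univ.pi s)
      = Set.univ.pi (fun i => s (σ.symm i)) := by
    ext v
    simp only [Set.mem_preimage, Set.mem_univ_pi, Function.comp]
    constructor
    · intro h i; simpa using h (σ.symm i)
    · intro h i; simpa using h (σ i)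
  rw [this, Measure.pi_pi]
  exact Equiv.prod_comp σ.symm (fun i => μ (s i))

lemma comb_perm {E ι : Type*} {k : ℕ} (j : Fin k → Option ι) (x : ι → E) (v : Fin k → E)
    (σ : Equiv.Perm (Fin k)) : comb j x v ∘ σ = comb (j ∘ σ) x (v ∘ σ) := by
  funext i; simp [comb]

lemma PInj_perm {ι : Type*} {k : ℕ} (S : Finset ι) (j : Fin k → Option ι)
    (σ : Equiv.Perm (Fin k)) : PInj S (j ∘ σ) ↔ PInj S j := by
  constructor
  · rintro ⟨h1, h2⟩
    refine ⟨fun i l h => h1 (σ.symm i) l (by simpa using h), fun i i' l h h' => ?_⟩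
    have := h2 (σ.symm i) (σ.symm i') l (by simpa using h) (by simpa using h')
    simpa using this
  · rintro ⟨h1, h2⟩
    exact ⟨fun i l h => h1 (σ i) l h, fun i i' l h h' => σ.injective (h2 _ _ l h h')⟩

lemma Emp_symmetrize {E ι : Type*} [MeasurableSpace E] [Fintype ι] (P : Measure E)
    [IsProbabilityMeasure P] (c : ℝ) (x : ι → E) (k : ℕ) (S : Finset ι) (f : (Fin k → E) → ℝ)
    (hItg : ∀ j : Fin k → Option ι, PInj S j →
      Integrable (fun v => f (comb j x v)) (Measure.pi fun _ => P)) :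
    Emp P c x k S (symmetrize k f) = Emp P c x k S f := by
  classical
  have hI : ∀ (σ : Equiv.Perm (Fin k)) (j : Fin k → Option ι), PInj S j →
      Integrable (fun v => f (comb j x v ∘ σ)) (Measure.pi fun _ => P) := by
    intro σ j hj
    simp_rw [comb_perm]
    exact (mp_perm P σ).integrable_comp_of_integrable (hItg (j ∘ σ) ((PInj_perm S j σ).2 hj))
  have hE : ∀ (σ : Equiv.Perm (Fin k)) (j : Fin k → Option ι),
      ∫ v, f (comb j x v ∘ σ) ∂(Measure.pi fun _ => P) =
        ∫ v, f (comb (j ∘ σ) x v) ∂(Measure.pi fun _ => P) := by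
    intro σ j
    simp_rw [comb_perm]
    have hme : MeasurableEmbedding (fun v : Fin k → E => v ∘ σ) :=
      (MeasurableEquiv.arrowCongr' σ.symm (MeasurableEquiv.refl E)).measurableEmbedding
    exact (mp_perm P σ).integral_comp hme (fun v => f (comb (j ∘ σ) x v))
  have h1 : ∀ j : Fin k → Option ι, (if PInj S j then
      (∏ i, wt c (j i)) * ∫ v, symmetrize k f (comb j x v) ∂(Measure.pi fun _ => P) else 0) =
      (k.factorial : ℝ)⁻¹ * ∑ σ : Equiv.Perm (Fin k), (if PInj S (j ∘ σ) then
      (∏ i, wt c ((j ∘ σ) i)) * ∫ v, f (comb (j ∘ σ) x v) ∂(Measure.pi fun _ => P) else 0) := by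
    intro j
    simp_rw [PInj_perm]
    split_ifs with hj
    · simp only [symmetrize]
      rw [integral_const_mul, integral_finsetSum _ (fun σ _ => hI σ j hj), mul_left_comm,
        Finset.mul_sum]
      congr 1
      refine Finset.sum_congr rfl fun σ _ => ?_
      rw [hE]
      congr 1
      exact (Equiv.prod_comp σ (fun i => wt c (j i))).symm
    · simp
  rw [Emp, Finset.sum_congr rfl (fun j _ => h1 j), ← Finset.mul_sum, Finset.sum_comm]
  have h2 : ∀ σ : Equiv.Perm (Fin k), ∑ j : Fin k → Option ι, (if PInj S (j ∘ σ) then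
      (∏ i, wt c ((j ∘ σ) i)) * ∫ v, f (comb (j ∘ σ) x v) ∂(Measure.pi fun _ => P) else 0)
      = Emp P c x k S f := by
    intro σ
    exact Equiv.sum_comp (Equiv.arrowCongr σ.symm (Equiv.refl (Option ι)))
      (fun j => if PInj S j then
      (∏ i, wt c (j i)) * ∫ v, f (comb j x v) ∂(Measure.pi fun _ => P) else 0)
  rw [Finset.sum_congr rfl (fun σ _ => h2 σ)]
  simp [Fintype.card_perm]
  field_simp

lemma meas_inj {E : Type*} [MeasurableSpace E] (hdiag : MeasurableSet {p : E × E | p.1 = p.2})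
    (k : ℕ) : MeasurableSet {u : Fin k → E | Function.Injective u} := by
  have : {u : Fin k → E | Function.Injective u} =
      ⋂ i : Fin k, ⋂ i' : Fin k, ⋂ (_ : i ≠ i'), {u : Fin k → E | u i = u i'}ᶜ := by
    ext u
    simp only [Set.mem_ofPred_eq, Set.mem_iInter, Set.mem_compl_iff, Function.Injective]
    exact forall_congr' fun i => forall_congr' fun i' => not_imp_not.symm
  rw [this]
  refine MeasurableSet.iInter fun i => MeasurableSet.iInter fun i' => MeasurableSet.iInter
    fun _ => MeasurableSet.compl ?_
  exact ((measurable_pi_apply i).prodMk (measurable_pi_apply i') :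
    Measurable fun u : Fin k → E => (u i, u i')) hdiag

lemma ae_inj {E : Type*} [MeasurableSpace E] (hdiag : MeasurableSet {p : E × E | p.1 = p.2})
    (P : Measure E) [IsProbabilityMeasure P] (hP : ∀ y, P {y} = 0) (k : ℕ) :
    ∀ᵐ u : Fin k → E ∂(Measure.pi fun _ => P), Function.Injective u := by
  have hd : (P.prod P) {p : E × E | p.1 = p.2} = 0 := by
    rw [Measure.measure_prod_null hdiag]
    refine ae_of_all _ fun y => ?_
    refine measure_mono_null (t := {y}) ?_ (hP y)
    intro z hz
    simpa using (show y = z from hz).symm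
  have h1 : ∀ i i' : Fin k, i ≠ i' → ∀ᵐ u : Fin k → E ∂(Measure.pi fun _ => P), u i ≠ u i' := by
    intro i i' hii
    have hind : iIndepFun (fun (i : Fin k) (u : Fin k → E) => u i) (Measure.pi fun _ => P) := by
      simpa using iIndepFun_pi (μ := fun _ : Fin k => P) (X := fun _ y => y)
        (fun _ => aemeasurable_id)
    have h2 := (indepFun_iff_map_prod_eq_prod_map_map (measurable_pi_apply i).aemeasurable
      (measurable_pi_apply i').aemeasurable).1 (hind.indepFun hii)
    rw [(measurePreserving_eval (fun _ : Fin k => P) i).map_eq,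
      (measurePreserving_eval (fun _ : Fin k => P) i').map_eq] at h2
    rw [← h2, Measure.map_apply (by fun_prop) hdiag] at hd
    rw [ae_iff]
    simpa using hd
  have h2 : ∀ᵐ u : Fin k → E ∂(Measure.pi fun _ => P), ∀ i i' : Fin k, i ≠ i' → u i ≠ u i' := by
    simp only [ae_all_iff]
    exact h1
  filter_upwards [h2] with u hu i i' h
  by_contra hne
  exact hu i i' hne h

lemma pi_cond {E : Type*} [MeasurableSpace E] (μ : Measure E) [SigmaFinite μ] (P : Measure E)
    [IsProbabilityMeasure P] {A : Set E} (c : ℝ≥0)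
    (hP : ∀ B, MeasurableSet B → P B = c * μ (B ∩ A)) (k : ℕ) :
    (Measure.pi fun _ : Fin k => P) =
      c ^ k • (Measure.pi fun _ : Fin k => μ).restrict (Set.univ.pi fun _ => A) := by
  refine Measure.pi_eq fun s hs => ?_
  rw [Measure.smul_apply, Measure.restrict_apply (MeasurableSet.univ_pi hs), ← Set.pi_inter_distrib,
    Measure.pi_pi, Finset.prod_congr rfl (fun i _ => hP _ (hs i)), Finset.prod_mul_distrib,
    ENNReal.smul_def]
  simp

lemma meas_symmetrize {E : Type*} [MeasurableSpace E] {k : ℕ} {f : (Fin k → E) → ℝ}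
    (hf : Measurable f) : Measurable (symmetrize k f) := by
  unfold symmetrize
  refine Measurable.const_mul (Finset.measurable_sum _ fun σ _ => hf.comp ?_) _
  rw [measurable_pi_iff]; intro i; exact measurable_pi_apply _

lemma isSym_symmetrize {E : Type*} {k : ℕ} (f : (Fin k → E) → ℝ) : IsSym (symmetrize k f) := by
  intro τ u
  simp only [symmetrize]
  congr 1
  exact Equiv.sum_comp (Equiv.mulLeft τ) (fun σ => f (u ∘ σ))

lemma suppIn_symmetrize {E : Type*} {k : ℕ} {f : (Fin k → E) → ℝ} {A : Set E}
    (h : SuppIn A f) : SuppIn A (symmetrize k f) := by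
  rintro u ⟨i, hi⟩
  simp only [symmetrize]
  rw [Finset.sum_eq_zero, mul_zero]
  intro σ _
  exact h _ ⟨σ.symm i, by simpa using hi⟩

lemma ae_symmetrize {E : Type*} [MeasurableSpace E] (μ : Measure E) [SigmaFinite μ] {k : ℕ}
    {f g : (Fin k → E) → ℝ} (h : f =ᵐ[Measure.pi fun _ => μ] g) :
    symmetrize k f =ᵐ[Measure.pi fun _ => μ] symmetrize k g := by
  have : ∀ᵐ u ∂(Measure.pi fun _ : Fin k => μ), ∀ σ : Equiv.Perm (Fin k), f (u ∘ σ) = g (u ∘ σ) := by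
    rw [ae_all_iff]
    intro σ
    exact (mp_perm μ σ).quasiMeasurePreserving.ae h
  filter_upwards [this] with u hu
  simp only [symmetrize, hu]

lemma memLp_symmetrize {E : Type*} [MeasurableSpace E] (μ : Measure E) [SigmaFinite μ] {k : ℕ}
    {f : (Fin k → E) → ℝ} (h : MemLp f 2 (Measure.pi fun _ => μ)) :
    MemLp (symmetrize k f) 2 (Measure.pi fun _ => μ) := by
  have h1 : ∀ σ ∈ (Finset.univ : Finset (Equiv.Perm (Fin k))),
      MemLp (fun u : Fin k → E => f (u ∘ σ)) 2 (Measure.pi fun _ => μ) :=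
    fun σ _ => h.comp_measurePreserving (mp_perm μ σ)
  have h2 := memLp_finsetSum _ h1
  have h3 := h2.const_mul ((k.factorial : ℝ)⁻¹)
  exact h3

lemma key_bound {E Ω : Type*} [MeasurableSpace E] [MeasurableSpace Ω]
    (μ : Measure E) [SigmaFinite μ] [NullSingletonClass μ]
    {A A0 : Set E} (hA : MeasurableSet A) (hA0 : MeasurableSet A0) (hsub : A0 ⊆ A)
    (hpos : 0 < μ A0) (hfin : μ A < ∞) (P : Measure E) [IsProbabilityMeasure P]
    (hP : ∀ B : Set E, MeasurableSet B → P B = μ (B ∩ A) / μ A)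
    (Pr : Measure Ω) [IsProbabilityMeasure Pr] (n k : ℕ) (hk : 1 ≤ k) (hkn : k ≤ n)
    (X : Fin n → Ω → E) (hX : ∀ j, Measurable (X j)) (hlaw : ∀ j, Measure.map (X j) Pr = P)
    (hind : iIndepFun (m := fun _ : Fin n => ‹MeasurableSpace E›) X Pr)
    (hdiag : MeasurableSet {p : E × E | p.1 = p.2})
    (h : (Fin k → E) → ℝ) (hmem : MemLp h 2 (Measure.pi fun _ => μ))
    (hsupp : SuppIn A0 h) :
    |(∫ ω, empInt P n (n / (μ A).toReal) (fun j => X j ω) k h *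
        empInt P n (n / (μ A).toReal) (fun j => X j ω) k h ∂Pr) -
      (k.factorial : ℝ) *
        ((eLpNorm (symmetrize k h) 2 (Measure.pi fun _ : Fin k => μ)).toReal) ^ 2| ≤
    ((k.factorial : ℝ) *
        ((eLpNorm (symmetrize k h) 2 (Measure.pi fun _ : Fin k => μ)).toReal) ^ 2) *
      (128 ^ k * (k : ℝ) ^ (2 * k) * Real.sqrt ((μ A0).toReal / (μ A).toReal)
        + (k : ℝ) ^ 2 / n) := by
  classical
  have hApos : 0 < μ A := hpos.trans_le (measure_mono hsub)
  set m : ℝ := (μ A).toReal with hm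
  have hm0 : 0 < m := ENNReal.toReal_pos hApos.ne' hfin.ne
  have hn0 : (0 : ℝ) < n := by exact_mod_cast (by omega : 0 < n)
  set c : ℝ≥0 := ((μ A).toNNReal)⁻¹ with hc
  have hcE : (c : ℝ≥0∞) = (μ A)⁻¹ := by
    rw [hc, ENNReal.coe_inv, ENNReal.coe_toNNReal hfin.ne]
    exact (ENNReal.toNNReal_pos hApos.ne' hfin.ne).ne'
  have hcR : (c : ℝ) = m⁻¹ := by rw [hc, hm]; simp [ENNReal.toReal]
  have hP' : ∀ B, MeasurableSet B → P B = c * μ (B ∩ A) := by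
    intro B hB
    rw [hP B hB, hcE, ENNReal.div_eq_inv_mul]
  have hpi := pi_cond μ P c hP' k
  have hac : (Measure.pi fun _ : Fin k => P) ≪ (Measure.pi fun _ : Fin k => μ) := by
    rw [hpi]
    exact (Measure.AbsolutelyContinuous.smul_left Measure.AbsolutelyContinuous.rfl _).trans
      Measure.restrict_le_self.absolutelyContinuous
  set h' : (Fin k → E) → ℝ :=
    Set.indicator (Set.univ.pi fun _ => A0) (hmem.1.mk h) with hh'
  have hm' : Measurable h' :=
    (hmem.1.stronglyMeasurable_mk.measurable).indicator (MeasurableSet.univ_pi fun _ => hA0)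
  have hs' : SuppIn A0 h' := by
    rintro u ⟨i, hi⟩
    rw [hh', Set.indicator_of_notMem]
    intro hu
    exact hi (hu i (Set.mem_univ i))
  have hae : h =ᵐ[Measure.pi fun _ => μ] h' := by
    filter_upwards [hmem.1.ae_eq_mk] with u hu
    by_cases hu' : u ∈ Set.univ.pi fun _ : Fin k => A0
    · rw [hh', Set.indicator_of_mem hu', hu]
    · rw [hh', Set.indicator_of_notMem hu']
      refine hsupp u ?_
      simpa [Set.mem_univ_pi] using hu'
  have hmem' : MemLp h' 2 (Measure.pi fun _ => μ) := (memLp_congr_ae hae).1 hmem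
  have toP : ∀ {g : (Fin k → E) → ℝ}, MemLp g 2 (Measure.pi fun _ : Fin k => μ) →
      MemLp g 2 (Measure.pi fun _ : Fin k => P) := by
    intro g hg
    rw [hpi]
    exact (hg.restrict _).smul_measure (c := ((c ^ k : ℝ≥0) : ℝ≥0∞)) ENNReal.coe_ne_top
  set f := symmetrize k h' with hf
  have hfae : symmetrize k h =ᵐ[Measure.pi fun _ => μ] f := ae_symmetrize μ hae
  have hfmem : MemLp f 2 (Measure.pi fun _ => μ) := memLp_symmetrize μ hmem'
  have hfm : Measurable f := meas_symmetrize hm'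
  have hfs : SuppIn A0 f := suppIn_symmetrize hs'
  have hfP := toP hfmem
  have hf1 : Integrable f (Measure.pi fun _ => P) := hfP.integrable (by norm_num)
  have hf2 : Integrable (fun u => f u * f u) (Measure.pi fun _ => P) := hfP.integrable_mul hfP
  have hh1 : Integrable h' (Measure.pi fun _ => P) := (toP hmem').integrable (by norm_num)
  have hPs : ∀ y, P {y} = 0 := by
    intro y
    have hy : MeasurableSet ({y} : Set E) := by
      have : ({y} : Set E) = (fun z => (z, y)) ⁻¹' {p : E × E | p.1 = p.2} := by
        ext z; simp
      rw [this]
      exact (by fun_prop : Measurable fun z : E => (z, y)) hdiag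
    rw [hP' _ hy, measure_mono_null Set.inter_subset_left (measure_singleton y), mul_zero]
  have hgood : ∀ᵐ u ∂(Measure.pi fun _ : Fin k => P), Function.Injective u ∧ h u = h' u :=
    (ae_inj hdiag P hPs k).and (hac.ae_le hae)
  obtain ⟨T, hTsub, hTm, hTnull⟩ := exists_measurable_superset_of_null (ae_iff.1 hgood)
  have hTc : ∀ u ∈ Tᶜ, Function.Injective u ∧ h u = h' u := by
    intro u hu
    by_contra hcon
    exact hu (hTsub hcon)
  have hTae : ∀ᵐ u ∂(Measure.pi fun _ : Fin k => P), u ∈ Tᶜ := by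
    rw [ae_iff]; simpa using hTnull
  have hemp : ∀ᵐ x : Fin n → E ∂(Measure.pi fun _ => P),
      empInt P n (n / m) x k h = (Real.sqrt (n / m))⁻¹ ^ k * Emp P n x k Finset.univ f := by
    filter_upwards [ae_comb P Finset.univ hTae, integrable_comb P Finset.univ hh1] with x hx1 hx2
    rw [empInt_eq P n (n / m) x k h h' Tᶜ (meas_inj hdiag k) hTm.compl hTc hx1 hm' hx2, hf,
      Emp_symmetrize P n x k Finset.univ h' hx2]
  have hXm : Measurable (fun ω j => X j ω) := measurable_pi_iff.2 hX
  have hjoint : Measure.map (fun ω j => X j ω) Pr = Measure.pi fun _ : Fin n => P := by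
    rw [(iIndepFun_iff_map_fun_eq_pi_map (fun j => (hX j).aemeasurable)).1 hind]
    simp [hlaw]
  have hEmpm : StronglyMeasurable (fun x : Fin n → E => Emp P n x k Finset.univ f) := by
    unfold Emp
    refine Finset.stronglyMeasurable_fun_sum _ fun j _ => ?_
    split_ifs
    · exact StronglyMeasurable.const_mul
        ((hfm.comp (measurable_comb j)).stronglyMeasurable.integral_prod_right') _
    · exact stronglyMeasurable_const
  have hEE : StronglyMeasurable (fun x : Fin n → E =>
      Emp P n x k Finset.univ f * Emp P n x k Finset.univ f) := hEmpm.mul hEmpm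
  have hsq : ((Real.sqrt (n / m))⁻¹ ^ k) * ((Real.sqrt (n / m))⁻¹ ^ k) = (m / n) ^ k := by
    rw [← mul_pow, ← mul_inv, Real.mul_self_sqrt (by positivity), inv_div]
  have hItg1 : ∫ ω, empInt P n (n / m) (fun j => X j ω) k h *
        empInt P n (n / m) (fun j => X j ω) k h ∂Pr =
      (m / n) ^ k * ∫ x : Fin n → E, Emp P n x k Finset.univ f * Emp P n x k Finset.univ f
        ∂(Measure.pi fun _ => P) := by
    rw [← hjoint, integral_map hXm.aemeasurable hEE.aestronglyMeasurable,
      ← integral_const_mul]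
    refine integral_congr_ae ?_
    rw [← hjoint] at hemp
    filter_upwards [ae_of_ae_map hXm.aemeasurable hemp] with ω hω
    rw [hω, ← hsq]
    ring
  have hItg2 : ∫ u, f u * f u ∂(Measure.pi fun _ : Fin k => P) =
      (m⁻¹) ^ k * ((eLpNorm (symmetrize k h) 2 (Measure.pi fun _ : Fin k => μ)).toReal) ^ 2 := by
    rw [eLpNorm_congr_ae hfae, hpi, integral_smul_nnreal_measure, NNReal.smul_def, smul_eq_mul]
    push_cast
    rw [hcR]
    congr 1
    rw [setIntegral_eq_integral_of_forall_compl_eq_zero]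
    · have := hfmem.eLpNorm_eq_integral_rpow_norm (by norm_num) (by norm_num)
      rw [this, ENNReal.toReal_ofReal (by positivity)]
      simp only [ENNReal.toReal_ofNat, Real.rpow_ofNat, Real.norm_eq_abs, sq_abs]
      rw [← Real.rpow_natCast, ← Real.rpow_mul (integral_nonneg fun _ => sq_nonneg _)]
      norm_num
      simp_rw [pow_two]
    · intro u hu
      rw [hfs u, zero_mul]
      by_contra hcon
      push Not at hcon
      exact hu fun i _ => hsub (hcon i)
  have hPA : P.real A0 = (μ A0).toReal / m := by
    rw [Measure.real, hP A0 hA0, Set.inter_eq_left.2 hsub, ENNReal.toReal_div]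
  have hPApos : 0 < P.real A0 := by
    rw [hPA]
    exact div_pos (ENNReal.toReal_pos hpos.ne' ((measure_mono hsub).trans_lt hfin).ne) hm0
  have main := Emp_main P n k hk hkn hA0 hPApos hfm (isSym_symmetrize h') hfs hf1 hf2
  rw [hPA, hItg2] at main
  rw [hItg1]
  set I := ∫ x : Fin n → E, Emp P n x k Finset.univ f * Emp P n x k Finset.univ f
        ∂(Measure.pi fun _ => P)
  set N := ((eLpNorm (symmetrize k h) 2 (Measure.pi fun _ : Fin k => μ)).toReal) ^ 2
  have hcan : (m / n) ^ k * ((n : ℝ) ^ k * k.factorial * (m⁻¹ ^ k * N)) = k.factorial * N := by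
    rw [div_pow, inv_pow]
    field_simp
  have hmul := mul_le_mul_of_nonneg_left main (by positivity : (0 : ℝ) ≤ (m / n) ^ k)
  rw [← abs_of_nonneg (by positivity : (0 : ℝ) ≤ (m / n) ^ k), ← abs_mul, mul_sub,
    abs_of_nonneg (by positivity : (0 : ℝ) ≤ (m / n) ^ k), hcan, ← mul_assoc, hcan] at hmul
  exact hmul

/-- In the Example setup, for `h = (h^{(k)})_k ∈ H` with all `h^{(k)}`
(for `k ≥ 1`) supported in `E_{n₀}^k`, the diagonal second moments
`γ_n(k,k) = 𝔼[(I_k^{(n)}(h^{(k)}))²]` satisfy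
`sup_{1 ≤ k ≤ K} |γ_n(k,k) − k! ‖h̃^{(k)}‖²_{L²(μ^k)}| ≤
C^K K^{2K} (a_n/n)^{1/2} + C^K K^{(3/2)K} n^{-1/2}` for every `K ≥ 1` and
`n ≥ max(n₀, K)`. -/
theorem gamma_diag_bound
    {E Ω : Type*} [MeasurableSpace E] [MeasurableSpace Ω]
    (μ : Measure E) [SigmaFinite μ] [NullSingletonClass μ] (hμ : μ Set.univ = ∞)
    (Eset : ℕ → Set E) (hEmeas : ∀ n, MeasurableSet (Eset n))
    (hEmono : ∀ n : ℕ, 1 ≤ n → Eset n ⊆ Eset (n + 1))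
    (hEpos : ∀ n : ℕ, 1 ≤ n → 0 < μ (Eset n))
    (hEfin : ∀ n : ℕ, 1 ≤ n → μ (Eset n) < ∞)
    (hEcover : (⋃ n : ℕ, ⋃ (_ : 1 ≤ n), Eset n) = Set.univ)
    (hEsmall : Tendsto (fun n : ℕ => (μ (Eset n)).toReal / n) atTop (𝓝 0))
    (a : ℕ → ℝ) (ha : ∀ n : ℕ, 1 ≤ n → a n = (n : ℝ) / (μ (Eset n)).toReal)
    (P : ℕ → Measure E) [∀ n, IsProbabilityMeasure (P n)]
    (hP : ∀ n : ℕ, 1 ≤ n → ∀ B : Set E, MeasurableSet B →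
      P n B = μ (B ∩ Eset n) / μ (Eset n))
    (Pr : Measure Ω) [IsProbabilityMeasure Pr]
    (X : (n : ℕ) → Fin n → Ω → E)
    (hXmeas : ∀ n j, Measurable (X n j))
    (hXlaw : ∀ n : ℕ, 1 ≤ n → ∀ j, Measure.map (X n j) Pr = P n)
    (hXindep : ∀ n : ℕ, iIndepFun (m := fun _ : Fin n => ‹MeasurableSpace E›) (X n) Pr)
    (hdiag : MeasurableSet {p : E × E | p.1 = p.2})
    (h : (k : ℕ) → (Fin k → E) → ℝ)
    (hmem : ∀ k : ℕ, MemLp (h k) 2 (Measure.pi fun _ : Fin k => μ))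
    (hH : Summable (fun k : ℕ => (k.factorial : ℝ) *
      ((eLpNorm (symmetrize k (h k)) 2 (Measure.pi fun _ : Fin k => μ)).toReal) ^ 2))
    (n0 : ℕ) (hn0 : 1 ≤ n0)
    (hsupp : ∀ k : ℕ, 1 ≤ k → ∀ u : Fin k → E, (∃ i, u i ∉ Eset n0) → h k u = 0) :
    ∃ C : ℝ, 0 < C ∧ ∀ K n k : ℕ, 1 ≤ K → n0 ≤ n → K ≤ n →
      1 ≤ k → k ≤ K →
      |(∫ ω, empInt (P n) n (a n) (fun j => X n j ω) k (h k) *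
          empInt (P n) n (a n) (fun j => X n j ω) k (h k) ∂Pr) -
        (k.factorial : ℝ) *
          ((eLpNorm (symmetrize k (h k)) 2 (Measure.pi fun _ : Fin k => μ)).toReal) ^ 2| ≤
        C ^ K * (K : ℝ) ^ (2 * K) * Real.sqrt (a n / n) +
          C ^ K * Real.sqrt K ^ (3 * K) * (Real.sqrt n)⁻¹ := by
  have hmono : ∀ n, n0 ≤ n → Eset n0 ⊆ Eset n := by
    intro n hn
    induction n, hn using Nat.le_induction with
    | base => exact subset_rfl
    | succ n hn ih => exact ih.trans (hEmono n (hn0.trans hn))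
  set S : ℕ → ℝ := fun k => (k.factorial : ℝ) *
      ((eLpNorm (symmetrize k (h k)) 2 (Measure.pi fun _ : Fin k => μ)).toReal) ^ 2 with hS
  have hS0 : ∀ k, 0 ≤ S k := fun k => by simp only [hS]; positivity
  set M : ℝ := ∑' k, S k with hM
  have hSM : ∀ k, S k ≤ M := fun k => hH.le_tsum k (fun i _ => hS0 i)
  have hM0 : 0 ≤ M := (hS0 0).trans (hSM 0)
  set m0 : ℝ := (μ (Eset n0)).toReal with hm0
  have hm00 : 0 ≤ m0 := ENNReal.toReal_nonneg
  set D : ℝ := 1 + M + M * Real.sqrt m0 with hD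
  have hMs : 0 ≤ M * Real.sqrt m0 := by positivity
  have hD1 : 1 ≤ D := by rw [hD]; linarith
  refine ⟨128 * D, by positivity, ?_⟩
  intro K n k hK hn hKn hk hkK
  have hn1 : 1 ≤ n := hn0.trans hn
  have hkey := key_bound μ (hEmeas n) (hEmeas n0) (hmono n hn) (hEpos n0 hn0) (hEfin n hn1) (P n)
    (hP n hn1) Pr n k hk (hkK.trans hKn) (X n) (hXmeas n) (hXlaw n hn1) (hXindep n) hdiag (h k)
    (hmem k) (hsupp k hk)
  rw [ha n hn1]
  refine hkey.trans ?_
  have hnpos : (0 : ℝ) < n := by exact_mod_cast hn1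
  have hn1' : (1 : ℝ) ≤ n := by exact_mod_cast hn1
  have hK1 : (1 : ℝ) ≤ K := by exact_mod_cast hK
  have hkK' : (k : ℝ) ≤ K := by exact_mod_cast hkK
  have hk1 : (1 : ℝ) ≤ k := by exact_mod_cast hk
  have e1 : (n : ℝ) / (μ (Eset n)).toReal / n = ((μ (Eset n)).toReal)⁻¹ := by
    field_simp
  have e2 : Real.sqrt (m0 / (μ (Eset n)).toReal)
      = Real.sqrt m0 * Real.sqrt (((μ (Eset n)).toReal)⁻¹) := by
    rw [div_eq_mul_inv, Real.sqrt_mul hm00]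
  rw [e1, e2]
  set r := Real.sqrt (((μ (Eset n)).toReal)⁻¹)
  have hr0 : 0 ≤ r := Real.sqrt_nonneg _
  have hDk : D ≤ D ^ K := le_self_pow₀ hD1 (by omega)
  have h128 : (128 : ℝ) ^ k ≤ 128 ^ K := pow_le_pow_right₀ (by norm_num) hkK
  have hkk : (k : ℝ) ^ (2 * k) ≤ (K : ℝ) ^ (2 * K) :=
    (pow_le_pow_left₀ (by positivity) hkK' _).trans (pow_le_pow_right₀ hK1 (by omega))
  have hSk := hSM k
  have t1 : S k * (128 ^ k * (k : ℝ) ^ (2 * k) * (Real.sqrt m0 * r)) ≤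
      (128 * D) ^ K * (K : ℝ) ^ (2 * K) * r := by
    calc S k * (128 ^ k * (k : ℝ) ^ (2 * k) * (Real.sqrt m0 * r))
        ≤ M * (128 ^ K * (K : ℝ) ^ (2 * K) * (Real.sqrt m0 * r)) := by
          gcongr
      _ = 128 ^ K * (M * Real.sqrt m0) * (K : ℝ) ^ (2 * K) * r := by ring
      _ ≤ 128 ^ K * D ^ K * (K : ℝ) ^ (2 * K) * r := by
          gcongr
          refine le_trans ?_ hDk
          rw [hD]; linarith
      _ = (128 * D) ^ K * (K : ℝ) ^ (2 * K) * r := by rw [mul_pow]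
  have hk2 : (k : ℝ) ^ 2 ≤ 128 ^ K := by
    have h2 : (k : ℝ) ≤ 2 ^ k := by exact_mod_cast Nat.lt_two_pow_self.le
    calc (k : ℝ) ^ 2 ≤ (2 ^ k) ^ 2 := by gcongr
      _ = 4 ^ k := by rw [← pow_mul, mul_comm, pow_mul]; norm_num
      _ ≤ 128 ^ k := by gcongr; norm_num
      _ ≤ 128 ^ K := h128
  have hsn : (n : ℝ)⁻¹ ≤ (Real.sqrt n)⁻¹ := by
    refine inv_anti₀ (Real.sqrt_pos.2 hnpos) ?_
    rw [Real.sqrt_le_left hnpos.le]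
    nlinarith
  have hsK : 1 ≤ Real.sqrt K ^ (3 * K) := one_le_pow₀ (Real.one_le_sqrt.2 hK1)
  have t2 : S k * ((k : ℝ) ^ 2 / n) ≤
      (128 * D) ^ K * Real.sqrt K ^ (3 * K) * (Real.sqrt n)⁻¹ := by
    calc S k * ((k : ℝ) ^ 2 / n) ≤ M * (128 ^ K * (Real.sqrt n)⁻¹) := by
          rw [div_eq_mul_inv]; gcongr
      _ = (128 ^ K * M) * 1 * (Real.sqrt n)⁻¹ := by ring
      _ ≤ (128 ^ K * D ^ K) * Real.sqrt K ^ (3 * K) * (Real.sqrt n)⁻¹ := by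
          gcongr
          refine le_trans ?_ hDk
          rw [hD]; linarith
      _ = (128 * D) ^ K * Real.sqrt K ^ (3 * K) * (Real.sqrt n)⁻¹ := by rw [mul_pow]
  calc S k * (128 ^ k * (k : ℝ) ^ (2 * k) * (Real.sqrt m0 * r) + (k : ℝ) ^ 2 / n)
      = S k * (128 ^ k * (k : ℝ) ^ (2 * k) * (Real.sqrt m0 * r)) + S k * ((k : ℝ) ^ 2 / n) := by
        ring
    _ ≤ _ := add_le_add t1 t2
end
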